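/- arXiv:1604.00460 — 3 statements merged into one kernel-verified Lean document; each statement's English description precedes it below -/
import Mathlib

section
/- Consider a scaling of the heterogeneous key predistribution model with on/off channels such that λ_1(n) = o(1) and α_n K_{1,n} K_avg,n / P_n ~ c (log n)/n for some c > 0, where K_avg,n = Σ_{j=1}^r μ_j K_{j,n}. Then: if c < 1 the probability that G(n; μ, K_n, P_n, α_n) has no isolated nodes tends to 0, and if c > 1 it tends to 1. If in addition P_n ≥ σ n for all n for some σ > 0 and p_11(n) = ω(1/(n α_n)), then the same zero-one law holds for the probability that G(n; μ, K_n, P_n, α_n) is connected. -/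
/-!
Write `m = α K₁ K_avg / P ~ c log n / n`. As `λ₁ → 0`, a node of the smallest class is joined to a
random node with probability `α λ₁ ~ m`, so it is isolated with probability about `n ^ (-c)`.

**Isolated nodes.** For `c > 1` the union bound suffices, because larger rings only help
(`Scaling.one_law_isolated`). For `c < 1` the second moment method is applied to the number of
isolated nodes of the smallest class (`second_moment`, `Scaling.zero_law_isolated`). Two nodes with
disjoint rings are nearly independent; the rings meet with probability `p₁₁`, and that
contribution is at most about `p₁₁ exp (α d log n) ≤ p₁₁ + α p₁₁ n ^ d` with `c < d < 1` by
convexity, which vanishes since `α p₁₁ ≤ m`.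

**Connectivity.** The zero-law follows from the one for isolated nodes. For the one-law, a
disconnected graph has a set `S` of `ℓ ≤ n / 2` nodes that no edge leaves. Given the rings in `S`,
the other nodes miss `S` independently, each with probability `qmiss` (`cut_formula`); this is
antitone in the rings, so all rings in `S` may be taken of the smallest size (`pr_noCross_le`).

If no key lies in too many of the rings of `S`, a second-moment bound for the number of keys that
an outside node shares with `S` over open channels (`avg_prod_miss_le`) shows that
`qmiss` is at most about `1 - ∑ μ_j m_j / (1 + m_j)`, with `m_j = ℓ α K₁ K_j / P`. In general the
rings are trimmed so that no key is overloaded (`exists_trim`), and a Chernoff bound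
(`bad_bound`) shows that more than a proportion `δ` of the ring entries is lost only with
probability at most `(exp (-K₁) ℓ K₁ / P) ^ ℓ`. Summed against the binomial coefficients this
vanishes, since `P ≥ σ n`, and since `K₁ → ∞` (`Scaling.K_tendsto`).

The remaining sum of `(n choose ℓ) qmiss ^ (n - ℓ)` is treated in three ranges
(`Scaling.one_law_connected`). While all `m_j` are small, `qmiss ≤ exp (-ρ ℓ m)` with `ρ` close to
`1`, and the summand is at most `n ^ (-γ ℓ)` for some `γ > 0`, because `c > 1`. For larger
`ℓ ≤ η n`, `qmiss` stays below a constant less than `1`, which beats the entropy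
of the choice of `S` when `η` is small. For `ℓ ≥ η n`, the assumption `n α p₁₁ → ∞` makes every
`m_j` large, so that `qmiss ≤ 1/16`, which beats `2 ^ n`.
-/

open Filter

/-- Probability that a uniformly random `b`-subset of a `P`-set avoids a fixed `a`-subset. -/
noncomputable def avoidProb (P a b : ℕ) : ℝ := ((P - a).choose b : ℝ) / (P.choose b : ℝ)

/-- `p_{ab}` : probability that independent uniformly random key rings of sizes
`a` and `b` (from a pool of size `P`) intersect. -/
noncomputable def pEdge (P a b : ℕ) : ℝ := 1 - avoidProb P a b

/-- `λ_i` : mean edge probability of a class-`i` node in the inhomogeneous random key graph. -/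
noncomputable def lamb {r : ℕ} (μ : Fin (r + 1) → ℝ) (K : Fin (r + 1) → ℕ) (P : ℕ)
    (i : Fin (r + 1)) : ℝ :=
  ∑ j, μ j * pEdge P (K i) (K j)

/-- A configuration of the model: a class for each vertex, a key ring for each vertex,
and an on/off state for each (unordered) channel. -/
abbrev Config (n r P : ℕ) := (Fin n → Fin (r + 1)) × (Fin n → Finset (Fin P)) × (Sym2 (Fin n) → Bool)

/-- Probability weight of a configuration: classes are i.i.d. with law `μ`; given its class `i`,
a vertex's key ring is uniform among the `C(P, K i)` subsets of size `K i`; channels over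
distinct pairs are i.i.d. Bernoulli(`α`) (diagonal channel variables are forced to `false`). -/
noncomputable def wt {n r P : ℕ} (μ : Fin (r + 1) → ℝ) (K : Fin (r + 1) → ℕ) (α : ℝ)
    (c : Config n r P) : ℝ :=
  (∏ x : Fin n, μ (c.1 x)) *
    (∏ x : Fin n, if (c.2.1 x).card = K (c.1 x) then ((P.choose (K (c.1 x)) : ℝ))⁻¹ else 0) *
    (∏ e : Sym2 (Fin n),
      if e.IsDiag then (if c.2.2 e then 0 else 1) else (if c.2.2 e then α else 1 - α))

open Classical in
/-- Probability of an event under the heterogeneous key predistribution model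
with on/off channels. -/
noncomputable def pr {n r P : ℕ} (μ : Fin (r + 1) → ℝ) (K : Fin (r + 1) → ℕ) (α : ℝ)
    (E : Config n r P → Prop) : ℝ :=
  ∑ c : Config n r P, if E c then wt μ K α c else 0

/-- Two vertices are adjacent iff their key rings intersect and the channel between them is on. -/
def Adj {n r P : ℕ} (c : Config n r P) (x y : Fin n) : Prop :=
  x ≠ y ∧ ((c.2.1 x) ∩ (c.2.1 y)).Nonempty ∧ c.2.2 s(x, y) = true

/-- The random graph `G(n; μ, K, P, α)` as a simple graph. -/
def graphOf {n r P : ℕ} (c : Config n r P) : SimpleGraph (Fin n) :=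
  SimpleGraph.fromRel (fun x y => ((c.2.1 x) ∩ (c.2.1 y)).Nonempty ∧ c.2.2 s(x, y) = true)

/-- A vertex is isolated if it has no neighbours. -/
def Isolated {n r P : ℕ} (c : Config n r P) (x : Fin n) : Prop := ∀ y, ¬ Adj c x y

/-- The graph has no isolated nodes. -/
def NoIsolatedNodes {n r P : ℕ} (c : Config n r P) : Prop := ∀ x, ¬ Isolated c x

/-! ### Averages over uniform key rings -/

/-- The average of `f` over all `k`-element subsets of the key pool, i.e. its expectation at a
uniformly random key ring of size `k` (the junk value `0` when `P < k`). -/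
noncomputable def avg {P : ℕ} (k : ℕ) (f : Finset (Fin P) → ℝ) : ℝ :=
  (∑ T ∈ Finset.powersetCard k Finset.univ, f T) / (P.choose k : ℝ)

theorem avg_mono {P k : ℕ} {f g : Finset (Fin P) → ℝ} (h : ∀ T, T.card = k → f T ≤ g T) :
    avg k f ≤ avg k g := by
  unfold avg
  gcongr with T hT
  exact h T (Finset.mem_powersetCard.1 hT).2

theorem avg_const {P k : ℕ} (hk : k ≤ P) (c : ℝ) : avg k (fun _ : Finset (Fin P) => c) = c := by
  unfold avg
  have : (P.choose k : ℝ) ≠ 0 := by exact_mod_cast (Nat.choose_pos hk).ne'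
  simp [Finset.card_powersetCard]
  field_simp

theorem avg_add {P k : ℕ} (f g : Finset (Fin P) → ℝ) :
    avg k (fun T => f T + g T) = avg k f + avg k g := by
  unfold avg
  rw [Finset.sum_add_distrib, add_div]

theorem avg_mul_left {P k : ℕ} (c : ℝ) (f : Finset (Fin P) → ℝ) :
    avg k (fun T => c * f T) = c * avg k f := by
  unfold avg
  rw [← Finset.mul_sum, mul_div_assoc]

theorem avg_sum {P k : ℕ} {ι : Type*} (s : Finset ι) (f : ι → Finset (Fin P) → ℝ) :
    avg k (fun T => ∑ i ∈ s, f i T) = ∑ i ∈ s, avg k (f i) := by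
  unfold avg
  rw [Finset.sum_comm, Finset.sum_div]

theorem avg_nonneg {P k : ℕ} {f : Finset (Fin P) → ℝ} (h : ∀ T, T.card = k → 0 ≤ f T) :
    0 ≤ avg k f := by
  unfold avg
  apply div_nonneg
  · exact Finset.sum_nonneg fun T hT => h T (Finset.mem_powersetCard.1 hT).2
  · positivity

theorem card_supersets {P k : ℕ} (B : Finset (Fin P)) (hB : B.card ≤ k) :
    ((Finset.powersetCard k (Finset.univ : Finset (Fin P))).filter (fun T => B ⊆ T)).card
      = (P - B.card).choose (k - B.card) := by
  have h1 : (P - B.card).choose (k - B.card)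
      = (Finset.powersetCard (k - B.card) Bᶜ).card := by
    rw [Finset.card_powersetCard, Finset.card_compl, Fintype.card_fin]
  rw [h1]
  refine Finset.card_bij' (fun T _ => T \ B) (fun T _ => T ∪ B) ?_ ?_ ?_ ?_
  · intro T hT
    simp only [Finset.mem_filter, Finset.mem_powersetCard] at hT ⊢
    refine ⟨?_, ?_⟩
    · intro a ha
      simp at ha ⊢
      exact ha.2
    · rw [Finset.card_sdiff_of_subset hT.2, hT.1.2]
  · intro T hT
    simp only [Finset.mem_filter, Finset.mem_powersetCard] at hT ⊢
    have hd : Disjoint T B := by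
      rw [Finset.disjoint_left]
      intro a ha hb
      have := hT.1 ha
      simp at this
      exact this hb
    refine ⟨⟨Finset.subset_univ _, ?_⟩, Finset.subset_union_right⟩
    rw [Finset.card_union_of_disjoint hd, hT.2]; omega
  · intro T hT
    simp only [Finset.mem_filter, Finset.mem_powersetCard] at hT
    exact Finset.sdiff_union_of_subset hT.2
  · intro T hT
    simp only [Finset.mem_powersetCard] at hT
    have hd : Disjoint T B := by
      rw [Finset.disjoint_left]
      intro a ha hb
      have := hT.1 ha
      simp at this
      exact this hb
    exact Finset.union_sdiff_cancel_right hd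

theorem choose_ratio {P k : ℕ} (hk : k ≤ P) (hP : 0 < P) (b : ℕ) (hb : b ≤ k) :
    ((P - b).choose (k - b) : ℝ) ≤ ((k : ℝ) / P) ^ b * P.choose k := by
  induction b with
  | zero => simp
  | succ b ih =>
    have h := ih (by omega)
    have hid : ((P - b : ℕ) : ℝ) * ((P - (b+1)).choose (k - (b+1)) : ℝ)
        = ((P - b).choose (k - b) : ℝ) * ((k - b : ℕ) : ℝ) := by
      have := Nat.add_one_mul_choose_eq (P - (b+1)) (k - (b+1))
      have e1 : P - (b+1) + 1 = P - b := by omega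
      have e2 : k - (b+1) + 1 = k - b := by omega
      rw [e1, e2] at this
      exact_mod_cast this
    have hPb : (0:ℝ) < ((P - b : ℕ) : ℝ) := by
      have : 0 < P - b := by omega
      exact_mod_cast this
    have hP' : (0:ℝ) < P := by exact_mod_cast hP
    have hratio : ((k - b : ℕ) : ℝ) / ((P - b : ℕ) : ℝ) ≤ (k:ℝ)/P := by
      rw [div_le_div_iff₀ hPb hP', Nat.cast_sub (by omega), Nat.cast_sub (by omega)]
      have : (k:ℝ) ≤ P := by exact_mod_cast hk
      have hb0 : (0:ℝ) ≤ b := by positivity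
      nlinarith
    have : ((P - (b+1)).choose (k - (b+1)) : ℝ)
        = ((P - b).choose (k - b) : ℝ) * (((k - b : ℕ) : ℝ) / ((P - b : ℕ) : ℝ)) := by
      field_simp
      linarith
    rw [this]
    calc _ ≤ (((k : ℝ) / P) ^ b * P.choose k) * ((k:ℝ)/P) := by gcongr
      _ = _ := by ring

/-- A fixed set `B` of keys is contained in a random `k`-ring with probability at most
`(k/P)^|B|`. -/
theorem avg_subset_le {P k : ℕ} (hk : k ≤ P) (hP : 0 < P) (B : Finset (Fin P)) :
    avg k (fun T => if B ⊆ T then (1:ℝ) else 0) ≤ ((k : ℝ) / P) ^ B.card := by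
  unfold avg
  have hc : (0:ℝ) < P.choose k := by exact_mod_cast Nat.choose_pos hk
  rw [div_le_iff₀ hc, Finset.sum_boole]
  by_cases hB : B.card ≤ k
  · rw [card_supersets B hB]
    exact choose_ratio hk hP _ hB
  · rw [Finset.filter_eq_empty_iff.2]
    · simp; positivity
    · intro T hT h
      have := Finset.card_le_card h
      rw [(Finset.mem_powersetCard.1 hT).2] at this
      exact hB this

theorem avg_mem {P k : ℕ} (hk : k ≤ P) (x : Fin P) :
    avg k (fun T => if x ∈ T then (1:ℝ) else 0) = (k : ℝ) / P := by
  have hP : 0 < P := x.pos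
  unfold avg
  have hc : (0:ℝ) < P.choose k := by exact_mod_cast Nat.choose_pos hk
  have hP' : (0:ℝ) < P := by exact_mod_cast hP
  rw [div_eq_div_iff hc.ne' hP'.ne', Finset.sum_boole]
  rcases Nat.eq_zero_or_pos k with h0 | h0
  · subst h0; simp
  · have := card_supersets (k := k) {x} (by rw [Finset.card_singleton]; exact h0)
    simp only [Finset.singleton_subset_iff, Finset.card_singleton] at this
    rw [this]
    have h2 := Nat.add_one_mul_choose_eq (P - 1) (k - 1)
    rw [Nat.sub_add_cancel hP, Nat.sub_add_cancel h0] at h2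
    have h3 : (P:ℝ) * ((P-1).choose (k-1) : ℝ) = (P.choose k : ℝ) * k := by exact_mod_cast h2
    linarith

/-- Membership of two distinct keys in a random ring is negatively correlated. -/
theorem avg_pair {P k : ℕ} (hk : k ≤ P) {x y : Fin P} (hxy : x ≠ y) :
    avg k (fun T => (if x ∈ T then (1:ℝ) else 0) * (if y ∈ T then (1:ℝ) else 0)) ≤ ((k : ℝ) / P)^2 := by
  have := avg_subset_le hk x.pos {x, y}
  rw [Finset.card_pair hxy] at this
  refine le_trans (avg_mono fun T _ => ?_) this
  by_cases h1 : x ∈ T <;> by_cases h2 : y ∈ T <;> simp [h1, h2, Finset.insert_subset_iff]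

/-- The generating function of the number of keys of `H` in a random ring is at most that of a
Poisson variable of the same mean: expand `s ^ |T ∩ H| = (1 + (s-1)) ^ |T ∩ H|` over subsets of
`T ∩ H` and apply `avg_subset_le` to each. -/
theorem avg_pow_inter {P k : ℕ} (hk : k ≤ P) (hP : 0 < P) (H : Finset (Fin P)) (s : ℝ) (hs : 1 ≤ s) :
    avg k (fun T => s ^ (T ∩ H).card) ≤ Real.exp ((s - 1) * (k * (H.card / P))) := by
  have hs0 : 0 ≤ s - 1 := by linarith
  have h1 : ∀ T : Finset (Fin P), s ^ (T ∩ H).card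
      = ∑ B ∈ H.powerset, (s-1)^B.card * (if B ⊆ T then (1:ℝ) else 0) := by
    intro T
    have := Finset.sum_pow_mul_eq_add_pow (s-1) 1 (T ∩ H)
    simp only [one_pow, mul_one, sub_add_cancel] at this
    rw [← this]
    simp only [mul_ite, mul_one, mul_zero]
    rw [← Finset.sum_filter]
    apply Finset.sum_congr _ (fun _ _ => rfl)
    ext B
    simp only [Finset.mem_powerset, Finset.mem_filter, Finset.subset_inter_iff]
    exact and_comm
  simp_rw [h1]
  rw [avg_sum]
  simp_rw [avg_mul_left]
  calc _ ≤ ∑ B ∈ H.powerset, (s-1)^B.card * ((k : ℝ) / P) ^ B.card := by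
        gcongr with B hB
        exact avg_subset_le hk hP B
    _ = ((s-1)*((k:ℝ)/P) + 1)^H.card := by
        have := Finset.sum_pow_mul_eq_add_pow ((s-1)*((k:ℝ)/P)) 1 H
        rw [← this]
        apply Finset.sum_congr rfl
        intro B _
        rw [mul_pow]; simp
    _ ≤ (Real.exp ((s-1)*((k:ℝ)/P)))^H.card := by
        gcongr
        exact Real.add_one_le_exp _
    _ = _ := by
        rw [← Real.exp_nat_mul]
        congr 1
        ring

/-- An antitone function has a smaller average over larger rings: a uniform `(k+1)`-ring with a
uniformly chosen element deleted is a uniform `k`-ring. -/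
theorem avg_succ_le {P k : ℕ} (hk : k + 1 ≤ P) {f : Finset (Fin P) → ℝ} (hf : Antitone f) :
    avg (k+1) f ≤ avg k f := by
  unfold avg
  have hc1 : (0:ℝ) < P.choose (k+1) := by exact_mod_cast Nat.choose_pos hk
  have hc0 : (0:ℝ) < P.choose k := by exact_mod_cast Nat.choose_pos (by omega)
  have hid : (P.choose (k+1) : ℝ) * (k+1) = P.choose k * ((P - k : ℕ) : ℝ) := by
    exact_mod_cast Nat.choose_succ_right_eq P k
  have hPk : (0:ℝ) < ((P - k : ℕ) : ℝ) := by
    have : 0 < P - k := by omega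
    exact_mod_cast this
  have key : ((k:ℝ)+1) * ∑ T ∈ Finset.powersetCard (k+1) (Finset.univ : Finset (Fin P)), f T
      ≤ ((P - k : ℕ) : ℝ) * ∑ T ∈ Finset.powersetCard k (Finset.univ : Finset (Fin P)), f T := by
    have e1 : ((k:ℝ)+1) * ∑ T ∈ Finset.powersetCard (k+1) (Finset.univ : Finset (Fin P)), f T
        = ∑ T ∈ Finset.powersetCard (k+1) (Finset.univ : Finset (Fin P)), ∑ x ∈ T, f T := by
      rw [Finset.mul_sum]
      apply Finset.sum_congr rfl
      intro T hT
      rw [Finset.sum_const, (Finset.mem_powersetCard.1 hT).2]; simp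
    have e2 : ((P - k : ℕ) : ℝ) * ∑ T ∈ Finset.powersetCard k (Finset.univ : Finset (Fin P)), f T
        = ∑ T ∈ Finset.powersetCard k (Finset.univ : Finset (Fin P)), ∑ x ∈ Tᶜ, f T := by
      rw [Finset.mul_sum]
      apply Finset.sum_congr rfl
      intro T hT
      rw [Finset.sum_const, Finset.card_compl, (Finset.mem_powersetCard.1 hT).2]; simp
    rw [e1, e2]
    calc _ ≤ ∑ T ∈ Finset.powersetCard (k+1) (Finset.univ : Finset (Fin P)),
              ∑ x ∈ T, f (T.erase x) := by
          gcongr with T hT x hx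
          exact hf (Finset.erase_subset _ _)
      _ = _ := by
          rw [Finset.sum_sigma', Finset.sum_sigma']
          refine Finset.sum_bij' (fun p _ => ⟨p.1.erase p.2, p.2⟩)
            (fun p _ => ⟨insert p.2 p.1, p.2⟩) ?_ ?_ ?_ ?_ ?_
          · rintro ⟨T, x⟩ h
            simp only [Finset.mem_sigma, Finset.mem_powersetCard] at h ⊢
            simp [Finset.card_erase_of_mem h.2, h.1.2]
          · rintro ⟨T, x⟩ h
            simp only [Finset.mem_sigma, Finset.mem_powersetCard, Finset.mem_compl] at h ⊢
            simp [Finset.card_insert_of_notMem h.2, h.1.2]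
          · rintro ⟨T, x⟩ h
            simp only [Finset.mem_sigma] at h
            simp [Finset.insert_erase h.2]
          · rintro ⟨T, x⟩ h
            simp only [Finset.mem_sigma, Finset.mem_compl] at h
            simp [Finset.erase_insert h.2]
          · rintro ⟨T, x⟩ h
            rfl
  rw [div_le_div_iff₀ hc1 hc0]
  have hk1 : (0:ℝ) < (k:ℝ)+1 := by positivity
  have := mul_le_mul_of_nonneg_left key hc0.le
  rw [← mul_assoc, ← mul_assoc, ← hid] at this
  nlinarith

theorem avg_antitone {P k l : ℕ} (hkl : k ≤ l) (hl : l ≤ P) {f : Finset (Fin P) → ℝ}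
    (hf : Antitone f) : avg l f ≤ avg k f := by
  induction l, hkl using Nat.le_induction with
  | base => exact le_rfl
  | succ l hkl ih => exact (avg_succ_le hl hf).trans (ih (by omega))

/-! ### A second-moment bound for hitting a family of rings -/

/-- The indicator that the rings `A` and `T` share a key. -/
noncomputable def meet {P : ℕ} (A T : Finset (Fin P)) : ℝ := if (A ∩ T).Nonempty then 1 else 0

theorem meet_nonneg {P : ℕ} (A T : Finset (Fin P)) : 0 ≤ meet A T := by
  unfold meet; split_ifs <;> norm_num

theorem meet_le_one {P : ℕ} (A T : Finset (Fin P)) : meet A T ≤ 1 := by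
  unfold meet; split_ifs <;> norm_num

theorem meet_mono {P : ℕ} {A B : Finset (Fin P)} (h : A ⊆ B) (T : Finset (Fin P)) :
    meet A T ≤ meet B T := by
  unfold meet
  split_ifs with h1 h2
  · exact le_rfl
  · exact absurd (h1.mono (Finset.inter_subset_inter_right h)) h2
  · norm_num
  · norm_num

theorem meet_comm {P : ℕ} (A T : Finset (Fin P)) : meet A T = meet T A := by
  unfold meet; rw [Finset.inter_comm]

/-- For `X = ∑ i, N i * B i` with independent Bernoulli(`α`) variables `B i`, the event that no
`i` with `N i ≠ 0` has `B i = 1` forces `X = 0`, so `c²` times its probability is at most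
`E (c - t X)²`, which is the right-hand side. -/
theorem prod_miss_le {ι : Type*} [DecidableEq ι] (s : Finset ι) (N u : ι → ℝ) (α t : ℝ) (h0 : 0 ≤ α) (h1 : α ≤ 1)
    (hu : ∀ i, u i = if N i = 0 then 0 else 1) (c : ℝ) :
    c^2 * ∏ i ∈ s, (1 - α * u i)
      ≤ (c - t * α * ∑ i ∈ s, N i)^2 + t^2 * (α * (1-α)) * ∑ i ∈ s, (N i)^2 := by
  induction s using Finset.induction_on generalizing c with
  | empty => simp
  | insert i s hi ih =>
    rw [Finset.prod_insert hi, Finset.sum_insert hi, Finset.sum_insert hi, hu i]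
    by_cases hN : N i = 0
    · simpa [hN] using ih c
    · have a := ih c
      have b : 0 ≤ (c - t * N i - t * α * ∑ i ∈ s, N i)^2
          + t^2 * (α * (1-α)) * ∑ i ∈ s, (N i)^2 := by
        have : 0 ≤ 1 - α := by linarith
        have : 0 ≤ ∑ i ∈ s, (N i)^2 := Finset.sum_nonneg fun _ _ => sq_nonneg _
        positivity
      simp only [hN, if_false, mul_one]
      have a' := mul_le_mul_of_nonneg_left a (by linarith : 0 ≤ 1 - α)
      have b' := mul_nonneg h0 b
      nlinarith

/-- By negative correlation, the second moment of `∑ x ∈ T, w x` is at most what independent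
inclusion of the keys would give. -/
theorem avg_sq_le {P k : ℕ} (hk : k ≤ P) (w : Fin P → ℝ) (hw : ∀ x, 0 ≤ w x) :
    avg k (fun T => (∑ x, w x * (if x ∈ T then (1:ℝ) else 0))^2)
      ≤ (∑ x, w x ^ 2) * ((k:ℝ)/P) + (∑ x, w x)^2 * ((k:ℝ)/P)^2 := by
  have h1 : ∀ T : Finset (Fin P), (∑ x, w x * (if x ∈ T then (1:ℝ) else 0))^2
      = ∑ x, ∑ y, (w x * w y) * ((if x ∈ T then (1:ℝ) else 0) * (if y ∈ T then (1:ℝ) else 0)) := by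
    intro T
    rw [sq, Finset.sum_mul_sum]
    refine Finset.sum_congr rfl fun x _ => Finset.sum_congr rfl fun y _ => by ring
  simp_rw [h1]
  rw [avg_sum]
  simp_rw [avg_sum, avg_mul_left]
  calc _ ≤ ∑ x, ∑ y, (w x * w y) * ((if x = y then ((k:ℝ)/P) else 0) + ((k:ℝ)/P)^2) := by
        refine Finset.sum_le_sum fun x _ => Finset.sum_le_sum fun y _ => ?_
        refine mul_le_mul_of_nonneg_left ?_ (mul_nonneg (hw x) (hw y))
        by_cases hxy : x = y
        · subst hxy
          simp only [if_true]
          have h2 := avg_mem hk x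
          have : avg k (fun T => (if x ∈ T then (1:ℝ) else 0) * (if x ∈ T then (1:ℝ) else 0))
              = (k:ℝ)/P := by
            rw [← h2]; congr 1; ext T; split_ifs <;> simp
          rw [this]
          have : 0 ≤ ((k:ℝ)/P)^2 := by positivity
          linarith
        · simp only [hxy, if_false, zero_add]
          exact avg_pair hk hxy
    _ = _ := by
        simp only [mul_add, Finset.sum_add_distrib, mul_ite, mul_zero, Finset.sum_ite_eq,
          Finset.mem_univ, if_true]
        rw [Finset.sum_mul, sq (∑ x, w x), Finset.sum_mul_sum, Finset.sum_mul]
        congr 1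
        · refine Finset.sum_congr rfl fun x _ => by ring
        · refine Finset.sum_congr rfl fun x _ => by rw [Finset.sum_mul]

/-- If every key lies in at most `1 + M` of the rings `A i`, then a random `k`-ring, with
independent Bernoulli(`α`) channels, fails to link to every `A i` with probability at most
`b / (e + b)`, where `e` is the expected number of shared keys over open channels and
`b = 1 + αM + K₁ k / P`. This is `prod_miss_le` for the number of keys shared with the `A i`,
averaged over the random ring, at the optimal `t = 1 / (e + b)`. -/
theorem avg_prod_miss_le {P k ℓ K₁ : ℕ} (hk : k ≤ P) (A : Fin ℓ → Finset (Fin P))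
    (hA : ∀ i, (A i).card ≤ K₁) (M : ℝ) (hM : 0 ≤ M)
    (hload : ∀ x : Fin P, ((Finset.univ.filter (fun i => x ∈ A i)).card : ℝ) ≤ 1 + M)
    (α : ℝ) (h0 : 0 ≤ α) (h1 : α ≤ 1) :
    avg k (fun T => ∏ i, (1 - α * meet (A i) T))
      ≤ 1 - (α * (∑ i, ((A i).card : ℝ)) * (k/P)) /
        (α * (∑ i, ((A i).card : ℝ)) * (k/P) + (1 + α * M + K₁ * (k / P))) := by
  set κ : ℝ := (k:ℝ)/P with hκ
  have hκ0 : 0 ≤ κ := by positivity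
  clear_value κ
  set N : ℝ := ∑ i, ((A i).card : ℝ) with hN
  have hN0 : 0 ≤ N := Finset.sum_nonneg fun i _ => Nat.cast_nonneg _
  clear_value N
  set e : ℝ := α * N * κ with he
  have he0 : 0 ≤ e := by positivity
  clear_value e
  set b : ℝ := 1 + α * M + K₁ * κ with hb
  have hb0 : 0 < b := by positivity
  clear_value b
  -- This `t` minimises the resulting quadratic `1 - 2 t e + t² (e² + e b)`.
  set t : ℝ := 1 / (e + b) with ht
  clear_value t
  set a : Fin P → ℝ := fun x => ((Finset.univ.filter (fun i => x ∈ A i)).card : ℝ) with ha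
  clear_value a
  have hcard : ∀ (i : Fin ℓ) (T : Finset (Fin P)), ((A i ∩ T).card : ℝ)
      = ∑ x, (if x ∈ A i then (1:ℝ) else 0) * (if x ∈ T then (1:ℝ) else 0) := by
    intro i T
    rw [Finset.card_eq_sum_ones]
    push_cast
    rw [← Finset.sum_filter_add_sum_filter_not Finset.univ (fun x => x ∈ A i ∩ T)]
    have z : ∑ x ∈ Finset.univ.filter (fun x => ¬ (x ∈ A i ∩ T)),
        (if x ∈ A i then (1:ℝ) else 0) * (if x ∈ T then (1:ℝ) else 0) = 0 := by
      apply Finset.sum_eq_zero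
      intro x hx
      simp only [Finset.mem_filter, Finset.mem_univ, true_and, Finset.mem_inter] at hx
      by_cases h1 : x ∈ A i <;> by_cases h2 : x ∈ T <;> simp_all
    rw [z, add_zero]
    have : Finset.univ.filter (fun x => x ∈ A i ∩ T) = A i ∩ T := by ext; simp
    rw [this]
    apply Finset.sum_congr rfl
    intro x hx
    simp only [Finset.mem_inter] at hx
    simp [hx.1, hx.2]
  have hsum : ∀ T : Finset (Fin P), ∑ i, ((A i ∩ T).card : ℝ)
      = ∑ x, a x * (if x ∈ T then (1:ℝ) else 0) := by
    intro T
    simp_rw [hcard]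
    rw [Finset.sum_comm]
    refine Finset.sum_congr rfl fun x _ => ?_
    rw [← Finset.sum_mul]
    congr 1
    rw [Finset.sum_boole, ha]
  have hAc : ∀ i, ∑ x, (if x ∈ A i then (1:ℝ) else 0) = (A i).card := by
    intro i; rw [Finset.sum_boole]; congr 2; ext; simp
  have hatot : ∑ x, a x = N := by
    have := hsum Finset.univ
    simp at this
    rw [hN, this]
  have ha0 : ∀ x, 0 ≤ a x := fun x => by simp only [ha]; positivity
  have hpt : ∀ T : Finset (Fin P), ∏ i, (1 - α * meet (A i) T)
      ≤ 1 + (-2 * t * α) * (∑ x, a x * (if x ∈ T then (1:ℝ) else 0))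
        + (t^2 * α^2) * (∑ x, a x * (if x ∈ T then (1:ℝ) else 0))^2
        + (t^2 * (α * (1-α))) * ∑ i, (∑ x, (if x ∈ A i then (1:ℝ) else 0) * (if x ∈ T then (1:ℝ) else 0))^2 := by
    intro T
    have := prod_miss_le Finset.univ (fun i => ((A i ∩ T).card : ℝ)) (fun i => meet (A i) T) α t h0 h1
      (by intro i; unfold meet
          by_cases h : (A i ∩ T).Nonempty
          · have h' := h.card_ne_zero
            simp [h, h.ne_empty]
          · simp [Finset.not_nonempty_iff_eq_empty.1 h]) 1
    rw [hsum] at this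
    simp_rw [hcard] at this
    linarith
  have step : avg k (fun T => ∏ i, (1 - α * meet (A i) T))
      ≤ 1 + (-2 * t * α) * (N * κ)
        + (t^2 * α^2) * (((1+M) * N) * κ + N^2 * κ^2)
        + (t^2 * (α * (1-α))) * (N * κ * (1 + K₁ * κ)) := by
    refine (avg_mono fun T _ => hpt T).trans ?_
    rw [avg_add, avg_add, avg_add, avg_const hk, avg_mul_left, avg_mul_left, avg_mul_left]
    have f1 : avg k (fun T : Finset (Fin P) => ∑ x, a x * (if x ∈ T then (1:ℝ) else 0)) = N * κ := by
      rw [avg_sum]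
      simp_rw [avg_mul_left, avg_mem hk]
      rw [← Finset.sum_mul, hatot, hκ]
    have f2 := avg_sq_le hk a ha0
    rw [← hκ] at f2
    have hload' : ∀ x, a x ≤ 1 + M := fun x => by rw [ha]; exact hload x
    have f3 : ∑ x, a x ^ 2 ≤ (1+M) * N := by
      rw [← hatot, Finset.mul_sum]
      refine Finset.sum_le_sum fun x _ => ?_
      rw [sq]
      exact mul_le_mul_of_nonneg_right (hload' x) (ha0 x)
    have f4 : avg k (fun T : Finset (Fin P) =>
        ∑ i, (∑ x, (if x ∈ A i then (1:ℝ) else 0) * (if x ∈ T then (1:ℝ) else 0))^2)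
        ≤ N * κ * (1 + K₁ * κ) := by
      rw [avg_sum]
      rw [hN, Finset.sum_mul, Finset.sum_mul]
      refine Finset.sum_le_sum fun i _ => ?_
      refine (avg_sq_le hk _ (fun x => by split_ifs <;> norm_num)).trans ?_
      have : ∑ x, (if x ∈ A i then (1:ℝ) else 0)^2 = (A i).card := by
        rw [← hAc]; refine Finset.sum_congr rfl fun x _ => by split_ifs <;> norm_num
      rw [this, hAc, ← hκ]
      have hc : ((A i).card : ℝ) ≤ K₁ := by exact_mod_cast hA i
      have hc0 : (0:ℝ) ≤ (A i).card := by positivity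
      have : ((A i).card : ℝ)^2 * κ^2 ≤ (A i).card * K₁ * κ^2 := by
        rw [sq ((A i).card : ℝ)]; gcongr
      nlinarith
    rw [f1]
    have : 0 ≤ 1 - α := by linarith
    rw [hatot] at f2
    have f5 : avg k (fun T => (∑ x, a x * (if x ∈ T then (1:ℝ) else 0))^2)
      ≤ ((1+M)*N) * κ + N^2 * κ^2 := f2.trans (by gcongr)
    gcongr
  refine step.trans ?_
  have hconv : α * (1 + M) + (1-α) * (1 + K₁ * κ) ≤ b := by
    have : 0 ≤ α * (K₁ * κ) := by positivity
    rw [hb]; nlinarith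
  have : 1 + (-2 * t * α) * (N * κ)
        + (t^2 * α^2) * (((1+M) * N) * κ + N^2 * κ^2)
        + (t^2 * (α * (1-α))) * (N * κ * (1 + K₁ * κ))
      = 1 - 2 * t * e + t^2 * (e^2 + e * (α * (1 + M) + (1-α) * (1 + K₁ * κ))) := by
    rw [he]; ring
  rw [this]
  have h3 : t^2 * (e^2 + e * (α * (1 + M) + (1-α) * (1 + K₁ * κ))) ≤ t^2 * (e^2 + e*b) := by gcongr
  have h4 : t^2 * (e^2+e*b) = t * e := by
    rw [ht]; field_simp
  have h5 : t * e = e/(e+b) := by rw [ht]; ring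
  linarith

/-! ### Independent vertices, overloaded keys and trimming -/

/-- The mass function of a uniformly random `k`-subset of the key pool. -/
noncomputable def unif {P : ℕ} (k : ℕ) (T : Finset (Fin P)) : ℝ :=
  if T.card = k then ((P.choose k : ℝ))⁻¹ else 0

theorem unif_nonneg {P : ℕ} (k : ℕ) (T : Finset (Fin P)) : 0 ≤ unif k T := by
  unfold unif; split_ifs <;> positivity

theorem avg_eq_sum_unif {P : ℕ} (k : ℕ) (f : Finset (Fin P) → ℝ) :
    avg k f = ∑ T, unif k T * f T := by
  unfold avg unif
  simp only [ite_mul, zero_mul]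
  rw [← Finset.sum_filter, div_eq_inv_mul, Finset.mul_sum]
  apply Finset.sum_congr _ fun _ _ => rfl
  ext T; simp [Finset.mem_powersetCard]

theorem sum_snoc {V : Type*} [Fintype V] {ℓ : ℕ} (G : (Fin (ℓ+1) → V) → ℝ) :
    ∑ v, G v = ∑ v : Fin ℓ → V, ∑ a, G (Fin.snoc v a) := by
  rw [← (Fin.snocEquiv (fun _ : Fin (ℓ+1) => V)).sum_comp, Fintype.sum_prod_type, Finset.sum_comm]
  rfl

/-- The expectation of `F` at `ℓ` independent draws from the mass function `ν`. -/
noncomputable def Epi {V : Type*} [Fintype V] (ν : V → ℝ) {ℓ : ℕ} (F : (Fin ℓ → V) → ℝ) : ℝ :=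
  ∑ v, (∏ i, ν (v i)) * F v

theorem Epi_succ {V : Type*} [Fintype V] (ν : V → ℝ) {ℓ : ℕ} (F : (Fin (ℓ+1) → V) → ℝ) :
    Epi ν F = Epi ν (fun v : Fin ℓ → V => ∑ a, ν a * F (Fin.snoc v a)) := by
  unfold Epi
  rw [sum_snoc]
  refine Finset.sum_congr rfl fun v _ => ?_
  rw [Finset.mul_sum]
  refine Finset.sum_congr rfl fun a _ => ?_
  rw [Fin.prod_univ_castSucc]
  simp only [Fin.snoc_castSucc, Fin.snoc_last]
  ring

/-- Monotonicity of `Epi`, where the pointwise comparison is needed only on the support. -/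
theorem Epi_mono {V : Type*} [Fintype V] {ν : V → ℝ} (hν : ∀ v, 0 ≤ ν v) {ℓ : ℕ}
    {F G : (Fin ℓ → V) → ℝ} (h : ∀ v, (∀ i, ν (v i) ≠ 0) → F v ≤ G v) : Epi ν F ≤ Epi ν G := by
  unfold Epi
  refine Finset.sum_le_sum fun v _ => ?_
  by_cases hv : ∀ i, ν (v i) ≠ 0
  · exact mul_le_mul_of_nonneg_left (h v hv) (Finset.prod_nonneg fun i _ => hν _)
  · push Not at hv
    obtain ⟨i, hi⟩ := hv
    rw [Finset.prod_eq_zero (Finset.mem_univ i) hi]; simp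

theorem Epi_add {V : Type*} [Fintype V] (ν : V → ℝ) {ℓ : ℕ} (F G : (Fin ℓ → V) → ℝ) :
    Epi ν (fun v => F v + G v) = Epi ν F + Epi ν G := by
  unfold Epi
  rw [← Finset.sum_add_distrib]
  exact Finset.sum_congr rfl fun v _ => by ring

theorem Epi_mul_left {V : Type*} [Fintype V] (ν : V → ℝ) {ℓ : ℕ} (c : ℝ) (F : (Fin ℓ → V) → ℝ) :
    Epi ν (fun v => c * F v) = c * Epi ν F := by
  unfold Epi
  rw [Finset.mul_sum]
  exact Finset.sum_congr rfl fun v _ => by ring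

theorem Epi_const {V : Type*} [Fintype V] (ν : V → ℝ) (h1 : ∑ v, ν v = 1) (ℓ : ℕ) (c : ℝ) :
    Epi ν (fun _ : Fin ℓ → V => c) = c := by
  induction ℓ with
  | zero => simp [Epi]
  | succ ℓ ih =>
    rw [Epi_succ]
    simp_rw [← Finset.sum_mul, h1, one_mul]
    exact ih

/-- The joint mass function of the class and the key ring of one vertex. -/
noncomputable def nu {r P : ℕ} (μ : Fin (r+1) → ℝ) (K : Fin (r+1) → ℕ)
    (v : Fin (r+1) × Finset (Fin P)) : ℝ := μ v.1 * unif (K v.1) v.2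

theorem sum_nu {r P : ℕ} (μ : Fin (r+1) → ℝ) (K : Fin (r+1) → ℕ)
    (f : Fin (r+1) × Finset (Fin P) → ℝ) :
    ∑ v, nu μ K v * f v = ∑ j, μ j * avg (K j) (fun T => f (j, T)) := by
  rw [Fintype.sum_prod_type]
  refine Finset.sum_congr rfl fun j _ => ?_
  rw [avg_eq_sum_unif, Finset.mul_sum]
  refine Finset.sum_congr rfl fun T _ => ?_
  simp only [nu]; ring

/-- For an antitone functional of the rings, giving every vertex the smallest ring size `K 0`
only increases the expectation. -/
theorem Epi_nu_le {r P : ℕ} (μ : Fin (r+1) → ℝ) (hμ : ∀ i, 0 ≤ μ i) (hμ1 : ∑ i, μ i = 1)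
    (K : Fin (r+1) → ℕ) (hK : Monotone K) (hP : ∀ i, K i ≤ P) {ℓ : ℕ}
    (F : (Fin ℓ → Finset (Fin P)) → ℝ) (hF : Antitone F) :
    Epi (nu μ K) (fun v => F (fun i => (v i).2)) ≤ Epi (unif (K 0)) F := by
  induction ℓ with
  | zero =>
    simp only [Epi, Finset.univ_unique, Finset.univ_eq_empty, Finset.prod_empty, one_mul,
      Finset.sum_singleton]
    apply le_of_eq; congr 1; ext i; exact i.elim0
  | succ ℓ ih =>
    rw [Epi_succ, Epi_succ]
    have hstep : ∀ v : Fin ℓ → Fin (r+1) × Finset (Fin P),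
        ∑ a, nu μ K a * F (fun i => (Fin.snoc (α := fun _ => Fin (r+1) × Finset (Fin P)) v a i).2)
        ≤ ∑ T, unif (K 0) T * F (Fin.snoc (α := fun _ => Finset (Fin P)) (fun i => (v i).2) T) := by
      intro v
      have he : ∀ a : Fin (r+1) × Finset (Fin P),
          (fun i => (Fin.snoc (α := fun _ => Fin (r+1) × Finset (Fin P)) v a i).2)
          = Fin.snoc (α := fun _ => Finset (Fin P)) (fun i => (v i).2) a.2 := by
        intro a; ext1 i
        refine Fin.lastCases ?_ (fun i => ?_) i <;> simp
      simp_rw [he]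
      rw [sum_nu, ← avg_eq_sum_unif]
      set g : Finset (Fin P) → ℝ := fun T =>
        F (Fin.snoc (α := fun _ => Finset (Fin P)) (fun i => (v i).2) T) with hg
      have hga : Antitone g := by
        intro T T' h
        apply hF
        intro i
        refine Fin.lastCases ?_ (fun i => ?_) i
        · simpa using h
        · simp
      calc _ ≤ ∑ j, μ j * avg (K 0) g := by
            refine Finset.sum_le_sum fun j _ => mul_le_mul_of_nonneg_left ?_ (hμ j)
            exact avg_antitone (hK (Fin.zero_le j)) (hP j) hga
        _ = _ := by rw [← Finset.sum_mul, hμ1, one_mul]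
    refine (Epi_mono (fun v => mul_nonneg (hμ _) (unif_nonneg _ _)) fun v _ => hstep v).trans ?_
    refine ih (fun R => ∑ T, unif (K 0) T * F (Fin.snoc (α := fun _ => Finset (Fin P)) R T)) ?_
    intro R R' h
    refine Finset.sum_le_sum fun T _ => mul_le_mul_of_nonneg_left ?_ (unif_nonneg _ _)
    apply hF
    intro i
    refine Fin.lastCases ?_ (fun i => ?_) i
    · simp
    · simpa using h i

open Classical in
/-- The keys that lie in more than `M` of the rings `R i`. -/
noncomputable def heavy {P ℓ : ℕ} (M : ℝ) (R : Fin ℓ → Finset (Fin P)) : Finset (Fin P) :=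
  Finset.univ.filter fun x => M < ((Finset.univ.filter fun i => x ∈ R i).card : ℝ)

/-- Revealing the rings one at a time, the total number of keys that are already heavy at the
moment at which a new ring picks them. -/
noncomputable def excess {P : ℕ} (M : ℝ) : {ℓ : ℕ} → (Fin ℓ → Finset (Fin P)) → ℕ
  | 0, _ => 0
  | ℓ + 1, R => excess M (ℓ := ℓ) (fun i => R i.castSucc)
      + (R (Fin.last ℓ) ∩ heavy M (fun i : Fin ℓ => R i.castSucc)).card

theorem load_sum {P ℓ : ℕ} (R : Fin ℓ → Finset (Fin P)) :
    ∑ x : Fin P, ((Finset.univ.filter fun i => x ∈ R i).card : ℝ) = ∑ i, ((R i).card : ℝ) := by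
  have := Finset.sum_card_bipartiteAbove_eq_sum_card_bipartiteBelow (s := (Finset.univ : Finset (Fin P)))
    (t := (Finset.univ : Finset (Fin ℓ))) (fun x i => x ∈ R i)
  simp only [Finset.bipartiteAbove, Finset.bipartiteBelow] at this
  have h2 : ∀ i, (Finset.univ.filter fun x => x ∈ R i) = R i := by intro i; ext; simp
  simp only [h2] at this
  exact_mod_cast this

/-- Double counting: a heavy key uses up at least `max 1 M` of the `ℓ k` ring entries. -/
theorem heavy_card {P ℓ k : ℕ} (M : ℝ) (hM : 0 ≤ M) (R : Fin ℓ → Finset (Fin P))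
    (hR : ∀ i, (R i).card = k) : ((heavy M R).card : ℝ) * max 1 M ≤ ℓ * k := by
  have h1 : ∑ i, ((R i).card : ℝ) = ℓ * k := by simp [hR]
  rw [← h1, ← load_sum, ← nsmul_eq_mul, ← Finset.sum_const]
  calc _ ≤ ∑ x ∈ heavy M R, ((Finset.univ.filter fun i => x ∈ R i).card : ℝ) := by
        refine Finset.sum_le_sum fun x hx => ?_
        simp only [heavy, Finset.mem_filter, Finset.mem_univ, true_and] at hx
        apply max_le _ hx.le
        have : (0:ℝ) < ((Finset.univ.filter fun i => x ∈ R i).card : ℝ) := lt_of_le_of_lt hM hx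
        have : 0 < (Finset.univ.filter fun i => x ∈ R i).card := by exact_mod_cast this
        exact_mod_cast this
    _ ≤ _ := Finset.sum_le_sum_of_subset_of_nonneg (Finset.subset_univ _) fun _ _ _ => by positivity

/-- Deleting from each ring the keys that are already heavy when it is revealed leaves every key
in at most `max 0 (1 + M)` rings (the maximum matters only for `M < -1`), and costs exactly
`excess M R` ring entries. -/
theorem exists_trim {P : ℕ} (M : ℝ) : ∀ {ℓ : ℕ} (R : Fin ℓ → Finset (Fin P)),
    ∃ A : Fin ℓ → Finset (Fin P), (∀ i, A i ⊆ R i) ∧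
      (∀ x, ((Finset.univ.filter fun i => x ∈ A i).card : ℝ) ≤ max 0 (1 + M)) ∧
      ∑ i, (A i).card + excess M R = ∑ i, (R i).card := by
  intro ℓ
  induction ℓ with
  | zero => intro R; exact ⟨R, fun i => i.elim0, fun x => by simp, by simp [excess]⟩
  | succ ℓ ih =>
    intro R
    obtain ⟨A, h1, h2, h3⟩ := ih (fun i => R i.castSucc)
    set H := heavy M (fun i : Fin ℓ => R i.castSucc) with hH
    refine ⟨Fin.snoc (α := fun _ => Finset (Fin P)) A (R (Fin.last ℓ) \ H), ?_, ?_, ?_⟩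
    · intro i
      refine Fin.lastCases ?_ (fun i => ?_) i
      · simp
      · simpa using h1 i
    · intro x
      rw [Finset.card_filter, Fin.sum_univ_castSucc]
      simp only [Fin.snoc_last, Fin.snoc_castSucc]
      rw [← Finset.card_filter]
      split_ifs with hx
      · simp only [Finset.mem_sdiff, hH, heavy, Finset.mem_filter, Finset.mem_univ, true_and,
          not_lt] at hx
        have : ((Finset.univ.filter fun i => x ∈ A i).card : ℝ)
            ≤ ((Finset.univ.filter fun i : Fin ℓ => x ∈ R i.castSucc).card : ℝ) := by
          have : (Finset.univ.filter fun i => x ∈ A i).card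
            ≤ (Finset.univ.filter fun i : Fin ℓ => x ∈ R i.castSucc).card := by
            apply Finset.card_le_card
            intro i hi
            simp only [Finset.mem_filter, Finset.mem_univ, true_and] at hi ⊢
            exact h1 i hi
          exact_mod_cast this
        apply le_max_of_le_right
        push_cast
        linarith [hx.2]
      · simpa using h2 x
    · rw [Fin.sum_univ_castSucc, Fin.sum_univ_castSucc (fun i => (R i).card)]
      simp only [Fin.snoc_last, Fin.snoc_castSucc, excess, ← h3, ← hH]
      have := Finset.card_sdiff_add_card_inter (R (Fin.last ℓ)) H
      omega

/-- Given the previous rings, at most a `ζ`-fraction of the pool is heavy, so each new ring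
multiplies the generating function of the excess by at most the Poisson factor of
`avg_pow_inter`. -/
theorem mgf_excess {P k L : ℕ} (hk : k ≤ P) (hP : 0 < P) (M ζ s : ℝ) (hM : 0 ≤ M) (hs : 1 ≤ s)
    (hζ : (L : ℝ) * k ≤ ζ * P * max 1 M) : ∀ ℓ ≤ L,
    Epi (unif k) (fun R : Fin ℓ → Finset (Fin P) => s ^ excess M R)
      ≤ Real.exp ((s-1) * (k * ζ)) ^ ℓ := by
  intro ℓ
  induction ℓ with
  | zero => intro _; simp [Epi, excess]
  | succ ℓ ih =>
    intro hℓ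
    rw [Epi_succ, pow_succ]
    have : ∀ R : Fin ℓ → Finset (Fin P), (∀ i, unif k (R i) ≠ 0) →
        ∑ T, unif k T * s ^ excess M (Fin.snoc (α := fun _ => Finset (Fin P)) R T)
        ≤ Real.exp ((s-1) * (k * ζ)) * s ^ excess M R := by
      intro R hR
      have hR' : ∀ i, (R i).card = k := by
        intro i
        by_contra h
        exact hR i (by simp [unif, h])
      have hc := heavy_card M hM R hR'
      simp only [excess, Fin.snoc_last, Fin.snoc_castSucc, pow_add]
      rw [← avg_eq_sum_unif, avg_mul_left, mul_comm]
      refine mul_le_mul_of_nonneg_right ?_ (by positivity)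
      refine (avg_pow_inter hk hP _ s hs).trans ?_
      apply Real.exp_le_exp.2
      have hP' : (0:ℝ) < P := by exact_mod_cast hP
      have : ((heavy M R).card : ℝ)/P ≤ ζ := by
        rw [div_le_iff₀ hP']
        have hm : 0 < max 1 M := lt_max_of_lt_left one_pos
        refine le_of_mul_le_mul_right ?_ hm
        refine hc.trans (le_trans ?_ hζ)
        have : (ℓ:ℝ) ≤ L := by exact_mod_cast (by omega : ℓ ≤ L)
        gcongr
      have : 0 ≤ s - 1 := by linarith
      gcongr
    refine (Epi_mono (unif_nonneg k) this).trans ?_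
    rw [Epi_mul_left, mul_comm]
    exact mul_le_mul_of_nonneg_right (ih (by omega)) (Real.exp_pos _).le

theorem sum_unif {P k : ℕ} (hk : k ≤ P) : ∑ T : Finset (Fin P), unif k T = 1 := by
  have := avg_const (P := P) hk 1
  rw [avg_eq_sum_unif] at this
  simpa using this

open Classical in
/-- Chernoff bound: the exponential moment of `mgf_excess` at `s = 1 / ζ`. -/
theorem bad_bound {P k ℓ : ℕ} (hk : k ≤ P) (hP : 0 < P) (M ζ δ : ℝ) (hM : 0 ≤ M) (hζ0 : 0 < ζ)
    (hζ1 : ζ ≤ 1) (hζ : (ℓ : ℝ) * k ≤ ζ * P * max 1 M) :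
    Epi (unif k) (fun R : Fin ℓ → Finset (Fin P) => if δ * (ℓ * k) < excess M R then (1:ℝ) else 0)
      ≤ (Real.exp k * ζ ^ (δ * k)) ^ ℓ := by
  set s : ℝ := ζ⁻¹ with hs
  have hs1 : 1 ≤ s := by rw [hs]; exact (one_le_inv₀ hζ0).2 hζ1
  have hm := mgf_excess hk hP M ζ s hM hs1 hζ ℓ le_rfl
  have h1 : ∀ R : Fin ℓ → Finset (Fin P), (if δ * (ℓ * k) < excess M R then (1:ℝ) else 0)
      ≤ ζ ^ (δ * (ℓ * k)) * s ^ excess M R := by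
    intro R
    split_ifs with h
    · rw [hs, ← Real.rpow_natCast, Real.inv_rpow hζ0.le, ← div_eq_mul_inv,
        one_le_div (Real.rpow_pos_of_pos hζ0 _)]
      exact Real.rpow_le_rpow_of_exponent_ge hζ0 hζ1 h.le
    · have := Real.rpow_pos_of_pos hζ0 (δ * (ℓ * k))
      positivity
  refine (Epi_mono (unif_nonneg k) fun R _ => h1 R).trans ?_
  rw [Epi_mul_left, mul_pow, mul_comm]
  have e1 : ζ ^ (δ * (ℓ * k)) = (ζ ^ (δ * k)) ^ ℓ := by
    rw [← Real.rpow_natCast, ← Real.rpow_mul hζ0.le]; congr 1; ring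
  rw [e1]
  refine mul_le_mul_of_nonneg_right (hm.trans ?_) (by positivity)
  gcongr
  have : (s - 1) * (k * ζ) = k * (1 - ζ) := by rw [hs]; field_simp
  rw [this]
  nlinarith [(Nat.cast_nonneg k : (0:ℝ) ≤ k)]

/-! ### The probability that a fresh vertex misses a vertex set -/

/-- The probability that a fresh random vertex is adjacent to none of `ℓ` vertices whose rings
are the `A i`. -/
noncomputable def qmiss {r P ℓ : ℕ} (μ : Fin (r+1) → ℝ) (K : Fin (r+1) → ℕ) (α : ℝ)
    (A : Fin ℓ → Finset (Fin P)) : ℝ :=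
  ∑ j, μ j * avg (K j) (fun T => ∏ i, (1 - α * meet (A i) T))

theorem miss_factor_nonneg {P : ℕ} {α : ℝ} (h0 : 0 ≤ α) (h1 : α ≤ 1) (A T : Finset (Fin P)) :
    0 ≤ 1 - α * meet A T := by
  have := meet_nonneg A T
  have := meet_le_one A T
  nlinarith

theorem miss_factor_le_one {P : ℕ} {α : ℝ} (h0 : 0 ≤ α) (A T : Finset (Fin P)) :
    1 - α * meet A T ≤ 1 := by
  have := mul_nonneg h0 (meet_nonneg A T)
  linarith

theorem qmiss_nonneg {r P ℓ : ℕ} {μ : Fin (r+1) → ℝ} (hμ : ∀ i, 0 ≤ μ i) (K : Fin (r+1) → ℕ) {α : ℝ}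
    (h0 : 0 ≤ α) (h1 : α ≤ 1) (A : Fin ℓ → Finset (Fin P)) : 0 ≤ qmiss μ K α A :=
  Finset.sum_nonneg fun j _ => mul_nonneg (hμ j) (avg_nonneg fun _ _ =>
    Finset.prod_nonneg fun _ _ => miss_factor_nonneg h0 h1 _ _)

theorem qmiss_antitone {r P ℓ : ℕ} {μ : Fin (r+1) → ℝ} (hμ : ∀ i, 0 ≤ μ i) (K : Fin (r+1) → ℕ) {α : ℝ}
    (h0 : 0 ≤ α) (h1 : α ≤ 1) : Antitone (qmiss μ K α (P := P) (ℓ := ℓ)) := by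
  intro A B h
  refine Finset.sum_le_sum fun j _ => mul_le_mul_of_nonneg_left (avg_mono fun T _ => ?_) (hμ j)
  refine Finset.prod_le_prod (fun i _ => miss_factor_nonneg h0 h1 _ _) fun i _ => ?_
  have := mul_le_mul_of_nonneg_left (meet_mono (h i) T) h0
  linarith

theorem qmiss_le_one {r P ℓ : ℕ} {μ : Fin (r+1) → ℝ} (hμ : ∀ i, 0 ≤ μ i) (hμ1 : ∑ i, μ i = 1)
    (K : Fin (r+1) → ℕ) (hP : ∀ i, K i ≤ P) {α : ℝ}
    (h0 : 0 ≤ α) (h1 : α ≤ 1) (A : Fin ℓ → Finset (Fin P)) : qmiss μ K α A ≤ 1 := by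
  rw [← hμ1]
  refine Finset.sum_le_sum fun j _ => ?_
  have : avg (K j) (fun T : Finset (Fin P) => ∏ i, (1 - α * meet (A i) T)) ≤ avg (K j) (fun _ : Finset (Fin P) => (1:ℝ)) :=
    avg_mono fun T _ => Finset.prod_le_one (fun i _ => miss_factor_nonneg h0 h1 _ _)
      fun i _ => miss_factor_le_one h0 _ _
  rw [avg_const (hP j)] at this
  nlinarith [hμ j]

/-- An upper bound for `qmiss` at `ℓ` rings that retain a proportion `1 - δ` of the `ℓ * K 0`
ring entries, when no key lies in more than `1 + M` of them. -/
noncomputable def Qbound {r : ℕ} (μ : Fin (r+1) → ℝ) (K : Fin (r+1) → ℕ) (P : ℕ) (α : ℝ) (ℓ : ℕ)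
    (δ M : ℝ) : ℝ :=
  1 - ∑ j, μ j * ((1-δ) * (α * (ℓ * K 0) * (K j / P)) /
    (α * (ℓ * K 0) * (K j / P) + (1 + α * M + K 0 * (K j / P))))

theorem qmiss_le_Qbound {r P ℓ : ℕ} {μ : Fin (r+1) → ℝ} (hμ : ∀ i, 0 ≤ μ i) (hμ1 : ∑ i, μ i = 1)
    (K : Fin (r+1) → ℕ) (hP : ∀ i, K i ≤ P) {α : ℝ}
    (h0 : 0 ≤ α) (h1 : α ≤ 1) (A : Fin ℓ → Finset (Fin P)) (hA : ∀ i, (A i).card ≤ K 0)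
    (M δ : ℝ) (hM : 0 ≤ M) (hδ : 0 ≤ δ) (hδ1 : δ ≤ 1)
    (hload : ∀ x : Fin P, ((Finset.univ.filter (fun i => x ∈ A i)).card : ℝ) ≤ 1 + M)
    (htot : (1-δ) * (ℓ * K 0) ≤ ∑ i, ((A i).card : ℝ)) :
    qmiss μ K α A ≤ Qbound μ K P α ℓ δ M := by
  unfold qmiss Qbound
  refine le_of_le_of_eq ?_ (congrArg (· - _) (show ∑ j, μ j * 1 = (1:ℝ) by simp [hμ1]))
  rw [← Finset.sum_sub_distrib]
  refine Finset.sum_le_sum fun j _ => ?_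
  rw [← mul_sub]
  refine mul_le_mul_of_nonneg_left ?_ (hμ j)
  refine (avg_prod_miss_le (hP j) A hA M hM hload α h0 h1).trans ?_
  apply sub_le_sub_left
  set N : ℝ := ∑ i, ((A i).card : ℝ) with hN
  have hN0 : 0 ≤ N := Finset.sum_nonneg fun i _ => Nat.cast_nonneg _
  clear_value N
  set κ : ℝ := (K j : ℝ)/P with hκ
  have hκ0 : 0 ≤ κ := by positivity
  clear_value κ
  have hb : 0 < 1 + α * M + K 0 * κ := by positivity
  have hm : 0 ≤ α * (ℓ * K 0) * κ := by positivity
  have he : 0 ≤ α * N * κ := by positivity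
  have hle : (1-δ) * (α * (ℓ * K 0) * κ) ≤ α * N * κ := by
    have := mul_le_mul_of_nonneg_left htot (mul_nonneg h0 hκ0)
    nlinarith
  generalize 1 + α * M + K 0 * κ = b at *
  generalize α * (ℓ * K 0) * κ = m at *
  generalize α * N * κ = e at *
  rw [div_le_div_iff₀ (by linarith) (by linarith)]
  have hd : 0 ≤ 1 - δ := by linarith
  have : (1-δ) * m * e ≤ e * m := by nlinarith [mul_nonneg hm he]
  nlinarith

open Classical in
/-- The expectation of `qmiss ^ N` over independent smallest rings. Outside the event of
`bad_bound`, trimming the rings by `exists_trim` only increases `qmiss` and puts them in the scope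
of `qmiss_le_Qbound`; on that event `qmiss ≤ 1`. -/
theorem ring_bound {r P ℓ : ℕ} {μ : Fin (r+1) → ℝ} (hμ : ∀ i, 0 ≤ μ i) (hμ1 : ∑ i, μ i = 1)
    (K : Fin (r+1) → ℕ) (hP : ∀ i, K i ≤ P) (hP0 : 0 < P) {α : ℝ}
    (h0 : 0 ≤ α) (h1 : α ≤ 1) (M ζ δ : ℝ) (hM : 0 ≤ M) (hδ : 0 ≤ δ) (hδ1 : δ ≤ 1) (hζ0 : 0 < ζ)
    (hζ1 : ζ ≤ 1) (hζ : (ℓ : ℝ) * K 0 ≤ ζ * P * max 1 M) (N : ℕ) :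
    Epi (unif (K 0)) (fun R : Fin ℓ → Finset (Fin P) => qmiss μ K α R ^ N)
      ≤ (Real.exp (K 0) * ζ ^ (δ * K 0)) ^ ℓ + Qbound μ K P α ℓ δ M ^ N := by
  have hpt : ∀ R : Fin ℓ → Finset (Fin P), (∀ i, unif (K 0) (R i) ≠ 0) → qmiss μ K α R ^ N
      ≤ (if δ * (ℓ * K 0) < excess M R then (1:ℝ) else 0) + max 0 (Qbound μ K P α ℓ δ M) ^ N := by
    intro R hR
    have hq0 := qmiss_nonneg hμ K h0 h1 R
    split_ifs with h
    · have := pow_le_one₀ (n := N) hq0 (qmiss_le_one hμ hμ1 K hP h0 h1 R)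
      have : 0 ≤ max 0 (Qbound μ K P α ℓ δ M) ^ N := by positivity
      linarith
    · rw [zero_add]
      refine pow_le_pow_left₀ hq0 (le_max_of_le_right ?_) N
      have hR' : ∀ i, (R i).card = K 0 := by
        intro i
        by_contra h
        exact hR i (by simp [unif, h])
      obtain ⟨A, hA, hl, hs⟩ := exists_trim M R
      refine (qmiss_antitone hμ K h0 h1 hA).trans ?_
      refine qmiss_le_Qbound hμ hμ1 K hP h0 h1 A (fun i => ?_) M δ hM hδ hδ1 ?_ ?_
      · rw [← hR' i]; exact Finset.card_le_card (hA i)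
      · intro x
        refine (hl x).trans (max_le (by linarith) le_rfl)
      · have : (∑ i, ((A i).card : ℝ)) + excess M R = ℓ * K 0 := by
          have h2 : ∑ i, (R i).card = ℓ * K 0 := by simp [hR']
          rw [h2] at hs
          exact_mod_cast hs
        push Not at h
        linarith
  by_cases hQ : 0 ≤ Qbound μ K P α ℓ δ M
  · rw [max_eq_right hQ] at hpt
    refine (Epi_mono (unif_nonneg _) hpt).trans ?_
    rw [Epi_add, Epi_const _ (sum_unif (hP 0))]
    have := bad_bound (hP 0) hP0 M ζ δ hM hζ0 hζ1 hζ
    linarith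
  · exfalso
    apply hQ
    unfold Qbound
    have : ∑ j, μ j * ((1-δ) * (α * (ℓ * K 0) * (K j / P)) /
      (α * (ℓ * K 0) * (K j / P) + (1 + α * M + K 0 * (K j / P)))) ≤ ∑ j, μ j * 1 := by
      refine Finset.sum_le_sum fun j _ => mul_le_mul_of_nonneg_left ?_ (hμ j)
      have a1 : 0 ≤ α * (ℓ * K 0) * ((K j : ℝ) / P) := by positivity
      have a2 : 0 ≤ α * M := by positivity
      have a3 : 0 ≤ K 0 * ((K j : ℝ) / P) := by positivity
      apply div_le_one_of_le₀ _ (by linarith)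
      nlinarith
    simp only [mul_one, hμ1] at this
    linarith

/-! ### Exact cut probabilities -/

/-- No edge joins `S` to its complement. -/
def NoCross {n r P : ℕ} (S : Finset (Fin n)) (c : Config n r P) : Prop :=
  ∀ x ∈ S, ∀ y ∉ S, ¬ Adj c x y

open Classical in
/-- Averaging over the channels: given the rings, the pairs across the cut are independent. -/
theorem sum_channels {n P : ℕ} (S : Finset (Fin n)) (R : Fin n → Finset (Fin P)) (α : ℝ) :
    ∑ B : Sym2 (Fin n) → Bool, (∏ e : Sym2 (Fin n),
      if e.IsDiag then (if B e then (0:ℝ) else 1) else (if B e then α else 1 - α)) *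
      (if ∀ x ∈ S, ∀ y ∉ S, ¬ (x ≠ y ∧ (R x ∩ R y).Nonempty ∧ B s(x, y) = true) then 1 else 0)
    = ∏ x ∈ S, ∏ y ∈ Sᶜ, (1 - α * meet (R x) (R y)) := by
  set bad : Finset (Fin n × Fin n) := (S ×ˢ Sᶜ).filter (fun p => (R p.1 ∩ R p.2).Nonempty) with hbad
  set badE : Finset (Sym2 (Fin n)) := bad.image (fun p => s(p.1, p.2)) with hbadE
  have hmem : ∀ x y, (x ∈ S ∧ y ∉ S ∧ (R x ∩ R y).Nonempty) → s(x,y) ∈ badE := by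
    intro x y h
    rw [hbadE, Finset.mem_image]
    exact ⟨(x,y), by simp [hbad, h.1, h.2.1, h.2.2], rfl⟩
  have hdiag : ∀ e ∈ badE, ¬ e.IsDiag := by
    intro e he
    rw [hbadE, Finset.mem_image] at he
    obtain ⟨p, hp, rfl⟩ := he
    simp only [hbad, Finset.mem_filter, Finset.mem_product, Finset.mem_compl] at hp
    rw [Sym2.mk_isDiag_iff]
    intro h
    rw [h] at hp
    exact hp.1.2 hp.1.1
  have h1 : ∀ B : Sym2 (Fin n) → Bool,
      (if ∀ x ∈ S, ∀ y ∉ S, ¬ (x ≠ y ∧ (R x ∩ R y).Nonempty ∧ B s(x, y) = true) then (1:ℝ) else 0)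
      = ∏ e, (if e ∈ badE ∧ B e = true then 0 else 1) := by
    intro B
    split_ifs with h
    · symm
      apply Finset.prod_eq_one
      intro e _
      rw [if_neg]
      rintro ⟨he, hB⟩
      rw [hbadE, Finset.mem_image] at he
      obtain ⟨p, hp, rfl⟩ := he
      simp only [hbad, Finset.mem_filter, Finset.mem_product, Finset.mem_compl] at hp
      refine h p.1 hp.1.1 p.2 hp.1.2 ⟨?_, hp.2, hB⟩
      intro h; rw [h] at hp; exact hp.1.2 hp.1.1
    · push Not at h
      obtain ⟨x, hx, y, hy, _, hR, hB⟩ := h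
      symm
      apply Finset.prod_eq_zero (Finset.mem_univ s(x,y))
      rw [if_pos ⟨hmem x y ⟨hx, hy, hR⟩, hB⟩]
  simp_rw [h1, ← Finset.prod_mul_distrib]
  have h2 := Finset.prod_univ_sum (fun _ : Sym2 (Fin n) => (Finset.univ : Finset Bool))
    (fun e b => (if e.IsDiag then (if b then (0:ℝ) else 1) else (if b then α else 1 - α)) *
      (if e ∈ badE ∧ b = true then 0 else 1))
  rw [Fintype.piFinset_univ] at h2
  rw [← h2]
  have h3 : ∀ e : Sym2 (Fin n), (∑ b : Bool, (if e.IsDiag then (if b then (0:ℝ) else 1) else (if b then α else 1 - α)) *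
      (if e ∈ badE ∧ b = true then 0 else 1)) = if e ∈ badE then 1 - α else 1 := by
    intro e
    by_cases he : e ∈ badE
    · simp [he, hdiag e he]
    · by_cases hd : e.IsDiag <;> simp [he, hd]
  simp_rw [h3]
  rw [Finset.prod_ite_mem, Finset.univ_inter, hbadE, Finset.prod_image]
  · rw [hbad, Finset.prod_filter, Finset.prod_product]
    refine Finset.prod_congr rfl fun x _ => Finset.prod_congr rfl fun y _ => ?_
    unfold meet
    split_ifs <;> simp
  · rintro ⟨a, b⟩ ha ⟨c, d⟩ hc h
    simp only [hbad, Finset.coe_filter, Finset.mem_product, Finset.mem_compl, Set.mem_ofPred_eq] at ha hc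
    simp only [Sym2.eq_iff] at h
    rcases h with h | h
    · simp [h.1, h.2]
    · exfalso
      rw [h.1] at ha
      exact hc.1.2 ha.1.1

/-- Given the vertices in `S`, the vertices outside `S` are independent and contribute equal
factors. -/
theorem sum_split {n : ℕ} {V : Type*} [Fintype V] (S : Finset (Fin n)) (ν ψ : V → ℝ)
    (g : V → V → ℝ) :
    ∑ v : Fin n → V, (∏ x, ν (v x)) * ((∏ x ∈ S, ψ (v x)) * ∏ x ∈ S, ∏ y ∈ Sᶜ, g (v x) (v y))
    = ∑ w : {x // x ∈ S} → V, (∏ x, ν (w x)) * ((∏ x, ψ (w x)) *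
        (∑ u, ν u * ∏ x, g (w x) u) ^ (n - S.card)) := by
  classical
  rw [← (Equiv.piEquivPiSubtypeProd (fun x => x ∈ S) (fun _ => V)).symm.sum_comp,
    Fintype.sum_prod_type]
  refine Finset.sum_congr rfl fun w _ => ?_
  have hval1 : ∀ (u : {x // ¬ x ∈ S} → V) (x : {x // x ∈ S}),
      (Equiv.piEquivPiSubtypeProd (fun x => x ∈ S) (fun _ => V)).symm (w, u) x = w x := by
    intro u x; simp [Equiv.piEquivPiSubtypeProd]
  have hval2 : ∀ (u : {x // ¬ x ∈ S} → V) (x : {x // ¬ x ∈ S}),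
      (Equiv.piEquivPiSubtypeProd (fun x => x ∈ S) (fun _ => V)).symm (w, u) x = u x := by
    intro u x; simp [Equiv.piEquivPiSubtypeProd, x.2]
  have hS : ∀ f : Fin n → ℝ, ∏ x ∈ S, f x = ∏ x : {x // x ∈ S}, f x := by
    intro f; exact (Finset.prod_coe_sort S f).symm
  have hSc : ∀ f : Fin n → ℝ, ∏ x ∈ Sᶜ, f x = ∏ x : {x // ¬ x ∈ S}, f x := by
    intro f; exact Finset.prod_subtype _ (by simp) f
  have hall : ∀ f : Fin n → ℝ, ∏ x, f x = (∏ x : {x // x ∈ S}, f x) * ∏ x : {x // ¬ x ∈ S}, f x := by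
    intro f; rw [← hS, ← hSc, Finset.prod_mul_prod_compl]
  simp_rw [hall, hS, hSc, hval1, hval2]
  have h2 := Finset.prod_univ_sum (fun _ : {x // ¬ x ∈ S} => (Finset.univ : Finset V))
    (fun _ u => ν u * ∏ x : {x // x ∈ S}, g (w x) u)
  rw [Fintype.piFinset_univ, Finset.prod_const, Finset.card_univ] at h2
  have hc : Fintype.card {x // ¬ x ∈ S} = n - S.card := by
    rw [Fintype.card_subtype_compl, Fintype.card_fin, Fintype.card_coe]
  rw [hc] at h2
  rw [h2, Finset.mul_sum, Finset.mul_sum]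
  refine Finset.sum_congr rfl fun u _ => ?_
  rw [Finset.prod_comm, Finset.prod_mul_distrib]
  ring

open Classical in
/-- The expectation of a product of functions of the vertices of `S` on the event that no edge
leaves `S`: conditionally on the rings inside `S`, each of the `n - |S|` outside vertices misses `S`
independently with probability `qmiss`. -/
theorem cut_formula {n r P : ℕ} (μ : Fin (r+1) → ℝ) (K : Fin (r+1) → ℕ) (α : ℝ)
    (S : Finset (Fin n)) (ψ : Fin (r+1) × Finset (Fin P) → ℝ) :
    ∑ c : Config n r P, wt μ K α c * ((∏ x ∈ S, ψ (c.1 x, c.2.1 x)) * if NoCross S c then 1 else 0)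
    = Epi (nu μ K) (fun w : Fin S.card → Fin (r+1) × Finset (Fin P) =>
        (∏ i, ψ (w i)) * qmiss μ K α (fun i => (w i).2) ^ (n - S.card)) := by
  have h1 : ∑ c : Config n r P, wt μ K α c * ((∏ x ∈ S, ψ (c.1 x, c.2.1 x)) * if NoCross S c then 1 else 0)
      = ∑ v : Fin n → Fin (r+1) × Finset (Fin P), (∏ x, nu μ K (v x)) *
        ((∏ x ∈ S, ψ (v x)) * ∏ x ∈ S, ∏ y ∈ Sᶜ, (1 - α * meet (v x).2 (v y).2)) := by
    rw [← (Equiv.arrowProdEquivProdArrow (Fin n) (fun _ => Fin (r+1)) (fun _ => Finset (Fin P))).symm.sum_comp,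
      Fintype.sum_prod_type, Fintype.sum_prod_type]
    refine Finset.sum_congr rfl fun t _ => ?_
    rw [Fintype.sum_prod_type]
    refine Finset.sum_congr rfl fun R _ => ?_
    simp only [Equiv.arrowProdEquivProdArrow, Equiv.coe_fn_symm_mk]
    rw [← sum_channels S R α, Finset.mul_sum, Finset.mul_sum]
    refine Finset.sum_congr rfl fun B _ => ?_
    unfold wt NoCross Adj nu unif
    simp only [Finset.prod_mul_distrib]
    ring_nf
  rw [h1, sum_split S (nu μ K) ψ (fun a b => 1 - α * meet a.2 b.2)]
  unfold Epi
  have e : {x // x ∈ S} ≃ Fin S.card := S.equivFin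
  rw [← (Equiv.arrowCongr e (Equiv.refl (Fin (r+1) × Finset (Fin P)))).symm.sum_comp]
  refine Finset.sum_congr rfl fun w _ => ?_
  simp only [Equiv.arrowCongr_symm, Equiv.arrowCongr_apply, Equiv.refl_symm, Equiv.coe_refl,
    Function.comp_apply, id_eq, Equiv.symm_symm]
  rw [e.prod_comp (fun i => nu μ K (w i)), e.prod_comp (fun i => ψ (w i)), sum_nu]
  unfold qmiss
  congr 3
  refine Finset.sum_congr rfl fun j _ => ?_
  congr 2
  ext T
  rw [e.prod_comp (fun i => 1 - α * meet (w i).2 T)]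

/-! ### Union bounds and disconnecting cuts -/

theorem wt_nonneg {n r P : ℕ} {μ : Fin (r+1) → ℝ} (hμ : ∀ i, 0 ≤ μ i) (K : Fin (r+1) → ℕ) {α : ℝ}
    (h0 : 0 ≤ α) (h1 : α ≤ 1) (c : Config n r P) : 0 ≤ wt μ K α c := by
  unfold wt
  refine mul_nonneg (mul_nonneg (Finset.prod_nonneg fun x _ => hμ _) (Finset.prod_nonneg fun x _ => ?_))
    (Finset.prod_nonneg fun e _ => ?_)
  · split_ifs <;> positivity
  · split_ifs <;> linarith

theorem sum_wt {n r P : ℕ} {μ : Fin (r+1) → ℝ} (hμ1 : ∑ i, μ i = 1) (K : Fin (r+1) → ℕ)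
    (hP : ∀ i, K i ≤ P) (α : ℝ) : ∑ c : Config n r P, wt μ K α c = 1 := by
  have h := cut_formula (n := n) (P := P) μ K α ∅ (fun _ => 1)
  simp only [NoCross, Finset.notMem_empty, false_imp_iff, implies_true, if_true, Finset.prod_empty,
    mul_one] at h
  rw [h]
  have hq : ∀ A : Fin 0 → Finset (Fin P), qmiss μ K α A = 1 := by
    intro A
    unfold qmiss
    simp only [Finset.univ_eq_empty, Finset.prod_empty, avg_const (hP _), mul_one, hμ1]
  have : (∅ : Finset (Fin n)).card = 0 := rfl
  simp only [Finset.prod_const_one, one_mul]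
  change Epi (nu μ K) (fun w : Fin 0 → Fin (r+1) × Finset (Fin P) => qmiss μ K α (fun i => (w i).2) ^ (n - 0)) = 1
  simp only [hq, one_pow]
  simp [Epi]

theorem pr_mono {n r P : ℕ} {μ : Fin (r+1) → ℝ} (hμ : ∀ i, 0 ≤ μ i) (K : Fin (r+1) → ℕ) {α : ℝ}
    (h0 : 0 ≤ α) (h1 : α ≤ 1)
    {E E' : Config n r P → Prop} (h : ∀ c, E c → E' c) : pr μ K α E ≤ pr μ K α E' := by
  unfold pr
  refine Finset.sum_le_sum fun c _ => ?_
  have := wt_nonneg hμ K h0 h1 c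
  by_cases hE : E c
  · simp [hE, h c hE]
  · by_cases hE' : E' c <;> simp [hE, hE', this]

theorem pr_nonneg {n r P : ℕ} {μ : Fin (r+1) → ℝ} (hμ : ∀ i, 0 ≤ μ i) (K : Fin (r+1) → ℕ) {α : ℝ}
    (h0 : 0 ≤ α) (h1 : α ≤ 1)
    (E : Config n r P → Prop) : 0 ≤ pr μ K α E := by
  unfold pr
  refine Finset.sum_nonneg fun c _ => ?_
  have := wt_nonneg hμ K h0 h1 c
  split_ifs <;> simp [this]

theorem pr_not {n r P : ℕ} {μ : Fin (r+1) → ℝ} (K : Fin (r+1) → ℕ) {α : ℝ}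
    (hμ1 : ∑ i, μ i = 1) (hP : ∀ i, K i ≤ P) (E : Config n r P → Prop) :
    pr μ K α E = 1 - pr μ K α (fun c => ¬ E c) := by
  rw [← sum_wt (n := n) (P := P) hμ1 K hP α]
  unfold pr
  rw [← Finset.sum_sub_distrib]
  refine Finset.sum_congr rfl fun c _ => ?_
  by_cases hE : E c <;> simp [hE]

theorem pr_exists_le {n r P : ℕ} {μ : Fin (r+1) → ℝ} (hμ : ∀ i, 0 ≤ μ i) (K : Fin (r+1) → ℕ) {α : ℝ}
    (h0 : 0 ≤ α) (h1 : α ≤ 1)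
    {ι : Type*} (s : Finset ι) (E : ι → Config n r P → Prop) :
    pr μ K α (fun c => ∃ i ∈ s, E i c) ≤ ∑ i ∈ s, pr μ K α (E i) := by
  unfold pr
  rw [Finset.sum_comm]
  refine Finset.sum_le_sum fun c _ => ?_
  have hw := wt_nonneg hμ K h0 h1 c
  have hnn : ∀ i ∈ s, 0 ≤ (open Classical in if E i c then wt μ K α c else 0) := by
    intro i _; split_ifs <;> simp [hw]
  split_ifs with h
  · obtain ⟨i, hi, hE⟩ := h
    refine le_trans ?_ (Finset.single_le_sum hnn hi)
    simp [hE]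
  · exact Finset.sum_nonneg hnn

/-- The cut probability when every vertex of `S` is given the smallest ring size. -/
theorem pr_noCross_le {n r P : ℕ} {μ : Fin (r+1) → ℝ} (hμ : ∀ i, 0 ≤ μ i) (K : Fin (r+1) → ℕ) {α : ℝ}
    (h0 : 0 ≤ α) (h1 : α ≤ 1)
    (hμ1 : ∑ i, μ i = 1) (hK : Monotone K) (hP : ∀ i, K i ≤ P) (S : Finset (Fin n)) :
    pr μ K α (fun c : Config n r P => NoCross S c)
      ≤ Epi (unif (K 0)) (fun R : Fin S.card → Finset (Fin P) => qmiss μ K α R ^ (n - S.card)) := by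
  have h := cut_formula (n := n) (P := P) μ K α S (fun _ => 1)
  simp only [Finset.prod_const_one, one_mul] at h
  have : pr μ K α (fun c : Config n r P => NoCross S c) =
      ∑ c : Config n r P, wt μ K α c * (open Classical in if NoCross S c then 1 else 0) := by
    unfold pr
    refine Finset.sum_congr rfl fun c _ => ?_
    by_cases hE : NoCross S c <;> simp [hE]
  rw [this, h]
  refine Epi_nu_le μ hμ hμ1 K hK hP (fun R => qmiss μ K α R ^ (n - S.card)) ?_
  intro A B hAB
  exact pow_le_pow_left₀ (qmiss_nonneg hμ K h0 h1 _) (qmiss_antitone hμ K h0 h1 hAB) _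


theorem Adj_symm {n r P : ℕ} {c : Config n r P} {x y : Fin n} (h : Adj c x y) : Adj c y x := by
  obtain ⟨a, b, d⟩ := h
  exact ⟨a.symm, by rwa [Finset.inter_comm], by rwa [Sym2.eq_swap]⟩

theorem graphOf_adj {n r P : ℕ} (c : Config n r P) (x y : Fin n) : (graphOf c).Adj x y ↔ Adj c x y := by
  unfold graphOf
  rw [SimpleGraph.fromRel_adj]
  constructor
  · rintro ⟨hne, h | h⟩
    · exact ⟨hne, h⟩
    · exact Adj_symm ⟨hne.symm, h⟩
  · exact fun h => ⟨h.1, Or.inl h.2⟩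

/-- A disconnected graph has a nonempty vertex set of size at most `n / 2` that no edge leaves:
the vertex set of a component, or its complement. -/
theorem exists_cut {n r P : ℕ} (hn : 0 < n) (c : Config n r P) (h : ¬ (graphOf c).Connected) :
    ∃ S : Finset (Fin n), S.Nonempty ∧ 2 * S.card ≤ n ∧ NoCross S c := by
  classical
  have : Nonempty (Fin n) := ⟨⟨0, hn⟩⟩
  have h2 : ¬ (graphOf c).Preconnected := fun hp => h ⟨hp⟩
  unfold SimpleGraph.Preconnected at h2
  push Not at h2
  obtain ⟨u, v, huv⟩ := h2
  set S : Finset (Fin n) := Finset.univ.filter fun x => (graphOf c).Reachable u x with hS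
  have hcross : ∀ x ∈ S, ∀ y ∉ S, ¬ Adj c x y := by
    intro x hx y hy hxy
    simp only [hS, Finset.mem_filter, Finset.mem_univ, true_and] at hx hy
    exact hy (hx.trans ((graphOf_adj c x y).2 hxy).reachable)
  by_cases hc : 2 * S.card ≤ n
  · exact ⟨S, ⟨u, by simp [hS]⟩, hc, hcross⟩
  · refine ⟨Sᶜ, ⟨v, by simp [hS, huv]⟩, ?_, ?_⟩
    · rw [Finset.card_compl, Fintype.card_fin]; omega
    · intro x hx y hy hxy
      rw [Finset.mem_compl] at hx hy
      exact hcross y (not_not.1 hy) x hx (Adj_symm hxy)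

theorem noIsolated_of_connected {n r P : ℕ} (hn : 2 ≤ n) (c : Config n r P)
    (h : (graphOf c).Connected) : NoIsolatedNodes c := by
  intro x hx
  have : Nontrivial (Fin n) := Fin.nontrivial_iff_two_le.2 hn
  obtain ⟨y, hy⟩ := h.preconnected.exists_adj_of_nontrivial x
  exact hx y ((graphOf_adj c x y).1 hy)

/-- Union bound over the disconnecting cuts, grouped by size. -/
theorem pr_not_connected_le {n r P : ℕ} (hn : 0 < n) {μ : Fin (r+1) → ℝ} (hμ : ∀ i, 0 ≤ μ i)
    (K : Fin (r+1) → ℕ) {α : ℝ} (h0 : 0 ≤ α) (h1 : α ≤ 1) (b : ℕ → ℝ)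
    (hb : ∀ S : Finset (Fin n), S.Nonempty → 2 * S.card ≤ n →
      pr μ K α (fun c : Config n r P => NoCross S c) ≤ b S.card) :
    pr μ K α (fun c : Config n r P => ¬ (graphOf c).Connected)
      ≤ ∑ ℓ ∈ (Finset.range (n+1)).filter (fun ℓ => 1 ≤ ℓ ∧ 2 * ℓ ≤ n), (n.choose ℓ : ℝ) * b ℓ := by
  set s : Finset (Finset (Fin n)) := (Finset.univ.powerset).filter (fun S => 1 ≤ S.card ∧ 2 * S.card ≤ n)
    with hs
  have e1 : pr μ K α (fun c : Config n r P => ¬ (graphOf c).Connected)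
      ≤ pr μ K α (fun c : Config n r P => ∃ S ∈ s, NoCross S c) := by
    refine pr_mono hμ K h0 h1 fun c hc => ?_
    obtain ⟨S, hS, hSc, h⟩ := exists_cut hn c hc
    exact ⟨S, by simp only [hs, Finset.mem_filter, Finset.mem_powerset]; exact ⟨Finset.subset_univ _, hS.card_pos, hSc⟩, h⟩
  refine e1.trans ((pr_exists_le hμ K h0 h1 s _).trans ?_)
  calc _ ≤ ∑ S ∈ s, b S.card := by
        refine Finset.sum_le_sum fun S hS => ?_
        simp only [hs, Finset.mem_filter] at hS
        exact hb S (Finset.card_pos.1 hS.2.1) hS.2.2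
    _ = _ := by
        rw [hs, Finset.sum_filter,
          Finset.sum_powerset_apply_card (fun m => if 1 ≤ m ∧ 2 * m ≤ n then b m else 0)]
        rw [Finset.sum_filter, Finset.card_univ, Fintype.card_fin]
        refine Finset.sum_congr rfl fun m _ => ?_
        split_ifs <;> simp

/-! ### Estimates for the key-sharing probability -/

theorem avg_miss {P a b : ℕ} (A : Finset (Fin P)) (hA : A.card = a) :
    avg b (fun T => 1 - meet A T) = avoidProb P a b := by
  unfold avg avoidProb
  congr 1
  have : ∀ T : Finset (Fin P), 1 - meet A T = if T ⊆ Aᶜ then (1:ℝ) else 0 := by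
    intro T
    unfold meet
    have hd : T ⊆ Aᶜ ↔ A ∩ T = ∅ := by
      rw [Finset.subset_compl_iff_disjoint_right, disjoint_comm, Finset.disjoint_iff_inter_eq_empty]
    by_cases h : (A ∩ T).Nonempty
    · rw [if_pos h, if_neg]; · simp
      rw [hd]
      exact h.ne_empty
    · rw [if_neg h, if_pos]; · simp
      rw [hd]
      exact Finset.not_nonempty_iff_eq_empty.1 h
  simp_rw [this]
  rw [Finset.sum_boole, ← hA]
  congr 1
  have h2 : (P - A.card).choose b = (Finset.powersetCard b Aᶜ).card := by
    rw [Finset.card_powersetCard, Finset.card_compl, Fintype.card_fin]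
  rw [h2]
  congr 1
  ext T
  simp [Finset.mem_powersetCard, and_comm]

theorem exists_card {P a : ℕ} (ha : a ≤ P) : ∃ A : Finset (Fin P), A.card = a := by
  obtain ⟨A, _, h⟩ := Finset.exists_subset_card_eq (s := (Finset.univ : Finset (Fin P))) (n := a) (by simpa using ha)
  exact ⟨A, h⟩

theorem pEdge_eq {P a b : ℕ} (hb : b ≤ P) (A : Finset (Fin P)) (hA : A.card = a) :
    pEdge P a b = avg b (fun T => meet A T) := by
  have h := avg_miss (b := b) A hA
  have h2 := avg_add (k := b) (fun T : Finset (Fin P) => meet A T) (fun T => 1 - meet A T)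
  simp only [add_sub_cancel] at h2
  rw [avg_const hb, h] at h2
  unfold pEdge
  linarith

theorem meet_le_sum {P : ℕ} (A T : Finset (Fin P)) : meet A T ≤ ∑ x ∈ A, if x ∈ T then (1:ℝ) else 0 := by
  unfold meet
  split_ifs with h
  · obtain ⟨x, hx⟩ := h
    rw [Finset.mem_inter] at hx
    refine le_trans ?_ (Finset.single_le_sum (f := fun x => if x ∈ T then (1:ℝ) else 0) (fun i _ => by positivity) hx.1)
    simp [hx.2]
  · positivity

theorem pEdge_nonneg {P a b : ℕ} (ha : a ≤ P) (hb : b ≤ P) : 0 ≤ pEdge P a b := by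
  obtain ⟨A, hA⟩ := exists_card ha
  rw [pEdge_eq hb A hA]
  exact avg_nonneg fun T _ => meet_nonneg _ _

theorem pEdge_le_one {P a b : ℕ} : pEdge P a b ≤ 1 := by
  unfold pEdge avoidProb
  have : (0:ℝ) ≤ ((P - a).choose b : ℝ) / (P.choose b : ℝ) := by positivity
  linarith

theorem pEdge_le {P a b : ℕ} (ha : a ≤ P) (hb : b ≤ P) : pEdge P a b ≤ a * (b / P) := by
  obtain ⟨A, hA⟩ := exists_card ha
  rw [pEdge_eq hb A hA]
  refine (avg_mono fun T _ => meet_le_sum A T).trans ?_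
  rw [avg_sum]
  simp_rw [avg_mem hb]
  simp [hA]

/-- Converse to `pEdge_le`, from `avg_prod_miss_le` for a single ring with open channel. -/
theorem pEdge_ge {P a b : ℕ} (ha : a ≤ P) (hb : b ≤ P) :
    (a * (b / P) : ℝ) / (1 + 2 * (a * (b / P))) ≤ pEdge P a b := by
  obtain ⟨A, hA⟩ := exists_card ha
  have h := avg_prod_miss_le hb (fun _ : Fin 1 => A) (fun _ => hA.le) 0 le_rfl
    (by
      intro x
      have : (Finset.univ.filter (fun i : Fin 1 => x ∈ A)).card ≤ 1 := by
        simpa using Finset.card_filter_le (Finset.univ : Finset (Fin 1)) (fun i => x ∈ A)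
      have : ((Finset.univ.filter (fun i : Fin 1 => x ∈ A)).card : ℝ) ≤ 1 := by exact_mod_cast this
      linarith) 1 zero_le_one le_rfl
  simp only [Finset.univ_unique, Finset.prod_singleton, one_mul, Finset.sum_singleton, hA] at h
  rw [avg_miss A hA] at h
  unfold pEdge
  have e : (a * (b / P) : ℝ) / (1 + 2 * (a * (b / P))) = (a * (b / P) : ℝ) / (a * (b / P) + (1 + 0 + a * (b / P))) := by
    congr 1; ring
  rw [e]
  linarith

theorem small_of_pEdge {P a b : ℕ} (ha : a ≤ P) (hb : b ≤ P) (h : pEdge P a b ≤ 1/4) :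
    (a * (b / P) : ℝ) ≤ 2 * pEdge P a b := by
  have h1 := pEdge_ge ha hb
  have h2 := pEdge_nonneg ha hb
  have h3 : (0:ℝ) ≤ a * (b / P) := by positivity
  rw [div_le_iff₀ (by positivity)] at h1
  nlinarith

/-! ### Scalings and the one-law for isolated nodes -/

/-- The mean number of keys shared by a smallest ring and a ring of class `j`; asymptotically it
is `p_{1j}`. -/
noncomputable def load {r : ℕ} (K : Fin (r+1) → ℕ) (P : ℕ) (j : Fin (r+1)) : ℝ := K 0 * (K j / P)

theorem load_nonneg {r : ℕ} (K : Fin (r+1) → ℕ) (P : ℕ) (j : Fin (r+1)) : 0 ≤ load K P j := by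
  unfold load; positivity

/-- The quantity `α K₁ K_avg / P`, written as the mean number of keys that a smallest ring shares
with a random vertex over an open channel. -/
noncomputable def mload {r : ℕ} (μ : Fin (r+1) → ℝ) (K : Fin (r+1) → ℕ) (P : ℕ) (α : ℝ) : ℝ :=
  ∑ j, μ j * (α * load K P j)

/-- The standing assumptions on a scaling: a fixed positive class distribution, ordered ring sizes
that are at most half of the pool, `λ₁ → 0`, and `α K₁ K_avg / P ~ c log n / n`. -/
structure Scaling {r : ℕ} (μ : Fin (r+1) → ℝ) (K : ℕ → Fin (r+1) → ℕ) (P : ℕ → ℕ) (α : ℕ → ℝ)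
    (c : ℝ) : Prop where
  hμpos : ∀ i, 0 < μ i
  hμsum : ∑ i, μ i = 1
  hK1 : ∀ n, 1 ≤ K n 0
  hKmono : ∀ n, Monotone (K n)
  hKP : ∀ n, 2 * K n (Fin.last r) ≤ P n
  hα : ∀ n, α n ∈ Set.Ioo (0 : ℝ) 1
  hcpos : 0 < c
  hlam : Tendsto (fun n : ℕ => lamb μ (K n) (P n) 0) atTop (nhds 0)
  hscal : Tendsto (fun n : ℕ =>
        (α n * (K n 0 : ℝ) * (∑ j, μ j * (K n j : ℝ)) / (P n : ℝ)) / (c * Real.log n / n))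
      atTop (nhds 1)

namespace Scaling
variable {r : ℕ} {μ : Fin (r+1) → ℝ} {K : ℕ → Fin (r+1) → ℕ} {P : ℕ → ℕ} {α : ℕ → ℝ} {c : ℝ}

theorem KleP (h : Scaling μ K P α c) (n : ℕ) (i : Fin (r+1)) : K n i ≤ P n := by
  have := h.hKP n
  have := h.hKmono n (Fin.le_last i)
  omega

theorem Ppos (h : Scaling μ K P α c) (n : ℕ) : 0 < P n := by
  have := h.hK1 n
  have := h.KleP n 0
  omega

theorem pEdge_tendsto (h : Scaling μ K P α c) (j : Fin (r+1)) :
    Tendsto (fun n => pEdge (P n) (K n 0) (K n j)) atTop (nhds 0) := by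
  have h1 : Tendsto (fun n : ℕ => lamb μ (K n) (P n) 0 / μ j) atTop (nhds 0) := by
    simpa using h.hlam.div_const (μ j)
  refine squeeze_zero (fun n => pEdge_nonneg (h.KleP n 0) (h.KleP n j)) (fun n => ?_) h1
  rw [le_div_iff₀ (h.hμpos j), mul_comm]
  unfold lamb
  exact Finset.single_le_sum (f := fun j => μ j * pEdge (P n) (K n 0) (K n j))
    (fun i _ => mul_nonneg (h.hμpos i).le (pEdge_nonneg (h.KleP n 0) (h.KleP n i))) (Finset.mem_univ j)

theorem load_tendsto (h : Scaling μ K P α c) (j : Fin (r+1)) :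
    Tendsto (fun n => load (K n) (P n) j) atTop (nhds 0) := by
  have h1 := h.pEdge_tendsto j
  have h2 : ∀ᶠ n in atTop, pEdge (P n) (K n 0) (K n j) ≤ 1/4 := h1.eventually_le_const (by norm_num)
  refine squeeze_zero' (Eventually.of_forall fun n => load_nonneg _ _ _)
    (h2.mono fun n hn => small_of_pEdge (h.KleP n 0) (h.KleP n j) hn) (by simpa using h1.const_mul 2)

theorem load_small (h : Scaling μ K P α c) {ε : ℝ} (hε : 0 < ε) :
    ∀ᶠ n in atTop, ∀ j, load (K n) (P n) j ≤ ε :=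
  eventually_all.2 fun j => (h.load_tendsto j).eventually_le_const hε

theorem mload_tendsto (h : Scaling μ K P α c) :
    Tendsto (fun n : ℕ => n * mload μ (K n) (P n) (α n) / Real.log n) atTop (nhds c) := by
  have h1 := h.hscal.const_mul c
  rw [mul_one] at h1
  refine h1.congr' ?_
  filter_upwards [eventually_ge_atTop 2] with n hn
  have hl : 0 < Real.log n := Real.log_pos (by exact_mod_cast (by omega : 1 < n))
  have hn0 : (0:ℝ) < n := by positivity
  have hc := h.hcpos
  have : mload μ (K n) (P n) (α n) = α n * (K n 0 : ℝ) * (∑ j, μ j * (K n j : ℝ)) / (P n : ℝ) := by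
    unfold mload load
    rw [Finset.mul_sum, Finset.sum_div]
    refine Finset.sum_congr rfl fun j _ => by ring
  rw [this]
  field_simp

theorem mload_ge (h : Scaling μ K P α c) {c' : ℝ} (hc : c' < c) :
    ∀ᶠ n : ℕ in atTop, c' * Real.log n ≤ n * mload μ (K n) (P n) (α n) := by
  filter_upwards [h.mload_tendsto.eventually_const_le hc, eventually_ge_atTop 2] with n h1 hn
  have hl : 0 < Real.log n := Real.log_pos (by exact_mod_cast (by omega : 1 < n))
  rwa [le_div_iff₀ hl] at h1

theorem mload_le (h : Scaling μ K P α c) {c' : ℝ} (hc : c < c') :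
    ∀ᶠ n : ℕ in atTop, n * mload μ (K n) (P n) (α n) ≤ c' * Real.log n := by
  filter_upwards [h.mload_tendsto.eventually_le_const hc, eventually_ge_atTop 2] with n h1 hn
  have hl : 0 < Real.log n := Real.log_pos (by exact_mod_cast (by omega : 1 < n))
  rwa [div_le_iff₀ hl] at h1

theorem mload_nonneg (h : Scaling μ K P α c) (n : ℕ) : 0 ≤ mload μ (K n) (P n) (α n) :=
  Finset.sum_nonneg fun j _ => mul_nonneg (h.hμpos j).le (mul_nonneg (h.hα n).1.le (load_nonneg _ _ _))

end Scaling

theorem exists_rho {c : ℝ} (hc : 1 < c) : ∃ ρ : ℝ, 0 < ρ ∧ ρ < 1 ∧ 1 < c * ρ ^ 4 := by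
  refine ⟨1 - (c-1)/(8*c), ?_, ?_, ?_⟩
  · have : (c-1)/(8*c) < 1 := by rw [div_lt_one (by linarith)]; linarith
    linarith
  · have : 0 < (c-1)/(8*c) := by apply div_pos <;> linarith
    linarith
  · have h1 : (c-1)/(8*c) < 1 := by rw [div_lt_one (by linarith)]; linarith
    have h2 := one_add_mul_le_pow (a := -((c-1)/(8*c))) (by linarith) 4
    have h3 : c * (1 + (4:ℕ) * -((c-1)/(8*c))) = (c+1)/2 := by
      field_simp; norm_num; ring
    have h4 := mul_le_mul_of_nonneg_left h2 (by linarith : (0:ℝ) ≤ c)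
    rw [h3] at h4
    rw [← sub_eq_add_neg] at h4
    linarith

theorem rpow_tendsto_zero {γ : ℝ} (hγ : 0 < γ) :
    Tendsto (fun n : ℕ => Real.exp (-(γ * Real.log n))) atTop (nhds 0) := by
  refine Real.tendsto_exp_neg_atTop_nhds_zero.comp ?_
  exact (Real.tendsto_log_atTop.comp tendsto_natCast_atTop_atTop).const_mul_atTop hγ

namespace Scaling
variable {r : ℕ} {μ : Fin (r+1) → ℝ} {K : ℕ → Fin (r+1) → ℕ} {P : ℕ → ℕ} {α : ℕ → ℝ} {c : ℝ}

theorem qmiss_single_le (h : Scaling μ K P α c) (n : ℕ) {ε : ℝ}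
    (hε : ∀ j, load (K n) (P n) j ≤ ε) (A : Fin 1 → Finset (Fin (P n))) (hA : ∀ i, (A i).card = K n 0) :
    qmiss μ (K n) (α n) A ≤ 1 - mload μ (K n) (P n) (α n) / (1 + 2 * ε) := by
  have hα := h.hα n
  refine (qmiss_le_Qbound (fun i => (h.hμpos i).le) h.hμsum (K n) (h.KleP n) hα.1.le hα.2.le A
    (fun i => (hA i).le) 0 0 le_rfl le_rfl zero_le_one ?_ ?_).trans ?_
  · intro x
    have : (Finset.univ.filter (fun i : Fin 1 => x ∈ A i)).card ≤ 1 := by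
      simpa using Finset.card_filter_le (Finset.univ : Finset (Fin 1)) (fun i => x ∈ A i)
    have : ((Finset.univ.filter (fun i : Fin 1 => x ∈ A i)).card : ℝ) ≤ 1 := by exact_mod_cast this
    linarith
  · simp [hA]
  · unfold Qbound mload
    rw [Finset.sum_div]
    apply sub_le_sub_left
    refine Finset.sum_le_sum fun j _ => ?_
    rw [mul_div_assoc]
    refine mul_le_mul_of_nonneg_left ?_ (h.hμpos j).le
    have hl := load_nonneg (K n) (P n) j
    have e1 : α n * (((1:ℕ):ℝ) * (K n 0)) * ((K n j : ℝ) / P n) = α n * load (K n) (P n) j := by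
      unfold load; push_cast; ring
    have e2 : (K n 0 : ℝ) * ((K n j : ℝ) / P n) = load (K n) (P n) j := rfl
    rw [e1, e2]
    simp only [sub_zero, one_mul, mul_zero, add_zero]
    have h3 := mul_nonneg hα.1.le hl
    apply div_le_div_of_nonneg_left h3 (by positivity)
    have := hε j
    nlinarith [hα.1, hα.2]

/-- Union bound for the existence of an isolated node; a node with the smallest ring is the most
likely to be isolated. -/
theorem isolated_le (h : Scaling μ K P α c) (n : ℕ) {ε : ℝ}
    (hε : ∀ j, load (K n) (P n) j ≤ ε) :
    pr μ (K n) (α n) (fun cfg : Config n r (P n) => ¬ NoIsolatedNodes cfg)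
      ≤ n * Real.exp (-(mload μ (K n) (P n) (α n) / (1 + 2 * ε) * ((n - 1 : ℕ) : ℝ))) := by
  have hα := h.hα n
  have hμ : ∀ i, 0 ≤ μ i := fun i => (h.hμpos i).le
  have e1 : pr μ (K n) (α n) (fun cfg : Config n r (P n) => ¬ NoIsolatedNodes cfg)
      ≤ pr μ (K n) (α n) (fun cfg : Config n r (P n) => ∃ x ∈ Finset.univ, NoCross {x} cfg) := by
    refine pr_mono hμ _ hα.1.le hα.2.le fun cfg hc => ?_
    unfold NoIsolatedNodes at hc
    push Not at hc
    obtain ⟨x, hx⟩ := hc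
    refine ⟨x, Finset.mem_univ _, ?_⟩
    intro y hy z _
    rw [Finset.mem_singleton] at hy
    rw [hy]; exact hx z
  refine e1.trans ((pr_exists_le hμ _ hα.1.le hα.2.le Finset.univ _).trans ?_)
  have e2 : ∀ x : Fin n, pr μ (K n) (α n) (fun cfg : Config n r (P n) => NoCross {x} cfg)
      ≤ Real.exp (-(mload μ (K n) (P n) (α n) / (1 + 2 * ε) * ((n - 1 : ℕ) : ℝ))) := by
    intro x
    refine (pr_noCross_le hμ _ hα.1.le hα.2.le h.hμsum (h.hKmono n) (h.KleP n) {x}).trans ?_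
    change Epi (unif (K n 0)) (fun R : Fin 1 → Finset (Fin (P n)) => qmiss μ (K n) (α n) R ^ (n - 1)) ≤ _
    rw [← Epi_const (unif (P := P n) (K n 0)) (sum_unif (h.KleP n 0)) 1 (Real.exp _)]
    refine Epi_mono (unif_nonneg _) fun R hR => ?_
    have hc : ∀ i, (R i).card = K n 0 := by
      intro i
      have := hR i
      unfold unif at this
      by_contra hne
      simp [hne] at this
    rw [← neg_mul, mul_comm, Real.exp_nat_mul]
    refine pow_le_pow_left₀ (qmiss_nonneg hμ _ hα.1.le hα.2.le _) ?_ _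
    refine (h.qmiss_single_le n hε R hc).trans ?_
    have := Real.add_one_le_exp (-(mload μ (K n) (P n) (α n) / (1 + 2 * ε)))
    linarith
  calc _ ≤ ∑ x : Fin n, Real.exp (-(mload μ (K n) (P n) (α n) / (1 + 2 * ε) * ((n - 1 : ℕ) : ℝ))) :=
        Finset.sum_le_sum fun x _ => e2 x
    _ = _ := by simp

theorem pred_ge {ρ : ℝ} (hρ : ρ < 1) : ∀ᶠ n : ℕ in atTop, ρ * n ≤ ((n - 1 : ℕ) : ℝ) := by
  have h1 : ∀ᶠ n : ℕ in atTop, 1 / (1-ρ) ≤ (n:ℝ) :=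
    tendsto_natCast_atTop_atTop.eventually_ge_atTop _
  filter_upwards [h1, eventually_ge_atTop 1] with n h1 hn
  rw [div_le_iff₀ (by linarith)] at h1
  push_cast [hn]
  linarith

/-- For `c > 1` the union bound `isolated_le` is at most `n ^ (1 - c ρ³)` for some `ρ < 1` close
to `1`. -/
theorem one_law_isolated (h : Scaling μ K P α c) (hc : 1 < c) :
    Tendsto (fun n => pr μ (K n) (α n) (fun cfg : Config n r (P n) => NoIsolatedNodes cfg))
          atTop (nhds 1) := by
  obtain ⟨ρ, hρ0, hρ1, hρc⟩ := exists_rho hc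
  have hρi : 1 < ρ⁻¹ := (one_lt_inv₀ hρ0).2 hρ1
  have key : Tendsto (fun n => pr μ (K n) (α n) (fun cfg : Config n r (P n) => ¬ NoIsolatedNodes cfg))
      atTop (nhds 0) := by
    have hγ : 0 < c * ρ^3 - 1 := by
      have : c * ρ^4 ≤ c * ρ^3 := by
        have : ρ^4 ≤ ρ^3 := pow_le_pow_of_le_one hρ0.le hρ1.le (by norm_num)
        have := h.hcpos
        gcongr
      linarith
    refine squeeze_zero' (Eventually.of_forall fun n => pr_nonneg (fun i => (h.hμpos i).le) _
      (h.hα n).1.le (h.hα n).2.le _) ?_ (rpow_tendsto_zero hγ)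
    have hε : 0 < (ρ⁻¹ - 1)/2 := by linarith
    have hcρ : c * ρ < c := by have := h.hcpos; nlinarith
    filter_upwards [h.load_small hε, h.mload_ge hcρ, pred_ge hρ1, eventually_ge_atTop 1] with n h1 h2 h3 hn
    refine (h.isolated_le n h1).trans ?_
    have hn0 : (0:ℝ) < n := by exact_mod_cast hn
    have e : (1:ℝ) + 2 * ((ρ⁻¹-1)/2) = ρ⁻¹ := by ring
    rw [e, div_inv_eq_mul]
    nth_rw 1 [← Real.exp_log hn0]
    rw [← Real.exp_add]
    apply Real.exp_le_exp.2
    have hm := h.mload_nonneg n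
    set m := mload μ (K n) (P n) (α n)
    have : c * ρ^3 * Real.log n ≤ m * ρ * ((n-1:ℕ):ℝ) := by
      calc c * ρ^3 * Real.log n = ρ^2 * (c * ρ * Real.log n) := by ring
        _ ≤ ρ^2 * (n * m) := by gcongr
        _ = m * ρ * (ρ * n) := by ring
        _ ≤ _ := by gcongr
    linarith
  have : (fun n => pr μ (K n) (α n) (fun cfg : Config n r (P n) => NoIsolatedNodes cfg))
      = fun n => 1 - pr μ (K n) (α n) (fun cfg : Config n r (P n) => ¬ NoIsolatedNodes cfg) := by
    funext n
    exact pr_not (K n) h.hμsum (h.KleP n) _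
  rw [this]
  simpa using key.const_sub 1

end Scaling

/-! ### Pairs of smallest rings -/

/-- Restricting independent vertices to the smallest class. -/
theorem Epi_class_zero {r P : ℕ} (μ : Fin (r+1) → ℝ) (K : Fin (r+1) → ℕ) {ℓ : ℕ}
    (F : (Fin ℓ → Finset (Fin P)) → ℝ) :
    Epi (nu μ K) (fun v => (∏ i, if (v i).1 = 0 then (1:ℝ) else 0) * F (fun i => (v i).2))
      = μ 0 ^ ℓ * Epi (unif (K 0)) F := by
  unfold Epi
  rw [← (Equiv.arrowProdEquivProdArrow (Fin ℓ) (fun _ => Fin (r+1)) (fun _ => Finset (Fin P))).symm.sum_comp,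
      Fintype.sum_prod_type, Finset.sum_eq_single (fun _ => (0 : Fin (r+1)))]
  · simp only [Equiv.arrowProdEquivProdArrow, Equiv.coe_fn_symm_mk, nu, if_true, Finset.prod_const_one,
      one_mul, Finset.prod_mul_distrib, Finset.prod_const, Finset.card_univ, Fintype.card_fin]
    rw [Finset.mul_sum]
    exact Finset.sum_congr rfl fun v _ => by ring
  · intro t _ ht
    obtain ⟨i, hi⟩ : ∃ i, t i ≠ 0 := by
      by_contra hcon
      push Not at hcon
      exact ht (funext hcon)
    refine Finset.sum_eq_zero fun v _ => ?_
    refine mul_eq_zero_of_right _ (mul_eq_zero_of_left (Finset.prod_eq_zero (Finset.mem_univ i) ?_) _)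
    exact if_neg hi
  · simp

theorem card_of_unif {P k : ℕ} {T : Finset (Fin P)} (h : unif k T ≠ 0) : T.card = k := by
  unfold unif at h
  by_contra hne
  simp [hne] at h

theorem qmiss_one {r P : ℕ} {μ : Fin (r+1) → ℝ} (hμ1 : ∑ i, μ i = 1)
    (K : Fin (r+1) → ℕ) (hP : ∀ i, K i ≤ P) {α : ℝ}
    (A : Fin 1 → Finset (Fin P)) (hA : ∀ i, (A i).card = K 0) :
    qmiss μ K α A = 1 - α * lamb μ K P 0 := by
  have key : ∀ j, avg (K j) (fun T : Finset (Fin P) => ∏ i, (1 - α * meet (A i) T))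
      = 1 - α * pEdge P (K 0) (K j) := by
    intro j
    simp only [Finset.univ_unique, Finset.prod_singleton]
    have h := avg_add (k := K j) (fun T : Finset (Fin P) => 1 - α * meet (A default) T)
      (fun T => α * meet (A default) T)
    simp only [sub_add_cancel] at h
    rw [avg_const (hP j), avg_mul_left, ← pEdge_eq (hP j) _ (hA _)] at h
    linarith
  unfold qmiss lamb
  simp only [key, mul_sub, mul_one, Finset.sum_sub_distrib, hμ1, Finset.mul_sum]
  congr 1
  exact Finset.sum_congr rfl fun j _ => by ring

theorem qmiss_two {r P : ℕ} {μ : Fin (r+1) → ℝ} (hμ1 : ∑ i, μ i = 1)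
    (K : Fin (r+1) → ℕ) (hP : ∀ i, K i ≤ P) {α : ℝ}
    (A : Fin 2 → Finset (Fin P)) (hA : ∀ i, (A i).card = K 0) :
    qmiss μ K α A = 1 - 2 * (α * lamb μ K P 0)
      + α^2 * ∑ j, μ j * avg (K j) (fun T => meet (A 0) T * meet (A 1) T) := by
  have key : ∀ j, avg (K j) (fun T : Finset (Fin P) => ∏ i, (1 - α * meet (A i) T))
      = 1 - 2 * (α * pEdge P (K 0) (K j)) + α ^ 2 * avg (K j) (fun T => meet (A 0) T * meet (A 1) T) := by
    intro j
    simp only [Fin.prod_univ_two]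
    have h : avg (K j) (fun T : Finset (Fin P) => (((1 - α * meet (A 0) T) * (1 - α * meet (A 1) T)
        + α * meet (A 0) T) + α * meet (A 1) T)) = avg (K j) (fun T => 1 + α^2 * (meet (A 0) T * meet (A 1) T)) := by
      congr 1; ext T; ring
    rw [avg_add, avg_add, avg_add, avg_const (hP j), avg_mul_left, avg_mul_left, avg_mul_left,
      ← pEdge_eq (hP j) _ (hA _), ← pEdge_eq (hP j) _ (hA _)] at h
    linarith
  unfold qmiss lamb
  simp only [key, mul_sub, mul_add, mul_one, Finset.sum_sub_distrib, Finset.sum_add_distrib, hμ1, Finset.mul_sum]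
  congr 2
  · exact Finset.sum_congr rfl fun j _ => by ring
  · ext j; ring

theorem qmiss_two_le {r P : ℕ} {μ : Fin (r+1) → ℝ} (hμ : ∀ i, 0 ≤ μ i) (hμ1 : ∑ i, μ i = 1)
    (K : Fin (r+1) → ℕ) (hP : ∀ i, K i ≤ P) {α : ℝ}
    (A : Fin 2 → Finset (Fin P)) (hA : ∀ i, (A i).card = K 0) :
    qmiss μ K α A ≤ 1 - 2 * (α * lamb μ K P 0) + α^2 * lamb μ K P 0 := by
  rw [qmiss_two hμ1 K hP A hA]
  gcongr
  unfold lamb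
  refine Finset.sum_le_sum fun j _ => mul_le_mul_of_nonneg_left ?_ (hμ j)
  rw [pEdge_eq (hP j) _ (hA 0)]
  refine avg_mono fun T _ => ?_
  exact mul_le_of_le_one_right (meet_nonneg _ _) (meet_le_one _ _)

/-- For disjoint rings the two adjacencies are negatively correlated up to the product of the
mean numbers of shared keys. -/
theorem qmiss_two_le_disjoint {r P : ℕ} {μ : Fin (r+1) → ℝ} (hμ : ∀ i, 0 ≤ μ i) (hμ1 : ∑ i, μ i = 1)
    (K : Fin (r+1) → ℕ) (hP : ∀ i, K i ≤ P) {α : ℝ}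
    (A : Fin 2 → Finset (Fin P)) (hA : ∀ i, (A i).card = K 0)
    (hd : ¬ (A 0 ∩ A 1).Nonempty) :
    qmiss μ K α A ≤ 1 - 2 * (α * lamb μ K P 0) + ∑ j, μ j * (α * load K P j)^2 := by
  rw [qmiss_two hμ1 K hP A hA, Finset.mul_sum]
  refine add_le_add le_rfl (Finset.sum_le_sum fun j _ => ?_)
  have : avg (K j) (fun T => meet (A 0) T * meet (A 1) T) ≤ (load K P j)^2 := by
    have e : ∀ T : Finset (Fin P), meet (A 0) T * meet (A 1) T ≤
        ∑ x ∈ A 0, ∑ y ∈ A 1, (if x ∈ T then (1:ℝ) else 0) * (if y ∈ T then (1:ℝ) else 0) := by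
      intro T
      rw [← Finset.sum_mul_sum]
      exact mul_le_mul (meet_le_sum _ _) (meet_le_sum _ _) (meet_nonneg _ _)
        (Finset.sum_nonneg fun i _ => by positivity)
    refine (avg_mono fun T _ => e T).trans ?_
    rw [avg_sum]
    simp_rw [avg_sum]
    calc _ ≤ ∑ x ∈ A 0, ∑ y ∈ A 1, ((K j : ℝ)/P)^2 := by
          refine Finset.sum_le_sum fun x hx => Finset.sum_le_sum fun y hy => avg_pair (hP j) ?_
          rintro rfl
          exact hd ⟨x, Finset.mem_inter.2 ⟨hx, hy⟩⟩
      _ = _ := by simp [hA, load]; ring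
  calc α^2 * (μ j * avg (K j) (fun T => meet (A 0) T * meet (A 1) T)) ≤ α^2 * (μ j * (load K P j)^2) := by
        have := hμ j; gcongr
    _ = _ := by ring

theorem Epi_meet {P : ℕ}
    {k : ℕ} (hk : k ≤ P) :
    Epi (unif k) (fun A : Fin 2 → Finset (Fin P) => meet (A 0) (A 1)) = pEdge P k k := by
  unfold Epi
  rw [← (finTwoArrowEquiv (Finset (Fin P))).symm.sum_comp, Fintype.sum_prod_type]
  simp only [Fin.prod_univ_two, finTwoArrowEquiv_symm_apply, Matrix.cons_val_zero, Matrix.cons_val_one]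
  have : ∀ T : Finset (Fin P), ∑ U, unif k T * unif k U * meet T U = unif k T * pEdge P k k := by
    intro T
    by_cases h : unif k T = 0
    · simp [h]
    · rw [pEdge_eq hk T (card_of_unif h), avg_eq_sum_unif, Finset.mul_sum]
      exact Finset.sum_congr rfl fun U _ => by ring
  simp_rw [this]
  rw [← Finset.sum_mul, sum_unif hk, one_mul]

/-- Two smallest rings are either disjoint, or meet, with probability `p₁₁`; the cruder bound
`qmiss_two_le` is used in the latter case. -/
theorem Epi_two_le {r P : ℕ} {μ : Fin (r+1) → ℝ} (hμ : ∀ i, 0 ≤ μ i) (hμ1 : ∑ i, μ i = 1)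
    (K : Fin (r+1) → ℕ) (hP : ∀ i, K i ≤ P) {α : ℝ}
    (h0 : 0 ≤ α) (h1 : α ≤ 1) (hs : α * lamb μ K P 0 ≤ 1/2) (N : ℕ) :
    Epi (unif (K 0)) (fun A : Fin 2 → Finset (Fin P) => qmiss μ K α A ^ N)
      ≤ (1 - 2 * (α * lamb μ K P 0) + ∑ j, μ j * (α * load K P j)^2)^N
        + pEdge P (K 0) (K 0) * (1 - 2 * (α * lamb μ K P 0) + α * (α * lamb μ K P 0))^N := by
  have hb : 0 ≤ 1 - 2 * (α * lamb μ K P 0) + ∑ j, μ j * (α * load K P j)^2 := by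
    have : 0 ≤ ∑ j, μ j * (α * load K P j)^2 :=
      Finset.sum_nonneg fun j _ => mul_nonneg (hμ j) (sq_nonneg _)
    linarith
  have hpt : ∀ A : Fin 2 → Finset (Fin P), (∀ i, unif (K 0) (A i) ≠ 0) → qmiss μ K α A ^ N ≤
      (1 - 2 * (α * lamb μ K P 0) + ∑ j, μ j * (α * load K P j)^2)^N
        + (1 - 2 * (α * lamb μ K P 0) + α * (α * lamb μ K P 0))^N * meet (A 0) (A 1) := by
    intro A hA
    have hc : ∀ i, (A i).card = K 0 := fun i => card_of_unif (hA i)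
    have hq := qmiss_nonneg hμ K h0 h1 A
    unfold meet
    split_ifs with hm
    · have h2 := pow_le_pow_left₀ hq (qmiss_two_le hμ hμ1 K hP A hc) N
      rw [pow_two, mul_assoc] at h2
      have := pow_nonneg hb N
      linarith
    · have h2 := pow_le_pow_left₀ hq (qmiss_two_le_disjoint hμ hμ1 K hP A hc hm) N
      linarith
  refine (Epi_mono (unif_nonneg _) hpt).trans ?_
  rw [Epi_add, Epi_const _ (sum_unif (hP 0)), Epi_mul_left, Epi_meet (hP 0), mul_comm (pEdge _ _ _)]

/-! ### Second moment of the number of isolated nodes -/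

open Classical in
/-- The indicator that `x` is isolated and belongs to the smallest class. -/
noncomputable def chi {n r P : ℕ} (x : Fin n) (c : Config n r P) : ℝ :=
  (if c.1 x = 0 then 1 else 0) * (if NoCross {x} c then 1 else 0)

theorem chi_eq_zero {n r P : ℕ} {c : Config n r P} (h : NoIsolatedNodes c) (x : Fin n) : chi x c = 0 := by
  unfold chi
  rw [if_neg (c := NoCross {x} c), mul_zero]
  intro hx
  refine h x fun y hy => ?_
  exact hx x (Finset.mem_singleton_self x) y (by simpa using hy.1.symm) hy

theorem noCross_pair {n r P : ℕ} {c : Config n r P} {x y : Fin n} (hx : NoCross {x} c) (hy : NoCross {y} c) :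
    NoCross {x, y} c := by
  intro u hu v hv
  simp only [Finset.mem_insert, Finset.mem_singleton, not_or] at hu hv
  rcases hu with rfl | rfl
  · exact hx u (by simp) v (by simpa using hv.1)
  · exact hy u (by simp) v (by simpa using hv.2)

theorem sum_chi {n r P : ℕ} {μ : Fin (r+1) → ℝ} (hμ1 : ∑ i, μ i = 1)
    (K : Fin (r+1) → ℕ) (hP : ∀ i, K i ≤ P) {α : ℝ}
    (x : Fin n) :
    ∑ c : Config n r P, wt μ K α c * chi x c = μ 0 * (1 - α * lamb μ K P 0)^(n-1) := by
  have h := cut_formula (n := n) (P := P) μ K α {x} (fun v => if v.1 = 0 then 1 else 0)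
  simp only [Finset.prod_singleton] at h
  unfold chi
  rw [h, Epi_class_zero μ K (fun R => qmiss μ K α R ^ (n - ({x} : Finset (Fin n)).card))]
  change μ 0 ^ 1 * Epi (unif (K 0)) (fun R : Fin 1 → Finset (Fin P) => qmiss μ K α R ^ (n-1)) = _
  rw [pow_one]
  congr 1
  conv_rhs => rw [← Epi_const (unif (P := P) (K 0)) (sum_unif (hP 0)) 1 ((1 - α * lamb μ K P 0)^(n-1))]
  apply le_antisymm
  · refine Epi_mono (unif_nonneg _) fun R hR => ?_
    rw [qmiss_one hμ1 K hP R fun i => card_of_unif (hR i)]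
  · refine Epi_mono (unif_nonneg _) fun R hR => ?_
    rw [qmiss_one hμ1 K hP R fun i => card_of_unif (hR i)]

theorem sum_chi_mul {n r P : ℕ} {μ : Fin (r+1) → ℝ} (hμ : ∀ i, 0 ≤ μ i) (hμ1 : ∑ i, μ i = 1)
    (K : Fin (r+1) → ℕ) (hP : ∀ i, K i ≤ P) {α : ℝ}
    (h0 : 0 ≤ α) (h1 : α ≤ 1) (hs : α * lamb μ K P 0 ≤ 1/2) {x y : Fin n} (hxy : x ≠ y) :
    ∑ c : Config n r P, wt μ K α c * (chi x c * chi y c) ≤ μ 0 ^ 2 *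
      ((1 - 2 * (α * lamb μ K P 0) + ∑ j, μ j * (α * load K P j)^2)^(n-2)
        + pEdge P (K 0) (K 0) * (1 - 2 * (α * lamb μ K P 0) + α * (α * lamb μ K P 0))^(n-2)) := by
  have h := cut_formula (n := n) (P := P) μ K α {x, y} (fun v => if v.1 = 0 then 1 else 0)
  rw [Epi_class_zero μ K (fun R => qmiss μ K α R ^ (n - ({x, y} : Finset (Fin n)).card)),
    Finset.card_pair hxy] at h
  simp only [Finset.prod_pair hxy] at h
  refine le_trans (Finset.sum_le_sum fun c _ => mul_le_mul_of_nonneg_left ?_ (wt_nonneg hμ K h0 h1 c))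
    (h.le.trans (mul_le_mul_of_nonneg_left (Epi_two_le hμ hμ1 K hP h0 h1 hs (n-2)) (by have := hμ 0; positivity)))
  unfold chi
  by_cases hx : NoCross {x} c
  · by_cases hy : NoCross {y} c
    · simp [hx, hy, noCross_pair hx hy]
    · rw [if_neg hy]
      simp only [mul_zero]
      positivity
  · rw [if_neg hx]
    simp only [mul_zero, zero_mul]
    positivity

theorem chi_sq {n r P : ℕ}
    {c : Config n r P} (x : Fin n) : chi x c * chi x c = chi x c := by
  unfold chi; split_ifs <;> simp

/-- With `X` the number of isolated smallest-class nodes and `t = 1 / E X`, the absence of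
isolated nodes has probability at most `E (1 - t X)²`. -/
theorem second_moment {n r P : ℕ} {μ : Fin (r+1) → ℝ} (hμ : ∀ i, 0 ≤ μ i) (hμ1 : ∑ i, μ i = 1)
    (K : Fin (r+1) → ℕ) (hP : ∀ i, K i ≤ P) {α : ℝ}
    (h0 : 0 ≤ α) (h1 : α ≤ 1) (p₁ p₂ : ℝ) (hp₁ : 0 < p₁)
    (hp₂ : 0 ≤ p₂) (hn : 0 < n)
    (hp1 : ∀ x : Fin n, ∑ c : Config n r P, wt μ K α c * chi x c = p₁)
    (hp2 : ∀ x y : Fin n, x ≠ y → ∑ c : Config n r P, wt μ K α c * (chi x c * chi y c) ≤ p₂) :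
    pr μ K α (fun c : Config n r P => NoIsolatedNodes c) ≤ 1 / (n * p₁) + (p₂ / p₁^2 - 1) := by
  have hn0 : (0:ℝ) < n := by exact_mod_cast hn
  set t : ℝ := 1 / (n * p₁) with ht
  have e1 : pr μ K α (fun c : Config n r P => NoIsolatedNodes c)
      ≤ ∑ c : Config n r P, wt μ K α c * (1 - t * ∑ x, chi x c)^2 := by
    unfold pr
    refine Finset.sum_le_sum fun c _ => ?_
    have hw := wt_nonneg hμ K h0 h1 c
    split_ifs with hc
    · simp [chi_eq_zero hc]
    · positivity
  refine e1.trans ?_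
  have e2 : ∑ c : Config n r P, wt μ K α c * (1 - t * ∑ x, chi x c)^2
      = 1 - 2 * t * (∑ x, ∑ c : Config n r P, wt μ K α c * chi x c)
        + t^2 * ∑ x, ∑ y, ∑ c : Config n r P, wt μ K α c * (chi x c * chi y c) := by
    have : ∀ c : Config n r P, wt μ K α c * (1 - t * ∑ x, chi x c)^2
        = wt μ K α c - 2 * t * (∑ x, wt μ K α c * chi x c)
          + t^2 * ∑ x, ∑ y, wt μ K α c * (chi x c * chi y c) := by
      intro c
      simp_rw [← Finset.mul_sum]
      rw [← Finset.sum_mul]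
      ring
    simp_rw [this]
    rw [Finset.sum_add_distrib, Finset.sum_sub_distrib, sum_wt hμ1 K hP, ← Finset.mul_sum, ← Finset.mul_sum]
    congr 2
    · rw [Finset.sum_comm]
    · rw [Finset.sum_comm]
      exact Finset.sum_congr rfl fun x _ => Finset.sum_comm
  rw [e2]
  have e3 : ∑ x : Fin n, ∑ y : Fin n, ∑ c : Config n r P, wt μ K α c * (chi x c * chi y c)
      ≤ n * (p₁ + n * p₂) := by
    have : ∀ x : Fin n, ∑ y : Fin n, ∑ c : Config n r P, wt μ K α c * (chi x c * chi y c) ≤ p₁ + n * p₂ := by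
      intro x
      calc _ ≤ ∑ y : Fin n, ((if y = x then p₁ else 0) + p₂) := by
            refine Finset.sum_le_sum fun y _ => ?_
            by_cases hxy : y = x
            · rw [hxy]
              simp only [chi_sq, hp1, if_true]
              linarith
            · rw [if_neg hxy, zero_add]
              exact hp2 x y (Ne.symm hxy)
        _ = _ := by simp [Finset.sum_add_distrib]
    calc _ ≤ ∑ x : Fin n, (p₁ + n * p₂) := Finset.sum_le_sum fun x _ => this x
      _ = _ := by simp; ring
  simp_rw [hp1]
  have e4 := mul_le_mul_of_nonneg_left e3 (sq_nonneg t)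
  have e5 : 1 - 2 * t * (∑ x : Fin n, p₁) + t^2 * (n * (p₁ + n * p₂)) = t + (p₂ / p₁^2 - 1) := by
    simp only [Finset.sum_const, Finset.card_univ, Fintype.card_fin, nsmul_eq_mul]
    rw [ht]
    field_simp
    ring
  linarith

/-! ### The zero-law for isolated nodes -/

/-- Compares `1 - 2s + b` with the square of `1 - s`, as needed for the ratio of the second moment
to the squared first moment. -/
theorem ratio_pow {s b : ℝ} (hs : s ≤ 1/2) (hb : 0 ≤ b) (N : ℕ) :
    (1 - 2 * s + b)^N ≤ ((1-s)^2)^N * Real.exp (((1-s)^2)⁻¹ * (b * N)) := by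
  have hs2 : 0 < (1-s)^2 := by have : 0 < 1 - s := by linarith
                               positivity
  have e : ((1-s)^2)⁻¹ * (b * N) = N * (((1-s)^2)⁻¹ * b) := by ring
  rw [e, Real.exp_nat_mul, ← mul_pow]
  refine pow_le_pow_left₀ (by linarith) ?_ _
  have h := Real.add_one_le_exp (((1-s)^2)⁻¹ * b)
  calc 1 - 2*s + b ≤ (1-s)^2 + b := by nlinarith [sq_nonneg s]
    _ = (1-s)^2 * (((1-s)^2)⁻¹ * b + 1) := by rw [mul_add, mul_inv_cancel_left₀ hs2.ne']; ring
    _ ≤ _ := by gcongr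

theorem one_sub_ge_exp {s : ℝ} (hs0 : 0 ≤ s) (hs : s ≤ 1/2) : Real.exp (-(((1-s)^2)⁻¹ * s)) ≤ 1 - s := by
  have h1 : 0 < 1 - s := by linarith
  rw [Real.exp_neg]
  refine inv_le_of_inv_le₀ h1 ?_
  have h := Real.add_one_le_exp (((1-s)^2)⁻¹ * s)
  refine le_trans ?_ h
  have : (1-s)⁻¹ = (1-s)⁻¹ * s + 1 := by field_simp; ring
  rw [this]
  gcongr
  nlinarith

namespace Scaling
variable {r : ℕ} {μ : Fin (r+1) → ℝ} {K : ℕ → Fin (r+1) → ℕ} {P : ℕ → ℕ} {α : ℕ → ℝ} {c : ℝ}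

/-- The second-moment bound in exponential form. -/
theorem noIsolated_le (h : Scaling μ K P α c) {n : ℕ} (hn : 2 ≤ n) {s β : ℝ}
    (hs : s = α n * lamb μ (K n) (P n) 0) (hs0 : 0 ≤ s) (hs2 : s ≤ 1/2)
    (hβ : β = ∑ j, μ j * (α n * load (K n) (P n) j)^2) :
    pr μ (K n) (α n) (fun cfg : Config n r (P n) => NoIsolatedNodes cfg)
      ≤ (μ 0)⁻¹ * Real.exp (((1-s)^2)⁻¹ * (s * n) - Real.log n)
        + (((1-s)^2)⁻¹ * (Real.exp (((1-s)^2)⁻¹ * (β * n))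
          + pEdge (P n) (K n 0) (K n 0) * Real.exp (((1-s)^2)⁻¹ * (α n * s * n))) - 1) := by
  have hα := h.hα n
  have hμ : ∀ i, 0 ≤ μ i := fun i => (h.hμpos i).le
  have hμ0 := h.hμpos 0
  have hn0 : (0:ℝ) < n := by positivity
  have h1s : 0 < 1 - s := by linarith
  have hβ0 : 0 ≤ β := by
    rw [hβ]; exact Finset.sum_nonneg fun j _ => mul_nonneg (hμ j) (sq_nonneg _)
  have hp := pEdge_nonneg (h.KleP n 0) (h.KleP n 0)
  have hpow : 0 < (1-s)^(n-1) := by positivity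
  have h2 := second_moment (n := n) hμ h.hμsum (K n) (h.KleP n) hα.1.le hα.2.le
    (μ 0 * (1-s)^(n-1)) (μ 0 ^ 2 * ((1 - 2 * s + β)^(n-2)
        + pEdge (P n) (K n 0) (K n 0) * (1 - 2 * s + α n * s)^(n-2))) (by positivity)
    (by
      have : 0 ≤ 1 - 2 * s + β := by linarith
      have : 0 ≤ 1 - 2 * s + α n * s := by nlinarith [hα.1]
      positivity) (by omega)
    (fun x => by rw [sum_chi h.hμsum (K n) (h.KleP n) x, hs])
    (fun x y hxy => by
      rw [hs, hβ]
      exact sum_chi_mul hμ h.hμsum (K n) (h.KleP n) hα.1.le hα.2.le (hs ▸ hs2) hxy)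
  refine h2.trans ?_
  have hN : ((n - 2 : ℕ) : ℝ) ≤ n := by exact_mod_cast Nat.sub_le n 2
  have hN1 : ((n - 1 : ℕ) : ℝ) ≤ n := by exact_mod_cast Nat.sub_le n 1
  refine add_le_add ?_ (sub_le_sub_right ?_ 1)
  · have e1 : Real.exp (-(((1-s)^2)⁻¹ * (s * n))) ≤ (1-s)^(n-1) := by
      refine le_trans ?_ (pow_le_pow_left₀ (Real.exp_pos _).le (one_sub_ge_exp hs0 hs2) (n-1))
      rw [← Real.exp_nat_mul]
      apply Real.exp_le_exp.2
      have : ((n-1:ℕ):ℝ) * (((1-s)^2)⁻¹ * s) ≤ n * (((1-s)^2)⁻¹ * s) := by gcongr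
      linarith
    rw [Real.exp_sub, Real.exp_log hn0]
    rw [Real.exp_neg] at e1
    have e2 := inv_anti₀ (by positivity) e1
    rw [inv_inv] at e2
    calc 1 / (n * (μ 0 * (1-s)^(n-1))) = (μ 0)⁻¹ * (((1-s)^(n-1))⁻¹ / n) := by field_simp
      _ ≤ _ := by gcongr
  · have hden : (μ 0 * (1-s)^(n-1))^2 = μ 0 ^ 2 * (((1-s)^2)^(n-2) * (1-s)^2) := by
      obtain ⟨m, rfl⟩ : ∃ m, n = m + 2 := ⟨n-2, by omega⟩
      simp only [Nat.add_sub_cancel, show m + 2 - 1 = m + 1 from rfl]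
      generalize 1 - s = u
      ring
    rw [hden, div_le_iff₀ (by positivity)]
    have r1 := ratio_pow hs2 hβ0 (n-2)
    have r2 := ratio_pow hs2 (mul_nonneg hα.1.le hs0) (n-2)
    have x1 : Real.exp (((1-s)^2)⁻¹ * (β * ((n-2:ℕ):ℝ))) ≤ Real.exp (((1-s)^2)⁻¹ * (β * n)) := by gcongr
    have x2 : Real.exp (((1-s)^2)⁻¹ * (α n * s * ((n-2:ℕ):ℝ))) ≤ Real.exp (((1-s)^2)⁻¹ * (α n * s * n)) := by
      have := hα.1
      gcongr
    calc μ 0 ^ 2 * ((1 - 2 * s + β)^(n-2) + pEdge (P n) (K n 0) (K n 0) * (1 - 2 * s + α n * s)^(n-2))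
        ≤ μ 0 ^ 2 * (((1-s)^2)^(n-2) * Real.exp (((1-s)^2)⁻¹ * (β * n))
          + pEdge (P n) (K n 0) (K n 0) * (((1-s)^2)^(n-2) * Real.exp (((1-s)^2)⁻¹ * (α n * s * n)))) := by
          gcongr
          · exact r1.trans (by gcongr)
          · exact r2.trans (by gcongr)
      _ = _ := by field_simp

end Scaling

theorem log_pow_exp {δ : ℝ} (hδ : 0 < δ) (k : ℕ) :
    Tendsto (fun n : ℕ => (Real.log n)^k * Real.exp (-(δ * Real.log n))) atTop (nhds 0) := by
  have h1 : Tendsto (fun n : ℕ => δ * Real.log n) atTop atTop :=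
    (Real.tendsto_log_atTop.comp tendsto_natCast_atTop_atTop).const_mul_atTop hδ
  have h2 := ((Real.tendsto_pow_mul_exp_neg_atTop_nhds_zero k).comp h1).const_mul ((δ^k)⁻¹)
  rw [mul_zero] at h2
  refine h2.congr fun n => ?_
  simp only [Function.comp_apply]
  rw [mul_pow]
  field_simp

namespace Scaling
variable {r : ℕ} {μ : Fin (r+1) → ℝ} {K : ℕ → Fin (r+1) → ℕ} {P : ℕ → ℕ} {α : ℕ → ℝ} {c : ℝ}

theorem lamb_nonneg (h : Scaling μ K P α c) (n : ℕ) : 0 ≤ lamb μ (K n) (P n) 0 :=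
  Finset.sum_nonneg fun j _ => mul_nonneg (h.hμpos j).le (pEdge_nonneg (h.KleP n 0) (h.KleP n j))

theorem lamb_le (h : Scaling μ K P α c) (n : ℕ) :
    α n * lamb μ (K n) (P n) 0 ≤ mload μ (K n) (P n) (α n) := by
  unfold lamb mload
  rw [Finset.mul_sum]
  refine Finset.sum_le_sum fun j _ => ?_
  have h1 := pEdge_le (h.KleP n 0) (h.KleP n j)
  have := (h.hα n).1
  have := (h.hμpos j)
  calc α n * (μ j * pEdge (P n) (K n 0) (K n j)) ≤ α n * (μ j * load (K n) (P n) j) := by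
        unfold load; gcongr
    _ = _ := by ring

theorem load_le (h : Scaling μ K P α c) (n : ℕ) (j : Fin (r+1)) :
    α n * load (K n) (P n) j ≤ mload μ (K n) (P n) (α n) / μ j := by
  rw [le_div_iff₀ (h.hμpos j), mul_comm]
  exact Finset.single_le_sum (f := fun j => μ j * (α n * load (K n) (P n) j))
    (fun i _ => mul_nonneg (h.hμpos i).le (mul_nonneg (h.hα n).1.le (load_nonneg _ _ _))) (Finset.mem_univ j)

theorem load_mono (h : Scaling μ K P α c) (n : ℕ) : Monotone (load (K n) (P n)) := by
  intro i j hij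
  unfold load
  have := h.hKmono n hij
  gcongr

theorem load_zero_le (h : Scaling μ K P α c) (n : ℕ) :
    α n * load (K n) (P n) 0 ≤ mload μ (K n) (P n) (α n) := by
  unfold mload
  rw [← one_mul (α n * load (K n) (P n) 0), ← h.hμsum, Finset.sum_mul]
  refine Finset.sum_le_sum fun j _ => ?_
  have := h.load_mono n (Fin.zero_le j)
  have := (h.hα n).1
  have := (h.hμpos j)
  gcongr

/-- For `c < 1` the mean number of isolated smallest-class nodes diverges, and each correction in
the second moment vanishes. -/
theorem zero_law_isolated (h : Scaling μ K P α c) (hc : c < 1) :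
    Tendsto (fun n => pr μ (K n) (α n) (fun cfg : Config n r (P n) => NoIsolatedNodes cfg))
          atTop (nhds 0) := by
  set s : ℕ → ℝ := fun n => α n * lamb μ (K n) (P n) 0 with hs
  set β : ℕ → ℝ := fun n => ∑ j, μ j * (α n * load (K n) (P n) j)^2 with hβ
  set a : ℕ → ℝ := fun n => mload μ (K n) (P n) (α n) with ha
  set u : ℕ → ℝ := fun n => ((1 - s n)^2)⁻¹ with hu
  have hs0 : ∀ n, 0 ≤ s n := fun n => mul_nonneg (h.hα n).1.le (h.lamb_nonneg n)
  have ha0 : ∀ n, 0 ≤ a n := fun n => h.mload_nonneg n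
  have hsa : ∀ n, s n ≤ a n := fun n => h.lamb_le n
  have hca : Tendsto (fun n : ℕ => n * a n / Real.log n) atTop (nhds c) := h.mload_tendsto
  have hlog : ∀ᶠ n : ℕ in atTop, 0 < Real.log n := by
    filter_upwards [eventually_ge_atTop 2] with n hn
    exact Real.log_pos (by exact_mod_cast (by omega : 1 < n))
  -- `a n = (n a n / log n) * (log n / n)` up to finitely many `n`
  have hat : Tendsto a atTop (nhds 0) := by
    have := hca.mul (log_pow_exp one_pos 1)
    rw [mul_zero] at this
    refine this.congr' ?_
    filter_upwards [hlog, eventually_ge_atTop 1] with n hl hn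
    have hn0 : (0:ℝ) < n := by exact_mod_cast hn
    rw [one_mul, Real.exp_neg, Real.exp_log hn0]
    field_simp
  have hna2 : Tendsto (fun n : ℕ => a n ^ 2 * n) atTop (nhds 0) := by
    have := (hca.pow 2).mul (log_pow_exp one_pos 2)
    rw [mul_zero] at this
    refine this.congr' ?_
    filter_upwards [hlog, eventually_ge_atTop 1] with n hl hn
    have hn0 : (0:ℝ) < n := by exact_mod_cast hn
    rw [one_mul, Real.exp_neg, Real.exp_log hn0]
    field_simp
  have hst : Tendsto s atTop (nhds 0) := squeeze_zero hs0 hsa hat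
  have hut : Tendsto u atTop (nhds 1) := by
    have : Tendsto (fun n => ((1 - s n)^2)⁻¹) atTop (nhds (((1 - 0)^2)⁻¹)) :=
      ((tendsto_const_nhds.sub hst).pow 2).inv₀ (by norm_num)
    simpa using this
  have hβt : Tendsto (fun n : ℕ => β n * n) atTop (nhds 0) := by
    have h1 := hna2.const_mul (∑ j, (μ j)⁻¹)
    rw [mul_zero] at h1
    refine squeeze_zero (fun n => mul_nonneg (Finset.sum_nonneg fun j _ =>
      mul_nonneg (h.hμpos j).le (sq_nonneg _)) (Nat.cast_nonneg n)) (fun n => ?_) h1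
    rw [← mul_assoc]
    refine mul_le_mul_of_nonneg_right ?_ (Nat.cast_nonneg n)
    rw [hβ, Finset.sum_mul]
    refine Finset.sum_le_sum fun j _ => ?_
    have h2 := h.load_le n j
    have h3 := h.hμpos j
    have h4 : 0 ≤ α n * load (K n) (P n) j := mul_nonneg (h.hα n).1.le (load_nonneg _ _ _)
    calc μ j * (α n * load (K n) (P n) j)^2 ≤ μ j * (a n / μ j)^2 := by gcongr
      _ = _ := by field_simp
  obtain ⟨c', hcc, hc1⟩ := exists_between hc
  have hus : ∀ᶠ n : ℕ in atTop, u n * (s n * n) ≤ c' * Real.log n := by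
    have h1 := hut.mul hca
    rw [one_mul] at h1
    filter_upwards [h1.eventually_le_const hcc, hlog] with n h2 hl
    have hu0 : 0 ≤ u n := by simp only [hu]; positivity
    rw [← mul_div_assoc, div_le_iff₀ hl] at h2
    refine le_trans ?_ h2
    have := hsa n
    calc u n * (s n * n) ≤ u n * (a n * n) := by gcongr
      _ = _ := by ring
  have hp : Tendsto (fun n : ℕ => pEdge (P n) (K n 0) (K n 0) * Real.exp (u n * (α n * s n * n)))
      atTop (nhds 0) := by
    have h1 := (h.pEdge_tendsto 0).add (hca.mul (log_pow_exp (sub_pos.2 hc1) 1))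
    rw [mul_zero, add_zero] at h1
    refine squeeze_zero' (Eventually.of_forall fun n => mul_nonneg
      (pEdge_nonneg (h.KleP n 0) (h.KleP n 0)) (Real.exp_pos _).le) ?_ h1
    filter_upwards [hus, hlog, eventually_ge_atTop 1] with n h2 hl hn
    have hn0 : (0:ℝ) < n := by exact_mod_cast hn
    have hα := h.hα n
    have hp0 := pEdge_nonneg (h.KleP n 0) (h.KleP n 0)
    have hp1 : α n * pEdge (P n) (K n 0) (K n 0) ≤ a n :=
      (mul_le_mul_of_nonneg_left (pEdge_le (h.KleP n 0) (h.KleP n 0)) hα.1.le).trans (h.load_zero_le n)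
    -- convexity of `exp` between `0` and `c' log n`
    have hconv : Real.exp (α n * (c' * Real.log n)) ≤ 1 + α n * Real.exp (c' * Real.log n) := by
      have := convexOn_exp.2 (Set.mem_univ 0) (Set.mem_univ (c' * Real.log n))
        (by linarith [hα.2] : 0 ≤ 1 - α n) hα.1.le (by ring)
      simp only [smul_eq_mul, mul_zero, zero_add, Real.exp_zero, mul_one] at this
      linarith [hα.1]
    have h3 : Real.exp (u n * (α n * s n * n)) ≤ Real.exp (α n * (c' * Real.log n)) := by
      apply Real.exp_le_exp.2
      calc u n * (α n * s n * n) = α n * (u n * (s n * n)) := by ring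
        _ ≤ _ := by have := hα.1; gcongr
    calc _ ≤ pEdge (P n) (K n 0) (K n 0) * (1 + α n * Real.exp (c' * Real.log n)) := by
          exact mul_le_mul_of_nonneg_left (h3.trans hconv) hp0
      _ = pEdge (P n) (K n 0) (K n 0) + (α n * pEdge (P n) (K n 0) (K n 0)) * Real.exp (c' * Real.log n) := by ring
      _ ≤ pEdge (P n) (K n 0) (K n 0) + a n * Real.exp (c' * Real.log n) := by gcongr
      _ = _ := by
          have : Real.exp (-((1-c') * Real.log n)) = Real.exp (c' * Real.log n) / n := by
            rw [show -((1-c') * Real.log n) = c' * Real.log n - Real.log n by ring, Real.exp_sub, Real.exp_log hn0]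
          rw [this]
          field_simp
  have h1 : Tendsto (fun n : ℕ => (μ 0)⁻¹ * Real.exp (u n * (s n * n) - Real.log n)) atTop (nhds 0) := by
    have := (rpow_tendsto_zero (sub_pos.2 hc1)).const_mul (μ 0)⁻¹
    rw [mul_zero] at this
    have hμ0 := h.hμpos 0
    refine squeeze_zero' (Eventually.of_forall fun n => by positivity) ?_ this
    filter_upwards [hus] with n h2
    gcongr
    linarith
  have h2 : Tendsto (fun n : ℕ => u n * (Real.exp (u n * (β n * n))
      + pEdge (P n) (K n 0) (K n 0) * Real.exp (u n * (α n * s n * n))) - 1) atTop (nhds 0) := by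
    have e1 : Tendsto (fun n : ℕ => Real.exp (u n * (β n * n))) atTop (nhds 1) := by
      have := (Real.continuous_exp.tendsto _).comp (hut.mul hβt)
      rw [mul_zero, Real.exp_zero] at this
      exact this
    have := (hut.mul (e1.add hp)).sub_const 1
    simpa using this
  have h3 := h1.add h2
  rw [add_zero] at h3
  refine squeeze_zero' (Eventually.of_forall fun n => pr_nonneg (fun i => (h.hμpos i).le) _
      (h.hα n).1.le (h.hα n).2.le _) ?_ h3
  filter_upwards [hst.eventually_le_const (by norm_num : (0:ℝ) < 1/2), eventually_ge_atTop 2] with n hs2 hn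
  exact h.noIsolated_le hn rfl (hs0 n) hs2 rfl

end Scaling

/-! ### Simplifying the cut bound -/

theorem Qbound_nonneg {r P ℓ : ℕ} {μ : Fin (r+1) → ℝ} (hμ : ∀ i, 0 ≤ μ i) (hμ1 : ∑ i, μ i = 1)
    (K : Fin (r+1) → ℕ) {α M δ : ℝ} (h0 : 0 ≤ α) (hM : 0 ≤ M) (hδ : 0 ≤ δ) :
    0 ≤ Qbound μ K P α ℓ δ M := by
  unfold Qbound
  rw [sub_nonneg, ← hμ1]
  refine Finset.sum_le_sum fun j _ => mul_le_of_le_one_right (hμ j) ?_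
  have h1 : 0 ≤ α * (ℓ * K 0) * ((K j : ℝ) / P) := by positivity
  have h2 : (0:ℝ) ≤ K 0 * ((K j : ℝ) / P) := by positivity
  have h3 : 0 ≤ α * M := by positivity
  rw [div_le_one (by linarith)]
  nlinarith

/-- With the load threshold `M = A ℓ K₁ / P` the terms `α M` and `K₁ K_j / P` in the denominators
of `Qbound` are absorbed into a factor `1 + δ`. -/
theorem Qbound_le {r P ℓ : ℕ} {μ : Fin (r+1) → ℝ} (hμ : ∀ i, 0 ≤ μ i)
    (K : Fin (r+1) → ℕ) (hK : Monotone K) {α δ A : ℝ} (h0 : 0 ≤ α) (hδ0 : 0 < δ)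
    (hδ1 : δ ≤ 1) (hA : 0 ≤ A) (hKA : A ≤ δ * K 0) (hload : ∀ j, load K P j ≤ δ) :
    Qbound μ K P α ℓ δ (A * (ℓ * K 0 / P))
      ≤ 1 - (1-δ)/(1+δ) * ∑ j, μ j * (ℓ * (α * load K P j) / (1 + ℓ * (α * load K P j))) := by
  unfold Qbound
  rw [Finset.mul_sum]
  apply sub_le_sub_left
  refine Finset.sum_le_sum fun j _ => ?_
  have e1 : α * (ℓ * K 0) * ((K j : ℝ) / P) = ℓ * (α * load K P j) := by unfold load; ring
  have e2 : (K 0 : ℝ) * ((K j : ℝ) / P) = load K P j := rfl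
  have hl := load_nonneg K P j
  have hm : 0 ≤ ℓ * (α * load K P j) := by positivity
  have e3 : α * (A * (ℓ * K 0 / P)) ≤ δ * (ℓ * (α * load K P j)) := by
    have : (K 0 : ℝ) ≤ K j := by exact_mod_cast hK (Fin.zero_le j)
    calc α * (A * (ℓ * K 0 / P)) ≤ α * ((δ * K j) * (ℓ * K 0 / P)) := by
          gcongr
          exact hKA.trans (by gcongr)
      _ = _ := by unfold load; ring
  have e4 : 0 ≤ α * (A * (ℓ * K 0 / P)) := by positivity
  rw [e1, e2]
  set m := ℓ * (α * load K P j)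
  have hd : m + (1 + α * (A * (ℓ * K 0 / P)) + load K P j) ≤ (1+δ) * (1 + m) := by
    have := hload j
    linarith
  have : (1-δ)/(1+δ) * (m / (1+m)) ≤ (1-δ) * m / (m + (1 + α * (A * (ℓ * K 0 / P)) + load K P j)) := by
    rw [div_mul_div_comm]
    apply div_le_div_of_nonneg_left _ (by linarith) hd
    exact mul_nonneg (by linarith) hm
  calc _ = μ j * ((1-δ)/(1+δ) * (m / (1+m))) := by ring
    _ ≤ _ := mul_le_mul_of_nonneg_left this (hμ j)

/-- Of the exponent `δ k`, a part at least `1` yields the factor `x`, and the remaining part, with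
`ζ ≤ exp (-4/δ)`, yields `exp (-2k)`. -/
theorem bad_term_le {k δ x ζ : ℝ} (hδ : 0 < δ) (hk : 1 ≤ δ * k / 2) (hζ0 : 0 < ζ)
    (hζ1 : ζ ≤ x) (hζ2 : ζ ≤ (Real.exp (4/δ))⁻¹) :
    Real.exp k * ζ ^ (δ * k) ≤ Real.exp (-k) * x := by
  have hζ3 : ζ ≤ 1 := hζ2.trans (inv_le_one_of_one_le₀ (Real.one_le_exp (by positivity)))
  have e1 : ζ ^ (δ * k) = ζ ^ (δ*k/2) * ζ ^ (δ*k/2) := by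
    rw [← Real.rpow_add hζ0]; congr 1; ring
  have e2 : ζ ^ (δ*k/2) ≤ x := by
    refine le_trans ?_ hζ1
    have := Real.rpow_le_rpow_of_exponent_ge hζ0 hζ3 hk
    rwa [Real.rpow_one] at this
  have e3 : ζ ^ (δ*k/2) ≤ Real.exp (-(2*k)) := by
    refine (Real.rpow_le_rpow hζ0.le hζ2 (by linarith)).trans (le_of_eq ?_)
    rw [← Real.exp_neg, ← Real.exp_mul]
    congr 1
    field_simp
    ring
  have h0 : 0 ≤ ζ ^ (δ*k/2) := Real.rpow_nonneg hζ0.le _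
  rw [e1]
  calc Real.exp k * (ζ ^ (δ*k/2) * ζ ^ (δ*k/2)) ≤ Real.exp k * (Real.exp (-(2*k)) * x) := by gcongr
    _ = _ := by rw [← mul_assoc, ← Real.exp_add]; congr 2; ring

theorem choose_le_exp_pow {n ℓ : ℕ} (hℓ : 0 < ℓ) :
    (n.choose ℓ : ℝ) ≤ (Real.exp 1 * (n / ℓ)) ^ ℓ := by
  have h1 := Nat.choose_le_pow_div (α := ℝ) ℓ n
  have h2 := Real.pow_div_factorial_le_exp (ℓ : ℝ) (by positivity) ℓ
  have hl : (0:ℝ) < ℓ := by exact_mod_cast hℓ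
  have hf : (0:ℝ) < ℓ.factorial := by exact_mod_cast Nat.factorial_pos ℓ
  refine h1.trans ?_
  rw [mul_pow, ← Real.exp_nat_mul, mul_one, div_pow]
  calc (n:ℝ)^ℓ / ℓ.factorial = ((ℓ:ℝ)^ℓ / ℓ.factorial) * ((n:ℝ)^ℓ / (ℓ:ℝ)^ℓ) := by field_simp
    _ ≤ _ := by gcongr

theorem sum_geom_le {x : ℝ} (hx0 : 0 ≤ x) (hx : x ≤ 1/2) (n : ℕ) :
    ∑ ℓ ∈ (Finset.range (n+1)).filter (fun ℓ => 1 ≤ ℓ ∧ 2 * ℓ ≤ n), x ^ ℓ ≤ 2 * x := by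
  have h1 : ∑ ℓ ∈ (Finset.range (n+1)).filter (fun ℓ => 1 ≤ ℓ ∧ 2 * ℓ ≤ n), x ^ ℓ
      ≤ ∑ ℓ ∈ Finset.Ico 1 (n+1), x ^ ℓ := by
    refine Finset.sum_le_sum_of_subset_of_nonneg ?_ (fun _ _ _ => by positivity)
    intro ℓ
    simp only [Finset.mem_filter, Finset.mem_range, Finset.mem_Ico]
    omega
  refine h1.trans ?_
  rw [Finset.sum_Ico_eq_sum_range]
  simp only [Nat.add_sub_cancel, pow_add, pow_one]
  rw [← Finset.mul_sum]
  have h2 : ∑ i ∈ Finset.range n, x^i ≤ 2 := by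
    have := geom_sum_mul_neg x n
    have h3 : 0 ≤ x^n := by positivity
    have h4 : 0 ≤ ∑ i ∈ Finset.range n, x^i := Finset.sum_nonneg fun i _ => by positivity
    nlinarith
  nlinarith

/-! ### The cut bound in three ranges of the cut size -/

/-- The simplified bound for `qmiss`, in terms of the mean numbers `ℓ α load_j` of keys shared with
`ℓ` smallest rings over open channels. -/
noncomputable def Qt {r : ℕ} (μ : Fin (r+1) → ℝ) (K : Fin (r+1) → ℕ) (P : ℕ) (α δ : ℝ) (ℓ : ℕ) : ℝ :=
  1 - (1-δ)/(1+δ) * ∑ j, μ j * (ℓ * (α * load K P j) / (1 + ℓ * (α * load K P j)))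

theorem Qt_nonneg {r P ℓ : ℕ} {μ : Fin (r+1) → ℝ} (hμ : ∀ i, 0 ≤ μ i) (hμ1 : ∑ i, μ i = 1)
    (K : Fin (r+1) → ℕ) {α δ : ℝ} (h0 : 0 ≤ α) (hδ : 0 ≤ δ) :
    0 ≤ Qt μ K P α δ ℓ := by
  unfold Qt
  have h1 : (1-δ)/(1+δ) ≤ 1 := by rw [div_le_one (by linarith)]; linarith
  have h2 : ∑ j, μ j * (ℓ * (α * load K P j) / (1 + ℓ * (α * load K P j))) ≤ 1 := by
    rw [← hμ1]
    refine Finset.sum_le_sum fun j _ => mul_le_of_le_one_right (hμ j) ?_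
    have hl := load_nonneg K P j
    have hm : 0 ≤ ℓ * (α * load K P j) := by positivity
    rw [div_le_one (by linarith)]
    linarith
  have h3 : 0 ≤ ∑ j, μ j * (ℓ * (α * load K P j) / (1 + ℓ * (α * load K P j))) := by
    refine Finset.sum_nonneg fun j _ => ?_
    have hl := load_nonneg K P j
    have := hμ j
    positivity
  have := mul_le_one₀ h1 h3 h2
  linarith

theorem Qt_le_small {r P ℓ : ℕ} {μ : Fin (r+1) → ℝ} (hμ : ∀ i, 0 ≤ μ i)
    (K : Fin (r+1) → ℕ) {α δ ρ : ℝ} (h0 : 0 ≤ α) (hδ : 0 < δ) (hδρ : δ ≤ (1-ρ)/3) (hρ : 0 < ρ)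
    (hm : ∀ j, ℓ * (α * load K P j) ≤ δ) :
    Qt μ K P α δ ℓ ≤ Real.exp (-(ρ * (ℓ * mload μ K P α))) := by
  have hg : ρ ≤ (1-δ)/(1+δ) * (1+δ)⁻¹ := by
    rw [← div_eq_mul_inv, div_div, le_div_iff₀ (by positivity)]
    nlinarith [mul_pos hδ hδ, mul_pos (mul_pos hδ hδ) hδ]
  have h2 : ∑ j, μ j * (ℓ * (α * load K P j) / (1 + ℓ * (α * load K P j)))
      ≥ (1+δ)⁻¹ * (ℓ * mload μ K P α) := by
    unfold mload
    rw [Finset.mul_sum, Finset.mul_sum]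
    refine Finset.sum_le_sum fun j _ => ?_
    have hl := load_nonneg K P j
    have hm0 : 0 ≤ ℓ * (α * load K P j) := by positivity
    have : (1+δ)⁻¹ * (ℓ * (α * load K P j)) ≤ ℓ * (α * load K P j) / (1 + ℓ * (α * load K P j)) := by
      rw [inv_mul_eq_div]
      exact div_le_div_of_nonneg_left hm0 (by linarith) (by linarith [hm j])
    calc _ = μ j * ((1+δ)⁻¹ * (ℓ * (α * load K P j))) := by ring
      _ ≤ _ := mul_le_mul_of_nonneg_left this (hμ j)
  have ha : 0 ≤ ℓ * mload μ K P α := by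
    refine mul_nonneg (by positivity) (Finset.sum_nonneg fun j _ => ?_)
    have := load_nonneg K P j
    have := hμ j
    positivity
  have hgp : 0 ≤ (1-δ)/(1+δ) := div_nonneg (by linarith) (by linarith)
  unfold Qt
  calc _ ≤ 1 - ρ * (ℓ * mload μ K P α) := by
        have h3 := mul_le_mul_of_nonneg_left h2 hgp
        have h4 := mul_le_mul_of_nonneg_right hg ha
        linarith
    _ ≤ _ := by linarith [Real.add_one_le_exp (-(ρ * (ℓ * mload μ K P α)))]

theorem frac_mono {v m : ℝ} (hv : 0 ≤ v) (h : v ≤ m) : v/(1+v) ≤ m/(1+m) := by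
  rw [div_le_div_iff₀ (by linarith) (by linarith)]; nlinarith

theorem Qt_le_mid {r P ℓ : ℕ} {μ : Fin (r+1) → ℝ} (hμ : ∀ i, 0 ≤ μ i)
    (K : Fin (r+1) → ℕ) {α δ v : ℝ} (h0 : 0 ≤ α) (hδ : 0 < δ) (hδ1 : δ ≤ 1) (hv : 0 ≤ v)
    (j : Fin (r+1)) (hm : v ≤ ℓ * (α * load K P j)) :
    Qt μ K P α δ ℓ ≤ Real.exp (-((1-δ)/(1+δ) * (μ j * (v/(1+v))))) := by
  have h2 : μ j * (v/(1+v)) ≤ ∑ j, μ j * (ℓ * (α * load K P j) / (1 + ℓ * (α * load K P j))) := by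
    refine le_trans (mul_le_mul_of_nonneg_left (frac_mono hv hm) (hμ j)) ?_
    refine Finset.single_le_sum (f := fun j => μ j * (ℓ * (α * load K P j) / (1 + ℓ * (α * load K P j))))
      (fun i _ => ?_) (Finset.mem_univ j)
    have := load_nonneg K P i
    have := hμ i
    positivity
  have hgp : 0 ≤ (1-δ)/(1+δ) := div_nonneg (by linarith) (by linarith)
  unfold Qt
  have h3 := mul_le_mul_of_nonneg_left h2 hgp
  linarith [Real.add_one_le_exp (-((1-δ)/(1+δ) * (μ j * (v/(1+v)))))]

theorem Qt_le_large {r P ℓ : ℕ} {μ : Fin (r+1) → ℝ} (hμ : ∀ i, 0 ≤ μ i) (hμ1 : ∑ i, μ i = 1)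
    (K : Fin (r+1) → ℕ) {α δ : ℝ} (hδ : 0 < δ) (hδ1 : δ ≤ 1)
    (hm : ∀ j, δ⁻¹ ≤ ℓ * (α * load K P j)) :
    Qt μ K P α δ ℓ ≤ 3 * δ := by
  have h2 : 1 - δ ≤ ∑ j, μ j * (ℓ * (α * load K P j) / (1 + ℓ * (α * load K P j))) := by
    have e : 1 - δ = ∑ j, μ j * (1 - δ) := by rw [← Finset.sum_mul, hμ1, one_mul]
    rw [e]
    refine Finset.sum_le_sum fun j _ => ?_
    refine mul_le_mul_of_nonneg_left (le_trans ?_ (frac_mono (by positivity) (hm j))) (hμ j)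
    rw [le_div_iff₀ (by positivity)]
    have : δ * δ⁻¹ = 1 := mul_inv_cancel₀ hδ.ne'
    nlinarith
  have hgp : 0 ≤ (1-δ)/(1+δ) := div_nonneg (by linarith) (by linarith)
  have hg : 1 - 3*δ ≤ (1-δ)/(1+δ) * (1-δ) := by
    rw [div_mul_eq_mul_div, le_div_iff₀ (by linarith)]
    nlinarith
  unfold Qt
  have h3 := mul_le_mul_of_nonneg_left h2 hgp
  linarith

/-- Entropy bound: sets of size at most `η n` number at most `exp (θ n)` per size, for small `η`. -/
theorem choose_small {θ : ℝ} (hθ : 0 < θ) : ∃ η : ℝ, 0 < η ∧ ∀ n ℓ : ℕ, 0 < ℓ → (ℓ : ℝ) ≤ η * n →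
    (n.choose ℓ : ℝ) ≤ Real.exp (θ * n) := by
  have hc : Continuous fun x : ℝ => x + Real.negMulLog x := continuous_id.add Real.continuous_negMulLog
  have h0 : Tendsto (fun x : ℝ => x + Real.negMulLog x) (nhds 0) (nhds 0) := by
    simpa using hc.tendsto 0
  obtain ⟨η, hη, hη2⟩ := Metric.eventually_nhds_iff.1 (h0.eventually_lt_const hθ)
  refine ⟨η/2, by positivity, fun n ℓ hℓ hle => ?_⟩
  have hl : (0:ℝ) < ℓ := by exact_mod_cast hℓ
  have hn : (0:ℝ) < n := by
    by_contra hh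
    have : (n:ℝ) = 0 := le_antisymm (not_lt.1 hh) (by positivity)
    rw [this] at hle
    linarith
  have hx : 0 < (ℓ:ℝ)/n := by positivity
  have hx2 : (ℓ:ℝ)/n ≤ η/2 := by rwa [div_le_iff₀ hn]
  have key := hη2 (y := (ℓ:ℝ)/n) (by rw [Real.dist_eq, sub_zero, abs_of_pos hx]; linarith)
  refine (choose_le_exp_pow hℓ).trans ?_
  have e : Real.exp 1 * ((n:ℝ)/ℓ) = Real.exp (1 - Real.log ((ℓ:ℝ)/n)) := by
    rw [Real.exp_sub, Real.exp_log hx]; field_simp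
  rw [e, ← Real.exp_nat_mul]
  apply Real.exp_le_exp.2
  have e2 : (ℓ:ℝ) * (1 - Real.log ((ℓ:ℝ)/n)) = ((ℓ:ℝ)/n + Real.negMulLog ((ℓ:ℝ)/n)) * n := by
    unfold Real.negMulLog; field_simp; ring
  rw [e2]
  exact mul_le_mul_of_nonneg_right key.le hn.le

/-! ### Summands of the union bound -/

namespace Scaling
variable {r : ℕ} {μ : Fin (r+1) → ℝ} {K : ℕ → Fin (r+1) → ℕ} {P : ℕ → ℕ} {α : ℕ → ℝ} {c : ℝ}

theorem mload_le_last (h : Scaling μ K P α c) (n : ℕ) :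
    mload μ (K n) (P n) (α n) ≤ α n * load (K n) (P n) (Fin.last r) := by
  have e : α n * load (K n) (P n) (Fin.last r)
      = ∑ j, μ j * (α n * load (K n) (P n) (Fin.last r)) := by
    rw [← Finset.sum_mul, h.hμsum, one_mul]
  rw [e]
  unfold mload
  refine Finset.sum_le_sum fun j _ => ?_
  have h1 := h.load_mono n (Fin.le_last j)
  have h2 := (h.hα n).1
  have h3 := h.hμpos j
  gcongr

/-- The probability that no edge leaves `S`: the first summand accounts for smallest rings with
too many overloaded keys, the second for all others. -/
theorem noCross_le (h : Scaling μ K P α c) (n : ℕ) {δ : ℝ} (hδ0 : 0 < δ) (hδ1 : δ ≤ 1)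
    (hKA : Real.exp (4/δ) ≤ δ * K n 0) (hK2 : 1 ≤ δ * K n 0 / 2)
    (hload : ∀ j, load (K n) (P n) j ≤ δ) (S : Finset (Fin n)) (hS : S.Nonempty) :
    pr μ (K n) (α n) (fun cfg : Config n r (P n) => NoCross S cfg)
      ≤ (Real.exp (-(K n 0 : ℝ)) * (S.card * K n 0 / P n)) ^ S.card
        + Qt μ (K n) (P n) (α n) δ S.card ^ (n - S.card) := by
  have hα := h.hα n
  have hμ : ∀ i, 0 ≤ μ i := fun i => (h.hμpos i).le
  have hP : (0:ℝ) < P n := by exact_mod_cast h.Ppos n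
  have hK : (0:ℝ) < K n 0 := by exact_mod_cast h.hK1 n
  have hl : (0:ℝ) < S.card := by exact_mod_cast hS.card_pos
  refine (pr_noCross_le hμ (K n) hα.1.le hα.2.le h.hμsum (h.hKmono n) (h.KleP n) S).trans ?_
  set ℓ := S.card
  -- The load threshold is `M = A x`, and at most a proportion `ζ = min x A⁻¹` of the keys is heavy:
  -- `ζ = x` suffices because heavy keys have load at least one, `ζ = A⁻¹` because it exceeds `A x`.
  set A := Real.exp (4/δ) with hA
  have hA0 : 0 < A := Real.exp_pos _
  set x : ℝ := ℓ * K n 0 / P n with hx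
  have hx0 : 0 < x := by positivity
  have hζ0 : 0 < min x A⁻¹ := lt_min hx0 (inv_pos.2 hA0)
  have hζ1 : min x A⁻¹ ≤ 1 :=
    (min_le_right _ _).trans (inv_le_one_of_one_le₀ (Real.one_le_exp (by positivity)))
  have hxP : (ℓ:ℝ) * K n 0 = x * P n := by rw [hx]; field_simp
  have hζ : (ℓ:ℝ) * K n 0 ≤ min x A⁻¹ * P n * max 1 (A * x) := by
    rw [hxP]
    rcases le_total x A⁻¹ with hh | hh
    · rw [min_eq_left hh]
      exact le_mul_of_one_le_right (mul_nonneg hx0.le hP.le) (le_max_left _ _)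
    · rw [min_eq_right hh]
      calc x * P n = A⁻¹ * P n * (A * x) := by field_simp
        _ ≤ _ := mul_le_mul_of_nonneg_left (le_max_right _ _)
            (mul_nonneg (inv_pos.2 hA0).le hP.le)
  refine (ring_bound hμ h.hμsum (K n) (h.KleP n) (h.Ppos n) hα.1.le hα.2.le (A * x) (min x A⁻¹) δ
    (mul_pos hA0 hx0).le hδ0.le hδ1 hζ0 hζ1 hζ (n - ℓ)).trans ?_
  have b := bad_term_le hδ0 hK2 hζ0 (min_le_left _ _) (min_le_right _ _)
  have hζp : 0 ≤ min x A⁻¹ ^ (δ * K n 0) := Real.rpow_nonneg hζ0.le _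
  refine add_le_add (pow_le_pow_left₀ (mul_nonneg (Real.exp_pos _).le hζp) b _) ?_
  exact pow_le_pow_left₀ (Qbound_nonneg hμ h.hμsum (K n) hα.1.le (mul_pos hA0 hx0).le hδ0.le)
    (Qbound_le hμ (K n) (h.hKmono n) hα.1.le hδ0 hδ1 hA0.le hKA hload) _

/-- From `n α p₁₁ ≤ n K₁² / P ≤ K₁² / σ`, the smallest ring size diverges. -/
theorem K_tendsto (h : Scaling μ K P α c) {σ : ℝ} (hσ : 0 < σ) (hPσ : ∀ n : ℕ, σ * n ≤ (P n : ℝ))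
    (hp : Tendsto (fun n : ℕ => (n : ℝ) * α n * pEdge (P n) (K n 0) (K n 0)) atTop atTop) :
    Tendsto (fun n => (K n 0 : ℝ)) atTop atTop := by
  have h1 : ∀ n : ℕ, (n : ℝ) * α n * pEdge (P n) (K n 0) (K n 0) * σ ≤ (K n 0 : ℝ)^2 := by
    intro n
    have hα := h.hα n
    have hP : (0:ℝ) < P n := by exact_mod_cast h.Ppos n
    have hpe := pEdge_le (h.KleP n 0) (h.KleP n 0)
    have hpn := pEdge_nonneg (h.KleP n 0) (h.KleP n 0)
    calc (n : ℝ) * α n * pEdge (P n) (K n 0) (K n 0) * σ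
        ≤ (n : ℝ) * 1 * ((K n 0 : ℝ) * (K n 0 / P n)) * σ := by
          gcongr
          exact hα.2.le
      _ = (σ * n) * ((K n 0 : ℝ) * (K n 0 / P n)) := by ring
      _ ≤ P n * ((K n 0 : ℝ) * (K n 0 / P n)) := by gcongr; exact hPσ n
      _ = _ := by field_simp
  have h2 : Tendsto (fun n => (K n 0 : ℝ)^2) atTop atTop :=
    tendsto_atTop_mono h1 (hp.atTop_mul_const hσ)
  refine tendsto_atTop_mono' _ (Eventually.of_forall fun n => ?_)
    ((Real.tendsto_sqrt_atTop).comp h2)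
  simp [Real.sqrt_sq]

end Scaling

theorem sum_choose_le (n : ℕ) :
    ∑ ℓ ∈ (Finset.range (n+1)).filter (fun ℓ => 1 ≤ ℓ ∧ 2 * ℓ ≤ n), (n.choose ℓ : ℝ) ≤ 2^n := by
  refine (Finset.sum_le_sum_of_subset_of_nonneg (Finset.filter_subset _ _)
    (fun _ _ _ => by positivity)).trans (le_of_eq ?_)
  exact_mod_cast Nat.sum_range_choose n

/-- While `Q` is exponentially small in `ℓ a`, with `n a` at least about `c log n`, the summand is
essentially that of `ℓ` independent isolated nodes. -/
theorem term_small {n ℓ : ℕ} (hn : 0 < n) {Q a ρ c : ℝ} (hQ0 : 0 ≤ Q) (hρ : 0 < ρ)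
    (hQ : Q ≤ Real.exp (-(ρ * (ℓ * a)))) (hℓn : ℓ ≤ n) (hℓ : (ℓ:ℝ) ≤ (1-ρ) * n) (ha0 : 0 ≤ a)
    (ha : c * ρ * Real.log n ≤ n * a) :
    (n.choose ℓ : ℝ) * Q ^ (n - ℓ) ≤ (Real.exp (-((c * ρ^3 - 1) * Real.log n))) ^ ℓ := by
  have hn0 : (0:ℝ) < n := by exact_mod_cast hn
  have h1 : (n.choose ℓ : ℝ) ≤ (n:ℝ)^ℓ := by exact_mod_cast Nat.choose_le_pow n ℓ
  have h2 : Q ^ (n-ℓ) ≤ Real.exp (-(ρ * (ℓ * a))) ^ (n-ℓ) := pow_le_pow_left₀ hQ0 hQ _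
  have h3 : (n:ℝ)^ℓ = Real.exp (ℓ * Real.log n) := by rw [Real.exp_nat_mul, Real.exp_log hn0]
  calc _ ≤ (n:ℝ)^ℓ * Real.exp (-(ρ * (ℓ * a))) ^ (n-ℓ) := by gcongr
    _ = Real.exp (ℓ * Real.log n + (n - ℓ) * (-(ρ * (ℓ * a)))) := by
      rw [h3, ← Real.exp_nat_mul, Nat.cast_sub hℓn, Real.exp_add]
    _ ≤ Real.exp (ℓ * (-((c * ρ^3 - 1) * Real.log n))) := by
      apply Real.exp_le_exp.2
      have h4 : ρ * n ≤ n - ℓ := by linarith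
      have h5 : (ρ * n) * (ρ * (ℓ * a)) ≤ (n - ℓ) * (ρ * (ℓ * a)) :=
        mul_le_mul_of_nonneg_right h4 (by positivity)
      have h6 : (ρ^2 * ℓ) * (c * ρ * Real.log n) ≤ (ρ^2 * ℓ) * (n * a) :=
        mul_le_mul_of_nonneg_left ha (by positivity)
      nlinarith
    _ = _ := by rw [Real.exp_nat_mul]

theorem term_mid {n ℓ : ℕ} {Q θ : ℝ} (hQ0 : 0 ≤ Q) (hθ : 0 ≤ θ)
    (hQ : Q ≤ Real.exp (-θ)) (hℓn : 2 * ℓ ≤ n)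
    (hc : (n.choose ℓ : ℝ) ≤ Real.exp (θ/4 * n)) :
    (n.choose ℓ : ℝ) * Q ^ (n - ℓ) ≤ Real.exp (-(θ/4 * n)) := by
  have h2 : Q ^ (n-ℓ) ≤ Real.exp (-θ) ^ (n-ℓ) := pow_le_pow_left₀ hQ0 hQ _
  have h4 : (2:ℝ) * ℓ ≤ n := by exact_mod_cast hℓn
  calc _ ≤ Real.exp (θ/4 * n) * Real.exp (-θ) ^ (n-ℓ) := by gcongr
    _ = Real.exp (θ/4 * n + (n - ℓ) * (-θ)) := by
      rw [← Real.exp_nat_mul, Nat.cast_sub (by omega), Real.exp_add]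
    _ ≤ _ := by
      apply Real.exp_le_exp.2
      nlinarith

theorem term_large {n ℓ : ℕ} {Q : ℝ} (hQ0 : 0 ≤ Q) (hQ : Q ≤ 1/16) (hℓn : 2 * ℓ ≤ n) :
    (n.choose ℓ : ℝ) * Q ^ (n - ℓ) ≤ (n.choose ℓ : ℝ) * (1/4)^n := by
  have h2 : Q ^ (n-ℓ) ≤ (1/16) ^ (n-ℓ) := pow_le_pow_left₀ hQ0 hQ _
  have h3 : (1/16:ℝ) ^ (n-ℓ) ≤ (1/4)^n := by
    have : (1/16:ℝ) = (1/4)^2 := by norm_num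
    rw [this, ← pow_mul]
    exact pow_le_pow_of_le_one (by norm_num) (by norm_num) (by omega)
  exact mul_le_mul_of_nonneg_left (h2.trans h3) (by positivity)

theorem term_bad {n ℓ : ℕ} (hn : 0 < n) (hℓ : 0 < ℓ) {k P σ : ℝ} (hk : 0 ≤ k) (hσ : 0 < σ)
    (hP : σ * n ≤ P) :
    (n.choose ℓ : ℝ) * (Real.exp (-k) * (ℓ * k / P)) ^ ℓ
      ≤ (Real.exp 1 * (k * Real.exp (-k) / σ)) ^ ℓ := by
  have hn0 : (0:ℝ) < n := by exact_mod_cast hn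
  have hl : (0:ℝ) < ℓ := by exact_mod_cast hℓ
  have hP0 : 0 < P := lt_of_lt_of_le (by positivity) hP
  have h1 := choose_le_exp_pow (n := n) hℓ
  calc _ ≤ (Real.exp 1 * (n / ℓ)) ^ ℓ * (Real.exp (-k) * (ℓ * k / (σ * n))) ^ ℓ := by gcongr
    _ = _ := by
      rw [← mul_pow]
      congr 1
      field_simp

/-! ### Connectivity -/

namespace Scaling
variable {r : ℕ} {μ : Fin (r+1) → ℝ} {K : ℕ → Fin (r+1) → ℕ} {P : ℕ → ℕ} {α : ℕ → ℝ} {c : ℝ}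

/-- The sum over cut sizes `ℓ ≤ n / 2` of the bound `noCross_le` tends to `0` when `c > 1`. -/
theorem one_law_connected (h : Scaling μ K P α c) (hc : 1 < c) {σ : ℝ} (hσ : 0 < σ)
    (hPσ : ∀ n : ℕ, σ * n ≤ (P n : ℝ))
    (hp : Tendsto (fun n : ℕ => (n : ℝ) * α n * pEdge (P n) (K n 0) (K n 0)) atTop atTop) :
    Tendsto (fun n => pr μ (K n) (α n) (fun cfg : Config n r (P n) => (graphOf cfg).Connected))
      atTop (nhds 1) := by
  obtain ⟨ρ, hρ0, hρ1, hρc⟩ := exists_rho hc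
  have hc0 := h.hcpos
  have hμ : ∀ i, 0 ≤ μ i := fun i => (h.hμpos i).le
  have hγ : 0 < c * ρ^3 - 1 := by
    have : ρ^4 ≤ ρ^3 := pow_le_pow_of_le_one hρ0.le hρ1.le (by norm_num)
    have : c * ρ^4 ≤ c * ρ^3 := by gcongr
    linarith
  -- `δ ≤ 1/48` gives `3 δ ≤ 1/16` for large cuts; `δ ≤ (1-ρ)/3` costs at most a factor `ρ` in the
  -- exponent for small cuts.
  obtain ⟨δ, hδ0, hδ48, hδρ⟩ : ∃ δ : ℝ, 0 < δ ∧ δ ≤ 1/48 ∧ δ ≤ (1-ρ)/3 :=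
    ⟨min (1/48) ((1-ρ)/3), lt_min (by norm_num) (by linarith), min_le_left _ _, min_le_right _ _⟩
  have hδ1 : δ ≤ 1 := by linarith
  obtain ⟨m, hm0, hm⟩ : ∃ m : ℝ, 0 < m ∧ ∀ j, m ≤ μ j := by
    obtain ⟨i, hi⟩ := Finite.exists_min μ
    exact ⟨μ i, h.hμpos i, hi⟩
  -- `ε` makes `ℓ α load_j ≤ δ` as long as `ℓ log n ≤ ε n`.
  obtain ⟨ε, hε0, hε⟩ : ∃ ε : ℝ, 0 < ε ∧ ε * (2 * c) = δ * m :=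
    ⟨δ * m / (2 * c), by positivity, by field_simp⟩
  obtain ⟨v, hv⟩ : ∃ v : ℝ, v = ε * (c * ρ) := ⟨_, rfl⟩
  have hv0 : 0 < v := by rw [hv]; positivity
  -- For `ℓ log n ≥ ε n`, the largest class alone brings the bound down to `exp (-θ)`.
  obtain ⟨θ, hθ⟩ : ∃ θ : ℝ, θ = (1-δ)/(1+δ) * (μ (Fin.last r) * (v/(1+v))) := ⟨_, rfl⟩
  have hθ0 : 0 < θ := by
    have h1 : 0 < (1-δ)/(1+δ) := div_pos (by linarith) (by linarith)
    have h2 := h.hμpos (Fin.last r)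
    rw [hθ]; positivity
  obtain ⟨η, hη0, hη⟩ := choose_small (show 0 < θ/4 by positivity)
  have hKt := h.K_tendsto hσ hPσ hp
  have hlog : Tendsto (fun n : ℕ => Real.log n) atTop atTop :=
    Real.tendsto_log_atTop.comp tendsto_natCast_atTop_atTop
  -- `τ`, `y`, `z` and `2⁻ⁿ` control overloaded keys and the small, middle and large cuts.
  set τ : ℕ → ℝ := fun n => Real.exp 1 * ((K n 0 : ℝ) * Real.exp (-(K n 0 : ℝ)) / σ) with hτ
  have hτ0 : Tendsto τ atTop (nhds 0) := by
    have h1 := ((Real.tendsto_pow_mul_exp_neg_atTop_nhds_zero 1).comp hKt)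
    have h2 := (h1.div_const σ).const_mul (Real.exp 1)
    simpa [Function.comp_def] using h2
  set y : ℕ → ℝ := fun n => Real.exp (-((c * ρ^3 - 1) * Real.log n)) with hy
  have hy0 : Tendsto y atTop (nhds 0) := rpow_tendsto_zero hγ
  set z : ℕ → ℝ := fun n => (n + 1) * Real.exp (-(θ/4 * n)) with hz
  have hz0 : Tendsto z atTop (nhds 0) := by
    have hn : Tendsto (fun n : ℕ => θ/4 * (n:ℝ)) atTop atTop :=
      tendsto_natCast_atTop_atTop.const_mul_atTop (by positivity)
    have h1 := ((Real.tendsto_pow_mul_exp_neg_atTop_nhds_zero 1).comp hn).const_mul (4/θ)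
    have h2 := Real.tendsto_exp_neg_atTop_nhds_zero.comp hn
    have h3 := h1.add h2
    simp only [mul_zero, add_zero] at h3
    refine h3.congr fun n => ?_
    simp only [Function.comp, pow_one, hz]
    field_simp
  have hw0 : Tendsto (fun n : ℕ => (1/2:ℝ)^n) atTop (nhds 0) :=
    tendsto_pow_atTop_nhds_zero_of_lt_one (by norm_num) (by norm_num)
  have key : Tendsto (fun n => pr μ (K n) (α n)
      (fun cfg : Config n r (P n) => ¬ (graphOf cfg).Connected)) atTop (nhds 0) := by
    have hlim : Tendsto (fun n => 2 * τ n + (2 * y n + z n + (1/2:ℝ)^n)) atTop (nhds 0) := by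
      have := (hτ0.const_mul 2).add (((hy0.const_mul 2).add hz0).add hw0)
      simpa using this
    refine squeeze_zero' (Eventually.of_forall fun n => pr_nonneg hμ _
      (h.hα n).1.le (h.hα n).2.le _) ?_ hlim
    have hcρ : c * ρ < c := by nlinarith
    have hc2 : c < 2 * c := by linarith
    filter_upwards [h.load_small hδ0, h.mload_ge hcρ, h.mload_le hc2, eventually_ge_atTop 2,
      hKt.eventually_ge_atTop (Real.exp (4/δ) / δ), hKt.eventually_ge_atTop (2/δ),
      hlog.eventually_ge_atTop (ε/(1-ρ)), hp.eventually_ge_atTop (δ⁻¹/η),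
      hτ0.eventually_le_const (show (0:ℝ) < 1/2 by norm_num),
      hy0.eventually_le_const (show (0:ℝ) < 1/2 by norm_num)] with
      n hload hage hale hn2 hKA hK2 hlogn hpn hτn hyn
    have hα := h.hα n
    have hn0 : (0:ℝ) < n := by positivity
    have hL : 0 < Real.log n := Real.log_pos (by exact_mod_cast (by omega : 1 < n))
    have hKA' : Real.exp (4/δ) ≤ δ * K n 0 := by
      rw [div_le_iff₀ hδ0] at hKA; linarith
    have hK2' : 1 ≤ δ * K n 0 / 2 := by
      rw [div_le_iff₀ hδ0] at hK2; linarith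
    have ha0 := h.mload_nonneg n
    refine (pr_not_connected_le (by omega) hμ (K n) hα.1.le hα.2.le
      (fun ℓ => (Real.exp (-(K n 0 : ℝ)) * (ℓ * K n 0 / P n)) ^ ℓ
        + Qt μ (K n) (P n) (α n) δ ℓ ^ (n - ℓ))
      (fun S hS _ => h.noCross_le n hδ0 hδ1 hKA' hK2' hload S hS)).trans ?_
    have hterm : ∀ ℓ ∈ (Finset.range (n+1)).filter (fun ℓ => 1 ≤ ℓ ∧ 2 * ℓ ≤ n),
        (n.choose ℓ : ℝ) * ((Real.exp (-(K n 0 : ℝ)) * (ℓ * K n 0 / P n)) ^ ℓ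
          + Qt μ (K n) (P n) (α n) δ ℓ ^ (n - ℓ))
        ≤ τ n ^ ℓ + (y n ^ ℓ + Real.exp (-(θ/4 * n)) + (n.choose ℓ : ℝ) * (1/4)^n) := by
      intro ℓ hℓ
      simp only [Finset.mem_filter, Finset.mem_range] at hℓ
      obtain ⟨-, hℓ1, hℓ2⟩ := hℓ
      have hQ0 : 0 ≤ Qt μ (K n) (P n) (α n) δ ℓ := Qt_nonneg hμ h.hμsum (K n) hα.1.le hδ0.le
      rw [mul_add]
      refine add_le_add (term_bad (by omega) hℓ1 (by positivity) hσ (hPσ n)) ?_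
      have p1 : 0 ≤ y n ^ ℓ := pow_nonneg (Real.exp_pos _).le _
      have p2 : 0 ≤ Real.exp (-(θ/4 * n)) := (Real.exp_pos _).le
      have p3 : 0 ≤ (n.choose ℓ : ℝ) * (1/4)^n := by positivity
      rcases le_total ((ℓ:ℝ) * Real.log n) (ε * n) with hA | hA
      -- Small cuts, `ℓ log n ≤ ε n`: the bound is linear in the mean number of shared keys.
      · have hsm : ∀ j, ℓ * (α n * load (K n) (P n) j) ≤ δ := by
          intro j
          have h1 := h.load_le n j
          rw [le_div_iff₀ (h.hμpos j)] at h1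
          have h2 : α n * load (K n) (P n) j * m ≤ mload μ (K n) (P n) (α n) :=
            (mul_le_mul_of_nonneg_left (hm j)
              (mul_nonneg hα.1.le (load_nonneg _ _ _))).trans h1
          have h3 : (ℓ * n) * (α n * load (K n) (P n) j * m) ≤ (δ * m) * n := by
            calc (ℓ * n) * (α n * load (K n) (P n) j * m)
                ≤ (ℓ * n) * mload μ (K n) (P n) (α n) := by gcongr
              _ = ℓ * (n * mload μ (K n) (P n) (α n)) := by ring
              _ ≤ ℓ * (2 * c * Real.log n) := by gcongr
              _ = (2 * c) * (ℓ * Real.log n) := by ring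
              _ ≤ (2 * c) * (ε * n) := by gcongr
              _ = (δ * m) * n := by rw [← hε]; ring
          have h4 : 0 < m * n := by positivity
          refine le_of_mul_le_mul_right ?_ h4
          linarith
        have hℓρ : (ℓ:ℝ) ≤ (1-ρ) * n := by
          have hr : 0 < 1 - ρ := by linarith
          rw [div_le_iff₀ hr] at hlogn
          refine le_of_mul_le_mul_right (hA.trans ?_) hL
          nlinarith
        have := term_small (by omega) hQ0 hρ0
          (Qt_le_small hμ (K n) hα.1.le hδ0 hδρ hρ0 hsm) (by omega) hℓρ ha0 hage
        change _ ≤ y n ^ ℓ at this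
        linarith
      · rcases le_total (ℓ:ℝ) (η * n) with hB | hB
        -- Middle cuts, `ε n / log n ≤ ℓ ≤ η n`: the number of cuts is at most `exp (θ n / 4)`.
        · have hvm : v ≤ ℓ * (α n * load (K n) (P n) (Fin.last r)) := by
            have h1 := h.mload_le_last n
            refine le_trans ?_ (mul_le_mul_of_nonneg_left h1 (Nat.cast_nonneg ℓ))
            have h2 : v * (n * Real.log n) ≤ (ℓ * mload μ (K n) (P n) (α n)) * (n * Real.log n) := by
              calc v * (n * Real.log n) = (ε * n) * (c * ρ * Real.log n) := by rw [hv]; ring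
                _ ≤ (ℓ * Real.log n) * (n * mload μ (K n) (P n) (α n)) := by gcongr
                _ = _ := by ring
            exact le_of_mul_le_mul_right h2 (by positivity)
          have hQ := Qt_le_mid hμ (K n) hα.1.le hδ0 hδ1 hv0.le (Fin.last r) hvm
          rw [← hθ] at hQ
          have := term_mid hQ0 hθ0.le hQ hℓ2 (hη n ℓ hℓ1 hB)
          linarith
        -- Large cuts, `η n ≤ ℓ`: `n α p₁₁ → ∞` makes every mean number of shared keys large.
        · have hW : ∀ j, δ⁻¹ ≤ ℓ * (α n * load (K n) (P n) j) := by
            intro j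
            have h1 := h.load_mono n (Fin.zero_le j)
            have h2 : pEdge (P n) (K n 0) (K n 0) ≤ load (K n) (P n) 0 :=
              pEdge_le (h.KleP n 0) (h.KleP n 0)
            have h3 := pEdge_nonneg (h.KleP n 0) (h.KleP n 0)
            have hα1 := hα.1
            rw [div_le_iff₀ hη0] at hpn
            calc δ⁻¹ ≤ (n : ℝ) * α n * pEdge (P n) (K n 0) (K n 0) * η := hpn
              _ = (η * n) * (α n * pEdge (P n) (K n 0) (K n 0)) := by ring
              _ ≤ ℓ * (α n * load (K n) (P n) j) := by
                gcongr
                exact h2.trans h1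
          have hQ : Qt μ (K n) (P n) (α n) δ ℓ ≤ 1/16 :=
            (Qt_le_large hμ h.hμsum (K n) hδ0 hδ1 hW).trans (by linarith)
          have := term_large hQ0 hQ hℓ2
          linarith
    refine (Finset.sum_le_sum hterm).trans ?_
    rw [Finset.sum_add_distrib, Finset.sum_add_distrib, Finset.sum_add_distrib, ← Finset.sum_mul]
    have hτp : 0 ≤ τ n := by simp only [hτ]; positivity
    have s1 := sum_geom_le hτp hτn n
    have s2 := sum_geom_le (show 0 ≤ y n from (Real.exp_pos _).le) hyn n
    have s3 : ∑ ℓ ∈ (Finset.range (n+1)).filter (fun ℓ => 1 ≤ ℓ ∧ 2 * ℓ ≤ n),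
        Real.exp (-(θ/4 * n)) ≤ z n := by
      rw [Finset.sum_const, nsmul_eq_mul]
      refine mul_le_mul_of_nonneg_right ?_ (Real.exp_pos _).le
      have := Finset.card_filter_le (Finset.range (n+1)) (fun ℓ => 1 ≤ ℓ ∧ 2 * ℓ ≤ n)
      rw [Finset.card_range] at this
      exact_mod_cast this
    have s4 : (∑ ℓ ∈ (Finset.range (n+1)).filter (fun ℓ => 1 ≤ ℓ ∧ 2 * ℓ ≤ n),
        (n.choose ℓ : ℝ)) * (1/4)^n ≤ (1/2:ℝ)^n := by
      refine (mul_le_mul_of_nonneg_right (sum_choose_le n) (by positivity)).trans (le_of_eq ?_)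
      rw [← mul_pow]; norm_num
    linarith
  have := key.const_sub 1
  rw [sub_zero] at this
  refine this.congr fun n => ?_
  exact (pr_not (K n) h.hμsum (h.KleP n) _).symm

/-- A connected graph on at least two nodes has no isolated node. -/
theorem zero_law_connected (h : Scaling μ K P α c) (hc : c < 1) :
    Tendsto (fun n => pr μ (K n) (α n) (fun cfg : Config n r (P n) => (graphOf cfg).Connected))
      atTop (nhds 0) := by
  have hμ : ∀ i, 0 ≤ μ i := fun i => (h.hμpos i).le
  refine squeeze_zero' (Eventually.of_forall fun n => pr_nonneg hμ _
      (h.hα n).1.le (h.hα n).2.le _) ?_ (h.zero_law_isolated hc)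
  filter_upwards [eventually_ge_atTop 2] with n hn
  exact pr_mono hμ _ (h.hα n).1.le (h.hα n).2.le fun cfg => noIsolated_of_connected hn cfg

end Scaling

/-- Corollary: zero-one laws in terms of `K₁ K_avg / P`:
if `λ₁(n) = o(1)` and `αₙ K₁ₙ K_avg,n / Pₙ ∼ c log n / n` for some `c > 0`, then the
zero-one law for absence of isolated nodes holds; if in addition `Pₙ ≥ σ n` for some `σ > 0`
and `p₁₁(n) = ω(1/(n αₙ))`, the same zero-one law holds for connectivity. -/
theorem zero_one_law_Kavg {r : ℕ} (μ : Fin (r + 1) → ℝ)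
    (hμpos : ∀ i, 0 < μ i) (hμsum : ∑ i, μ i = 1)
    (K : ℕ → Fin (r + 1) → ℕ) (P : ℕ → ℕ) (α : ℕ → ℝ)
    (hK1 : ∀ n, 1 ≤ K n 0) (hKmono : ∀ n, Monotone (K n))
    (hKP : ∀ n, 2 * K n (Fin.last r) ≤ P n)
    (hα : ∀ n, α n ∈ Set.Ioo (0 : ℝ) 1)
    (c : ℝ) (hcpos : 0 < c)
    (hlam : Tendsto (fun n : ℕ => lamb μ (K n) (P n) 0) atTop (nhds 0))
    (hscal : Tendsto
      (fun n : ℕ =>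
        (α n * (K n 0 : ℝ) * (∑ j, μ j * (K n j : ℝ)) / (P n : ℝ)) / (c * Real.log n / n))
      atTop (nhds 1)) :
    ((c < 1 →
        Tendsto
          (fun n => pr μ (K n) (α n) (fun cfg : Config n r (P n) => NoIsolatedNodes cfg))
          atTop (nhds 0)) ∧
      (1 < c →
        Tendsto
          (fun n => pr μ (K n) (α n) (fun cfg : Config n r (P n) => NoIsolatedNodes cfg))
          atTop (nhds 1))) ∧
    (∀ σ : ℝ, 0 < σ → (∀ n, σ * n ≤ (P n : ℝ)) →
      Tendsto (fun n : ℕ => (n : ℝ) * α n * pEdge (P n) (K n 0) (K n 0)) atTop atTop →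
      ((c < 1 →
          Tendsto
            (fun n => pr μ (K n) (α n)
              (fun cfg : Config n r (P n) => (graphOf cfg).Connected))
            atTop (nhds 0)) ∧
        (1 < c →
          Tendsto
            (fun n => pr μ (K n) (α n)
              (fun cfg : Config n r (P n) => (graphOf cfg).Connected))
            atTop (nhds 1)))) := by
  have h : Scaling μ K P α c :=
    ⟨hμpos, hμsum, hK1, hKmono, hKP, hα, hcpos, hlam, hscal⟩
  exact ⟨⟨h.zero_law_isolated, h.one_law_isolated⟩, fun σ hσ hPσ hp =>
    ⟨h.zero_law_connected, fun hc => h.one_law_connected hc hσ hPσ hp⟩⟩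
end

section
/- Consider sequences of integers K_{i,n}, K_{j,n}, P_n with 1 ≤ K_{i,n}, K_{j,n} ≤ P_n/2 and let p_ij(n) = 1 − C(P_n−K_{i,n}, K_{j,n})/C(P_n, K_{j,n}). Then lim_{n→∞} p_ij(n) = 0 if and only if lim_{n→∞} K_{i,n} K_{j,n}/P_n = 0, and in that case one has the asymptotic equivalence p_ij(n) ~ K_{i,n} K_{j,n}/P_n, i.e., lim_{n→∞} p_ij(n) / (K_{i,n} K_{j,n}/P_n) = 1. -/
/-!
Write `x = a b / P`. Choosing the `b` keys one at a time, the avoidance probability is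
`∏ l < b, (1 - a / (P - l))`. Bounding the factors above by `1 - a / P` gives
`avoidProb ≤ P / (P + a b) = 1 / (1 + x)`, and the union bound with all denominators replaced
by `P - b` gives `avoidProb ≥ 1 - a b / (P - b)`. Since `b / P ≤ x` and `b / P ≤ 1 / 2`, these yield
`x / (1 + x) ≤ pEdge ≤ x (1 + 2 x)`, from which both the equivalence of the two limits and
the asymptotic equivalence follow by squeezing.
-/

open Filter

/-- Conditioning on the first `b` keys: the next one avoids the `a`-set with probability
`1 - a / (P - b)`. -/
lemma avoidProb_succ {P a b : ℕ} (ha : 1 ≤ a) (h : a + b ≤ P) :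
    avoidProb P a (b + 1) = avoidProb P a b * (1 - a / ((P : ℝ) - b)) := by
  have e1 := Nat.choose_succ_right_eq (P - a) b
  have e2 := Nat.choose_succ_right_eq P b
  have c1 : (0 : ℝ) < (P.choose b : ℝ) := by exact_mod_cast Nat.choose_pos (by omega)
  have c2 : (0 : ℝ) < (P.choose (b + 1) : ℝ) := by exact_mod_cast Nat.choose_pos (by omega)
  have hP : (0 : ℝ) < (P : ℝ) - b := by
    have : (b : ℝ) < P := by exact_mod_cast (by omega : b < P)
    linarith
  have f1 : ((P - a).choose (b + 1) : ℝ) * (b + 1) = (P - a).choose b * ((P : ℝ) - a - b) := by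
    rw [← Nat.cast_sub (by omega : a ≤ P), ← Nat.cast_sub (by omega : b ≤ P - a)]
    exact_mod_cast e1
  have f2 : (P.choose (b + 1) : ℝ) * (b + 1) = P.choose b * ((P : ℝ) - b) := by
    rw [← Nat.cast_sub (by omega : b ≤ P)]
    exact_mod_cast e2
  have hb : (0 : ℝ) < (b : ℝ) + 1 := by positivity
  unfold avoidProb
  rw [← mul_div_mul_right _ _ hb.ne', f1, f2]
  field_simp
  ring

lemma avoidProb_nonneg (P a b : ℕ) : 0 ≤ avoidProb P a b := by
  unfold avoidProb; positivity

lemma avoidProb_le {P a : ℕ} (ha : 1 ≤ a) (b : ℕ) (h : a + b ≤ P) :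
    avoidProb P a b ≤ P / ((P : ℝ) + a * b) := by
  have hP : (0 : ℝ) < P := by exact_mod_cast (by omega : 0 < P)
  induction b with
  | zero => simp [avoidProb, hP.ne']
  | succ b ih =>
    have hbP : (0 : ℝ) < (P : ℝ) - b := by
      have : (b : ℝ) < P := by exact_mod_cast (by omega : b < P)
      linarith
    have haP : (a : ℝ) ≤ P := by exact_mod_cast (by omega : a ≤ P)
    have hfac : 1 - a / ((P : ℝ) - b) ≤ 1 - a / (P : ℝ) := by
      gcongr
      simp
    rw [avoidProb_succ ha (by omega)]
    calc _ ≤ avoidProb P a b * (1 - a / (P : ℝ)) :=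
          mul_le_mul_of_nonneg_left hfac (avoidProb_nonneg _ _ _)
      _ ≤ P / ((P : ℝ) + a * b) * (1 - a / (P : ℝ)) := by
          apply mul_le_mul_of_nonneg_right (ih (by omega))
          rw [sub_nonneg, div_le_one hP]
          exact haP
      _ = (P - a) / ((P : ℝ) + a * b) := by field_simp
      _ ≤ _ := by
          rw [div_le_div_iff₀ (by positivity) (by positivity)]
          push_cast
          nlinarith [(by positivity : (0 : ℝ) ≤ (a : ℝ) ^ 2 * b), sq_nonneg (a : ℝ)]

lemma le_avoidProb {P a : ℕ} (ha : 1 ≤ a) (b : ℕ) (h : a + b ≤ P) :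
    1 - a * b / ((P : ℝ) - b) ≤ avoidProb P a b := by
  induction b with
  | zero => simp [avoidProb]
  | succ b ih =>
    have hbP : (0 : ℝ) < (P : ℝ) - (b + 1) := by
      have : ((b + 1 : ℕ) : ℝ) < P := by exact_mod_cast (by omega : b + 1 < P)
      push_cast at this
      linarith
    have hbP' : (0 : ℝ) < (P : ℝ) - b := by linarith
    have hP : (0 : ℝ) < P := by exact_mod_cast (by omega : 0 < P)
    have h1 : avoidProb P a b ≤ 1 := (avoidProb_le ha b (by omega)).trans <| by
      rw [div_le_one (by positivity)]
      have : (0 : ℝ) ≤ (a : ℝ) * b := by positivity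
      linarith
    have ih' := ih (by omega)
    have ht : 0 ≤ a / ((P : ℝ) - b) := by positivity
    rw [avoidProb_succ ha (by omega)]
    have hmono : (a : ℝ) * (b + 1) / ((P : ℝ) - b) ≤ a * (b + 1) / ((P : ℝ) - (b + 1)) := by
      gcongr
      linarith
    have hsplit : (a : ℝ) * (b + 1) / ((P : ℝ) - b)
        = a * b / ((P : ℝ) - b) + a / ((P : ℝ) - b) := by ring
    push_cast
    nlinarith [mul_le_mul_of_nonneg_right h1 ht]

lemma pEdge_bounds {P a b : ℕ} (ha : 1 ≤ a) (hb : 1 ≤ b) (haP : 2 * a ≤ P) (hbP : 2 * b ≤ P) :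
    (a * b / P : ℝ) / (1 + a * b / P) ≤ pEdge P a b ∧
      pEdge P a b ≤ (a * b / P : ℝ) * (1 + 2 * (a * b / P)) := by
  have hP : (0 : ℝ) < P := by exact_mod_cast (by omega : 0 < P)
  have hu := avoidProb_le ha b (by omega : a + b ≤ P)
  have hl := le_avoidProb ha b (by omega : a + b ≤ P)
  have ha' : (1 : ℝ) ≤ a := by exact_mod_cast ha
  have hb' : (1 : ℝ) ≤ b := by exact_mod_cast hb
  have hbP' : (2 : ℝ) * b ≤ P := by exact_mod_cast hbP
  unfold pEdge
  constructor
  · have : (a * b / P : ℝ) / (1 + a * b / P) = 1 - P / ((P : ℝ) + a * b) := by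
      field_simp
      ring
    linarith
  · have hPb : (0 : ℝ) < (P : ℝ) - b := by linarith
    have : (a * b : ℝ) / (P - b) ≤ (a * b / P : ℝ) * (1 + 2 * (b / P)) := by
      have e : (a * b / P : ℝ) * (1 + 2 * (b / P)) = a * b * (P + 2 * b) / P ^ 2 := by
        field_simp
      rw [e, div_le_div_iff₀ hPb (by positivity), mul_assoc (_ * _) (_ + _)]
      apply mul_le_mul_of_nonneg_left _ (by positivity)
      nlinarith
    have h2 : (b / P : ℝ) ≤ a * b / P := by
      gcongr
      nlinarith
    have h3 : (a * b / P : ℝ) * (1 + 2 * (b / P)) ≤ (a * b / P : ℝ) * (1 + 2 * (a * b / P)) := by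
      gcongr
    linarith

/-- `p_ij(n) → 0` iff `K_{i,n} K_{j,n} / P_n → 0`, and in that case
`p_ij(n) ∼ K_{i,n} K_{j,n} / P_n`. -/
theorem pEdge_asymptotic (Ki Kj P : ℕ → ℕ)
    (hKi1 : ∀ n, 1 ≤ Ki n) (hKj1 : ∀ n, 1 ≤ Kj n)
    (hKiP : ∀ n, 2 * Ki n ≤ P n) (hKjP : ∀ n, 2 * Kj n ≤ P n) :
    (Tendsto (fun n => pEdge (P n) (Ki n) (Kj n)) atTop (nhds 0) ↔
      Tendsto (fun n : ℕ => (Ki n : ℝ) * (Kj n : ℝ) / (P n : ℝ)) atTop (nhds 0)) ∧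
    (Tendsto (fun n => pEdge (P n) (Ki n) (Kj n)) atTop (nhds 0) →
      Tendsto
        (fun n : ℕ => pEdge (P n) (Ki n) (Kj n) / ((Ki n : ℝ) * (Kj n : ℝ) / (P n : ℝ)))
        atTop (nhds 1)) := by
  set x : ℕ → ℝ := fun n => (Ki n : ℝ) * (Kj n : ℝ) / (P n : ℝ) with hx
  set p : ℕ → ℝ := fun n => pEdge (P n) (Ki n) (Kj n) with hp
  have hpos : ∀ n, 0 < x n := fun n => by
    have h1 : (0 : ℝ) < Ki n := by exact_mod_cast hKi1 n
    have h2 : (0 : ℝ) < Kj n := by exact_mod_cast hKj1 n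
    have h3 : (0 : ℝ) < P n := by
      have := hKi1 n
      have := hKiP n
      exact_mod_cast (by omega : 0 < P n)
    simp only [hx]
    positivity
  have hlo : ∀ n, x n / (1 + x n) ≤ p n := fun n =>
    (pEdge_bounds (hKi1 n) (hKj1 n) (hKiP n) (hKjP n)).1
  have hhi : ∀ n, p n ≤ x n * (1 + 2 * x n) := fun n =>
    (pEdge_bounds (hKi1 n) (hKj1 n) (hKiP n) (hKjP n)).2
  have hp0 : ∀ n, 0 ≤ p n := fun n =>
    (div_nonneg (hpos n).le (by linarith [hpos n])).trans (hlo n)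
  have hxp : Tendsto p atTop (nhds 0) → Tendsto x atTop (nhds 0) := fun h => by
    have h2 : Tendsto (fun n => 2 * p n) atTop (nhds 0) := by simpa using h.const_mul 2
    refine tendsto_of_tendsto_of_tendsto_of_le_of_le' tendsto_const_nhds h2
      (Eventually.of_forall fun n => (hpos n).le) ?_
    filter_upwards [h.eventually_lt_const (by norm_num : (0 : ℝ) < 1 / 2)] with n hn
    -- The lower bound reads `x (1 - p) ≤ p`, and `1 - p ≥ 1 / 2` eventually.
    have := hlo n
    rw [div_le_iff₀ (by linarith [hpos n])] at this
    nlinarith [hpos n]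
  refine ⟨⟨hxp, fun h => ?_⟩, fun h => ?_⟩
  · have h2 : Tendsto (fun n => x n * (1 + 2 * x n)) atTop (nhds 0) := by
      simpa using h.mul ((h.const_mul 2).const_add 1)
    exact squeeze_zero hp0 hhi h2
  · have h := hxp h
    have l1 : Tendsto (fun n => 1 / (1 + x n)) atTop (nhds 1) := by
      simpa using (h.const_add 1).inv₀ (by norm_num)
    have l2 : Tendsto (fun n => 1 + 2 * x n) atTop (nhds 1) := by
      simpa using (h.const_mul 2).const_add 1
    refine tendsto_of_tendsto_of_tendsto_of_le_of_le l1 l2 (fun n => ?_) (fun n => ?_)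
    · change 1 / (1 + x n) ≤ p n / x n
      rw [le_div_iff₀ (hpos n)]
      calc _ = x n / (1 + x n) := by ring
        _ ≤ _ := hlo n
    · change p n / x n ≤ 1 + 2 * x n
      rw [div_le_iff₀ (hpos n), mul_comm]
      exact hhi n
end

section
/- For any positive integers K_i, K_j, P with K_i, K_j ≤ P and any real scalar a ≥ 1 such that ⌈aK_i⌉ + K_j ≤ P, one has C(P − ⌈aK_i⌉, K_j)/C(P, K_j) ≤ (C(P − K_i, K_j)/C(P, K_j))^a, where C(a,b) denotes the binomial coefficient and ⌈·⌉ is the ceiling function. -/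
open Filter

/-!
The ratio `C(P - m, k) / C(P, k)` is the product over `l < k` of the factors `1 - m / (P - l)`
(`choose_ratio_eq_prod`). For `m = ⌈a K⌉`, each factor is at most `1 - a K / (P - l)`, which
Bernoulli's inequality bounds by `(1 - K / (P - l)) ^ a`; all factors are nonnegative because
`m + k ≤ P`, so the bounds may be multiplied together.
-/

lemma choose_ratio_eq_prod (m k P : ℕ) (h : m + k ≤ P) :
    ((P - m).choose k : ℝ) / (P.choose k : ℝ) =
      ∏ l ∈ Finset.range k, (1 - (m : ℝ) / ((P : ℝ) - l)) := by
  have hfact : (k.factorial : ℝ) ≠ 0 := by exact_mod_cast k.factorial_ne_zero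
  rw [← mul_div_mul_left _ _ hfact]
  norm_cast
  rw [← Nat.descFactorial_eq_factorial_mul_choose, ← Nat.descFactorial_eq_factorial_mul_choose,
    Nat.descFactorial_eq_prod_range, Nat.descFactorial_eq_prod_range]
  push_cast
  rw [← Finset.prod_div_distrib]
  refine Finset.prod_congr rfl fun l hl => ?_
  have hl := Finset.mem_range.mp hl
  have hlP : (l : ℝ) < P := by exact_mod_cast (by omega : l < P)
  have hne : (P : ℝ) - l ≠ 0 := by linarith
  rw [Nat.cast_sub (by omega : l ≤ P - m), Nat.cast_sub (by omega : m ≤ P),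
    Nat.cast_sub (by omega : l ≤ P)]
  field_simp
  ring

/-- for `a ≥ 1`,
`C(P − ⌈aK_i⌉, K_j)/C(P, K_j) ≤ (C(P − K_i, K_j)/C(P, K_j))^a`. -/
theorem avoid_ratio_rpow (Ki Kj P : ℕ) (hKi : 1 ≤ Ki) (hKj : 1 ≤ Kj)
    (hKiP : Ki ≤ P) (hKjP : Kj ≤ P) (a : ℝ) (ha : 1 ≤ a)
    (hceil : ⌈a * (Ki : ℝ)⌉₊ + Kj ≤ P) :
    ((P - ⌈a * (Ki : ℝ)⌉₊).choose Kj : ℝ) / (P.choose Kj : ℝ) ≤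
      (((P - Ki).choose Kj : ℝ) / (P.choose Kj : ℝ)) ^ a := by
  have hm : a * (Ki : ℝ) ≤ (⌈a * (Ki : ℝ)⌉₊ : ℝ) := Nat.le_ceil _
  generalize ⌈a * (Ki : ℝ)⌉₊ = m at hm hceil ⊢
  have hKm : Ki ≤ m := by
    have h0 : (0 : ℝ) ≤ Ki := Nat.cast_nonneg _
    have : (Ki : ℝ) ≤ m := by nlinarith
    exact_mod_cast this
  have hfac : ∀ n : ℕ, n + Kj ≤ P → ∀ l ∈ Finset.range Kj,
      0 ≤ 1 - (n : ℝ) / ((P : ℝ) - l) := by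
    intro n hn l hl
    have hl := Finset.mem_range.mp hl
    have h1 : (n : ℝ) + l < P := by exact_mod_cast (by omega : n + l < P)
    have h0 : (0 : ℝ) ≤ n := Nat.cast_nonneg _
    rw [sub_nonneg, div_le_one (by linarith)]
    linarith
  rw [choose_ratio_eq_prod m Kj P hceil, choose_ratio_eq_prod Ki Kj P (by omega),
    ← Real.finsetProd_rpow _ _ (hfac Ki (by omega))]
  refine Finset.prod_le_prod (hfac m hceil) fun l hl => ?_
  have hK := hfac Ki (by omega) l hl
  have hl := Finset.mem_range.mp hl
  have hlP : (l : ℝ) < P := by exact_mod_cast (by omega : l < P)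
  have hpos : (0 : ℝ) < (P : ℝ) - l := by linarith
  calc 1 - (m : ℝ) / ((P : ℝ) - l) ≤ 1 - (a * Ki) / ((P : ℝ) - l) := by gcongr
    _ = 1 + a * (-((Ki : ℝ) / ((P : ℝ) - l))) := by ring
    _ ≤ (1 + -((Ki : ℝ) / ((P : ℝ) - l))) ^ a :=
      one_add_mul_self_le_rpow_one_add (by linarith) ha
    _ = (1 - (Ki : ℝ) / ((P : ℝ) - l)) ^ a := by rw [← sub_eq_add_neg]
end
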